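/- arXiv:1410.7081 — 3 statements merged into one kernel-verified Lean document; each statement's English description precedes it below -/
import Mathlib

section
/- ∫₀¹ K'(k)/(K(k)·√(1-k²)) dk = 2G, where G = Σ_{n≥0} (-1)ⁿ/(2n+1)² is Catalan's constant. -/
open scoped Real
open MeasureTheory

noncomputable def EllK (k : ℝ) : ℝ :=
  ∫ x in (0:ℝ)..(1:ℝ), 1 / Real.sqrt ((1 - x^2) * (1 - k^2 * x^2))

noncomputable def EllE (k : ℝ) : ℝ :=
  ∫ x in (0:ℝ)..(1:ℝ), Real.sqrt ((1 - k^2 * x^2) / (1 - x^2))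

noncomputable def EllK' (k : ℝ) : ℝ := EllK (Real.sqrt (1 - k^2))

/-!
The substitution `k = sin θ` turns the integral into `∫ (K' / K) (sin θ) dθ` over `(0, π / 2)`, the
area under the graph of a decreasing function, and hence into `∫ α(t) dt` over `(0, ∞)`, where the
modular angle `α` is the inverse of `θ ↦ (K' / K) (sin θ)`.

At nome `q = exp (-π t)` one has `cos α = θ₄(q)² / θ₃(q)²`: the duplication formulas of the theta
series match the Landen transformation of `K'`, and iterating them leads to `q → 0`. By the same
formulas `α(t) = 2 arg θ₃(i √q)`, and Jacobi's triple product reads off this argument factor by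
factor, giving `α(t) = 4 ∑ (-1)ᵏ arctan (exp (-π t (2 k + 1) / 2))`. Since
`∫ arctan (exp (-x)) dx = G`, termwise integration gives `(8 G / π) ∑ (-1)ᵏ / (2 k + 1) = 2 G`.
-/

open Filter Set Topology

namespace EllipticNome

/-! ### Complete elliptic integrals -/

section EllipticIntegral

lemma integral_Ioo_deriv_mul_comp {a b : ℝ} {f f' : ℝ → ℝ} (hab : a ≤ b)
    (hf : ContinuousOn f (Icc a b)) (hff' : ∀ x ∈ Ioo a b, HasDerivAt f (f' x) x)
    (hf' : ∀ x ∈ Ioo a b, 0 ≤ f' x) (g : ℝ → ℝ) :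
    ∫ x in Ioo a b, f' x * g (f x) = ∫ u in Ioo (f a) (f b), g u := by
  simpa only [integral_Icc_eq_integral_Ioo, smul_eq_mul] using
    integral_Icc_deriv_smul_of_deriv_nonneg (g := g) hf hff' hf' hab

lemma EllK_eq_integral_Ioo (k : ℝ) :
    EllK k = ∫ x in Ioo (0 : ℝ) 1, 1 / √((1 - x ^ 2) * (1 - k ^ 2 * x ^ 2)) := by
  rw [EllK, intervalIntegral.integral_of_le zero_le_one, integral_Ioc_eq_integral_Ioo]

lemma integrableOn_one_div_sqrt_one_sub_sq :
    IntegrableOn (fun x : ℝ => 1 / √(1 - x ^ 2)) (Ioo 0 1) :=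
  (intervalIntegral.integrableOn_deriv_of_nonneg Real.continuous_arcsin.continuousOn
    (fun _ hx => Real.hasDerivAt_arcsin (by linarith [hx.1]) hx.2.ne)
    (fun _ _ => by positivity)).mono_set Ioo_subset_Ioc_self

lemma integral_one_div_sqrt_one_sub_sq : ∫ x in Ioo (0 : ℝ) 1, 1 / √(1 - x ^ 2) = π / 2 := by
  rw [← integral_Ioc_eq_integral_Ioo, ← intervalIntegral.integral_of_le zero_le_one,
    intervalIntegral.integral_eq_sub_of_hasDerivAt_of_le (f := Real.arcsin) zero_le_one
      Real.continuous_arcsin.continuousOn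
      (fun _ hx => Real.hasDerivAt_arcsin (by linarith [hx.1]) hx.2.ne)
      ((intervalIntegrable_iff_integrableOn_Ioo_of_le zero_le_one).2
        integrableOn_one_div_sqrt_one_sub_sq)]
  simp

lemma sq_mul_sq_lt_one {k x : ℝ} (hk : k ^ 2 < 1) (hx : x ∈ Ioo (0 : ℝ) 1) : k ^ 2 * x ^ 2 < 1 :=
  mul_lt_one_of_nonneg_of_lt_one_left (sq_nonneg k) hk (pow_le_one₀ hx.1.le hx.2.le)

lemma one_sub_sq_pos {x : ℝ} (hx : x ∈ Ioo (0 : ℝ) 1) : 0 < 1 - x ^ 2 :=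
  sub_pos.2 (pow_lt_one₀ hx.1.le hx.2 two_ne_zero)

lemma EllK_integrand_le {k x : ℝ} (hk : k ^ 2 < 1) (hx : x ∈ Ioo (0 : ℝ) 1) :
    1 / √((1 - x ^ 2) * (1 - k ^ 2 * x ^ 2)) ≤ 1 / √(1 - k ^ 2) * (1 / √(1 - x ^ 2)) := by
  have hx' := one_sub_sq_pos hx
  have hk' : 0 < 1 - k ^ 2 := sub_pos.2 hk
  rw [one_div_mul_one_div, ← Real.sqrt_mul hk'.le, mul_comm (1 - k ^ 2)]
  gcongr 1 / √(_ * (1 - ?_))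
  exact mul_le_of_le_one_right (sq_nonneg k) (by linarith)

lemma integrableOn_EllK_integrand {k : ℝ} (hk : k ^ 2 < 1) :
    IntegrableOn (fun x : ℝ => 1 / √((1 - x ^ 2) * (1 - k ^ 2 * x ^ 2))) (Ioo 0 1) := by
  refine (integrableOn_one_div_sqrt_one_sub_sq.const_mul (1 / √(1 - k ^ 2))).mono'
    (Measurable.aestronglyMeasurable (by fun_prop)) ?_
  filter_upwards [ae_restrict_mem measurableSet_Ioo] with x hx
  rw [Real.norm_of_nonneg (by positivity)]
  exact EllK_integrand_le hk hx

lemma EllK_le_EllK {a b : ℝ} (hab : a ^ 2 ≤ b ^ 2) (hb : b ^ 2 < 1) : EllK a ≤ EllK b := by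
  rw [EllK_eq_integral_Ioo, EllK_eq_integral_Ioo]
  refine setIntegral_mono_on (integrableOn_EllK_integrand (hab.trans_lt hb))
    (integrableOn_EllK_integrand hb) measurableSet_Ioo fun x hx => ?_
  have hx' := one_sub_sq_pos hx
  have hbx := sub_pos.2 (sq_mul_sq_lt_one hb hx)
  gcongr

lemma EllK_zero : EllK 0 = π / 2 := by
  simpa [EllK_eq_integral_Ioo] using integral_one_div_sqrt_one_sub_sq

lemma pi_div_two_le_EllK {k : ℝ} (hk : k ^ 2 < 1) : π / 2 ≤ EllK k :=
  EllK_zero ▸ EllK_le_EllK (by simpa using sq_nonneg k) hk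

lemma EllK_pos {k : ℝ} (hk : k ^ 2 < 1) : 0 < EllK k :=
  Real.pi_div_two_pos.trans_le (pi_div_two_le_EllK hk)

lemma EllK_le {k : ℝ} (hk : k ^ 2 < 1) : EllK k ≤ 1 / √(1 - k ^ 2) * (π / 2) := by
  rw [EllK_eq_integral_Ioo, ← integral_one_div_sqrt_one_sub_sq, ← integral_const_mul]
  exact setIntegral_mono_on (integrableOn_EllK_integrand hk)
    (integrableOn_one_div_sqrt_one_sub_sq.const_mul _) measurableSet_Ioo
    fun x hx => EllK_integrand_le hk hx

lemma hasDerivAt_landen {c x : ℝ} (hc : 0 ≤ c) :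
    HasDerivAt (fun x => (1 + c) * x / (1 + c * x ^ 2))
      ((1 + c) * ((1 - c * x ^ 2) / (1 + c * x ^ 2) ^ 2)) x := by
  have hden : 1 + c * x ^ 2 ≠ 0 := by positivity
  refine (((hasDerivAt_id x).const_mul (1 + c)).div
    (((hasDerivAt_pow 2 x).const_mul c).const_add 1) hden).congr_deriv ?_
  simp only [id, Nat.cast_ofNat]
  field_simp
  ring

lemma landen_radicand {c x : ℝ} (hc : 0 ≤ c) :
    (1 - ((1 + c) * x / (1 + c * x ^ 2)) ^ 2) *
        (1 - (2 * √c / (1 + c)) ^ 2 * ((1 + c) * x / (1 + c * x ^ 2)) ^ 2) =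
      (1 - x ^ 2) * (1 - c ^ 2 * x ^ 2) * ((1 - c * x ^ 2) / (1 + c * x ^ 2) ^ 2) ^ 2 := by
  have hden : 1 + c * x ^ 2 ≠ 0 := by positivity
  have hsq : (2 * √c / (1 + c)) ^ 2 = 4 * c / (1 + c) ^ 2 := by
    rw [div_pow, mul_pow, Real.sq_sqrt hc]
    norm_num
  rw [hsq]
  field_simp
  ring

/-- Gauss's transformation. -/
lemma EllK_landen {c : ℝ} (hc0 : 0 ≤ c) (hc1 : c < 1) :
    EllK (2 * √c / (1 + c)) = (1 + c) * EllK c := by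
  have hcx {x : ℝ} (hx : x ∈ Ioo (0 : ℝ) 1) : 0 < 1 - c * x ^ 2 :=
    sub_pos.2 (mul_lt_one_of_nonneg_of_lt_one_left hc0 hc1 (pow_le_one₀ hx.1.le hx.2.le))
  have hsub := integral_Ioo_deriv_mul_comp zero_le_one
    (fun x _ => (hasDerivAt_landen hc0).continuousAt.continuousWithinAt)
    (fun x _ => hasDerivAt_landen hc0)
    (fun x hx => mul_nonneg (by positivity) (div_nonneg (hcx hx).le (by positivity)))
    (fun u => 1 / √((1 - u ^ 2) * (1 - (2 * √c / (1 + c)) ^ 2 * u ^ 2)))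
  have hend : (1 + c) * 1 / (1 + c * 1 ^ 2) = 1 := by
    rw [one_pow, mul_one, mul_one, div_self (by positivity)]
  rw [hend, mul_zero, zero_div] at hsub
  rw [EllK_eq_integral_Ioo, EllK_eq_integral_Ioo, ← hsub, ← integral_const_mul]
  refine setIntegral_congr_fun measurableSet_Ioo fun x hx => ?_
  have hfactor : 0 < (1 - c * x ^ 2) / (1 + c * x ^ 2) ^ 2 := div_pos (hcx hx) (by positivity)
  simp only [landen_radicand hc0]
  rw [Real.sqrt_mul' _ (sq_nonneg _), Real.sqrt_sq hfactor.le, mul_assoc, ← div_eq_mul_one_div,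
    div_mul_cancel_right₀ hfactor.ne', one_div]

lemma EllK'_landen {c : ℝ} (hc0 : 0 < c) (hc1 : c < 1) :
    EllK' (2 * √c / (1 + c)) = (1 + c) / 2 * EllK' c := by
  set d := (1 - c) / (1 + c) with hd
  have hd0 : 0 < d := div_pos (by linarith) (by linarith)
  have hd1 : d < 1 := by rw [hd, div_lt_one (by linarith)]; linarith
  have hcd : √(1 - (2 * √c / (1 + c)) ^ 2) = d := by
    rw [Real.sqrt_eq_iff_mul_self_eq_of_pos hd0, hd, div_pow, mul_pow, Real.sq_sqrt hc0.le]
    field_simp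
    ring
  have hdc : 2 * √d / (1 + d) = √(1 - c ^ 2) := by
    rw [eq_comm, Real.sqrt_eq_iff_mul_self_eq_of_pos (by positivity), ← sq, div_pow, mul_pow,
      Real.sq_sqrt hd0.le, hd]
    field_simp
    ring
  rw [EllK', EllK', hcd, ← hdc, EllK_landen hd0.le hd1, hd]
  field_simp
  ring

end EllipticIntegral

/-! ### The theta series -/

section Theta

variable {𝕜 : Type*} [NormedField 𝕜]

/-- Jacobi's theta constant `θ₃(q) = ∑ q ^ (n ^ 2)`, summed over the integers; `theta (-q)` is
`θ₄(q)`. The exponent is a natural number, so that `q = 0` needs no special treatment. -/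
noncomputable def theta (q : 𝕜) : 𝕜 := ∑' n : ℤ, q ^ (n.natAbs ^ 2)

lemma summable_pow_natAbs {r : ℝ} (h0 : 0 ≤ r) (h1 : r < 1) :
    Summable fun n : ℤ => r ^ n.natAbs := by
  have h := summable_geometric_of_lt_one h0 h1
  exact Summable.of_nat_of_neg (by simpa using h) (by simpa using h)

lemma norm_pow_natAbs_sq_le {q : 𝕜} {r : ℝ} (hq : ‖q‖ ≤ r) (hr : r ≤ 1) (n : ℤ) :
    ‖q ^ (n.natAbs ^ 2)‖ ≤ r ^ n.natAbs := by
  rw [norm_pow]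
  exact (pow_le_pow_left₀ (norm_nonneg q) hq _).trans
    (pow_le_pow_of_le_one ((norm_nonneg q).trans hq) hr (Nat.le_self_pow two_ne_zero _))

lemma summable_norm_theta {q : 𝕜} (hq : ‖q‖ < 1) :
    Summable fun n : ℤ => ‖q ^ (n.natAbs ^ 2)‖ :=
  (summable_pow_natAbs (norm_nonneg q) hq).of_nonneg_of_le (fun _ => norm_nonneg _)
    (norm_pow_natAbs_sq_le le_rfl hq.le)

lemma theta_zero : theta (0 : 𝕜) = 1 := by
  rw [theta, tsum_eq_single 0 fun n hn => zero_pow (pow_ne_zero 2 (Int.natAbs_ne_zero.2 hn))]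
  simp

lemma neg_pow_natAbs_sq (q : 𝕜) (n : ℤ) :
    (-q) ^ (n.natAbs ^ 2) = (if Even n then 1 else -1) * q ^ (n.natAbs ^ 2) := by
  split_ifs with h
  · rw [one_mul, ((Int.natAbs_even.2 h).pow_of_ne_zero two_ne_zero).neg_pow]
  · rw [neg_one_mul, (Int.natAbs_odd.2 (Int.not_even_iff_odd.1 h)).pow.neg_pow]

lemma pow_natAbs_add_sq_mul_pow_natAbs_sub_sq (q : 𝕜) (m n : ℤ) :
    q ^ ((m + n).natAbs ^ 2) * q ^ ((m - n).natAbs ^ 2) =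
      (q ^ 2) ^ (m.natAbs ^ 2) * (q ^ 2) ^ (n.natAbs ^ 2) := by
  rw [← pow_add, ← pow_mul, ← pow_mul, ← pow_add]
  congr 1
  zify
  simp only [sq_abs]
  ring

lemma norm_sq_lt_one {q : 𝕜} (hq : ‖q‖ < 1) : ‖q ^ 2‖ < 1 := by
  rw [norm_pow]
  exact pow_lt_one₀ (norm_nonneg q) hq two_ne_zero

variable [CompleteSpace 𝕜]

lemma hasSum_theta {q : 𝕜} (hq : ‖q‖ < 1) : HasSum (fun n : ℤ => q ^ (n.natAbs ^ 2)) (theta q) :=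
  (summable_norm_theta hq).of_norm.hasSum

lemma continuousAt_theta {q : 𝕜} (hq : ‖q‖ < 1) : ContinuousAt theta q := by
  obtain ⟨r, hqr, hr⟩ := exists_between hq
  have hr0 : 0 ≤ r := (norm_nonneg q).trans hqr.le
  have hcont : ContinuousOn theta (Metric.closedBall (0 : 𝕜) r) :=
    continuousOn_tsum (fun n => (continuous_pow _).continuousOn) (summable_pow_natAbs hr0 hr)
      fun n x hx => norm_pow_natAbs_sq_le (mem_closedBall_zero_iff.1 hx) hr.le n
  exact hcont.continuousAt (Metric.closedBall_mem_nhds_of_mem (mem_ball_zero_iff.2 hqr))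

lemma hasSum_theta_mul_theta {z w : 𝕜} (hz : ‖z‖ < 1) (hw : ‖w‖ < 1) :
    HasSum (fun p : ℤ × ℤ => z ^ (p.1.natAbs ^ 2) * w ^ (p.2.natAbs ^ 2)) (theta z * theta w) := by
  apply (hasSum_theta hz).mul (hasSum_theta hw)
  exact summable_mul_of_summable_norm (f := fun n : ℤ => z ^ (n.natAbs ^ 2))
    (g := fun n : ℤ => w ^ (n.natAbs ^ 2)) (summable_norm_theta hz) (summable_norm_theta hw)

/- The left-hand side sums `z ^ a² * w ^ b²`, doubled, over the pairs with `a + b` even, and these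
are the pairs `(m + n, m - n)`. -/
lemma hasSum_theta_mul_theta_add_neg {z w : 𝕜} (hz : ‖z‖ < 1) (hw : ‖w‖ < 1) :
    HasSum (fun p : ℤ × ℤ =>
        2 * (z ^ ((p.1 + p.2).natAbs ^ 2) * w ^ ((p.1 - p.2).natAbs ^ 2)))
      (theta z * theta w + theta (-z) * theta (-w)) := by
  have hinj : Function.Injective fun p : ℤ × ℤ => (p.1 + p.2, p.1 - p.2) := by
    rintro ⟨a, b⟩ ⟨c, d⟩ h
    simp only [Prod.mk.injEq] at h ⊢
    omega
  have hsum := (hasSum_theta_mul_theta hz hw).add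
    (hasSum_theta_mul_theta (by rwa [norm_neg] : ‖-z‖ < 1) (by rwa [norm_neg] : ‖-w‖ < 1))
  rw [← hinj.hasSum_iff] at hsum
  · refine hsum.congr_fun ?_
    rintro ⟨m, n⟩
    have hparity : Even (m - n) ↔ Even (m + n) := by rw [Int.even_sub, Int.even_add]
    simp only [Function.comp_apply, neg_pow_natAbs_sq, hparity]
    split_ifs <;> ring
  · rintro ⟨a, b⟩ hab
    have hodd : ¬ Even (a + b) := fun ⟨m, hm⟩ => hab ⟨(m, a - m), by ext <;> simp; omega⟩
    rw [Int.even_add, not_iff] at hodd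
    simp only [neg_pow_natAbs_sq, ← hodd]
    split_ifs <;> ring1

lemma theta_sq_add_theta_neg_sq {q : 𝕜} (hq : ‖q‖ < 1) :
    theta q ^ 2 + theta (-q) ^ 2 = 2 * theta (q ^ 2) ^ 2 := by
  have hq2 := norm_sq_lt_one hq
  rw [sq (theta q), sq (theta (-q)), sq (theta (q ^ 2))]
  refine (hasSum_theta_mul_theta_add_neg hq hq).unique
    (((hasSum_theta_mul_theta hq2 hq2).mul_left 2).congr_fun fun p => ?_)
  rw [pow_natAbs_add_sq_mul_pow_natAbs_sub_sq]

lemma theta_mul_theta_neg [CharZero 𝕜] {q : 𝕜} (hq : ‖q‖ < 1) :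
    theta q * theta (-q) = theta (-q ^ 2) ^ 2 := by
  have hq' : ‖-q‖ < 1 := by rwa [norm_neg]
  have hq2 : ‖-q ^ 2‖ < 1 := by rw [norm_neg]; exact norm_sq_lt_one hq
  have hsum := hasSum_theta_mul_theta_add_neg hq hq'
  rw [neg_neg, mul_comm (theta (-q)), ← two_mul] at hsum
  refine mul_left_cancel₀ two_ne_zero (hsum.unique ?_)
  rw [sq (theta (-q ^ 2))]
  refine ((hasSum_theta_mul_theta hq2 hq2).mul_left 2).congr_fun fun p => ?_
  simp only [neg_pow_natAbs_sq, Int.even_sub]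
  rw [mul_left_comm (q ^ _), pow_natAbs_add_sq_mul_pow_natAbs_sub_sq]
  split_ifs <;> first | ring1 | tauto

lemma theta_add_theta_neg {q : 𝕜} (hq : ‖q‖ < 1) :
    theta q + theta (-q) = 2 * theta (q ^ 4) := by
  have hq4 : ‖q ^ 4‖ < 1 := by
    rw [pow_mul q 2 2]
    exact norm_sq_lt_one (norm_sq_lt_one hq)
  have hsum := (hasSum_theta hq).add (hasSum_theta (by rwa [norm_neg] : ‖-q‖ < 1))
  rw [← (mul_right_injective₀ (two_ne_zero (α := ℤ))).hasSum_iff] at hsum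
  · refine hsum.unique (((hasSum_theta hq4).mul_left 2).congr_fun fun n => ?_)
    rw [Function.comp_apply, neg_pow_natAbs_sq, if_pos (even_two_mul n), Int.natAbs_mul, mul_pow,
      pow_mul]
    norm_num
    ring
  · intro n hn
    have hodd : ¬ Even n := fun h => hn (h.exists_two_nsmul.imp fun m hm => by simp [hm])
    rw [neg_pow_natAbs_sq, if_neg hodd]
    ring

/-- Jacobi's identity `θ₃⁴ = θ₄⁴ + θ₂⁴` at `q = p ^ 4`, where `θ₂(p ^ 4) = θ₃(p) - θ₃(p ^ 4)`. -/
lemma theta_pow_four [CharZero 𝕜] {p : 𝕜} (hp : ‖p‖ < 1) :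
    theta (p ^ 4) ^ 4 = theta (-p ^ 4) ^ 4 + (theta p - theta (p ^ 4)) ^ 4 := by
  have hp2 := norm_sq_lt_one hp
  have hp4 : p ^ 4 = (p ^ 2) ^ 2 := by ring
  have hsum := theta_add_theta_neg hp
  have hsq := theta_sq_add_theta_neg_sq hp
  have hmul := theta_mul_theta_neg hp
  have hsq' := theta_sq_add_theta_neg_sq hp2
  have hmul' := theta_mul_theta_neg hp2
  rw [← hp4] at hsq' hmul'
  set A := theta p
  set B := theta (-p)
  set C := theta (p ^ 4)
  set D := theta (-p ^ 4)
  set S := theta (p ^ 2)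
  set T := theta (-p ^ 2)
  have hdiff : (A - C) ^ 2 = (S ^ 2 - T ^ 2) / 2 := by
    have hAC : A - C = (A - B) / 2 := by linear_combination hsum / 2
    rw [hAC]
    linear_combination hsq / 4 - hmul / 2
  have hC : C ^ 2 = (S ^ 2 + T ^ 2) / 2 := by linear_combination -hsq' / 2
  linear_combination (C ^ 2 + (S ^ 2 + T ^ 2) / 2) * hC
    - ((A - C) ^ 2 + (S ^ 2 - T ^ 2) / 2) * hdiff + (S * T + D ^ 2) * hmul'

end Theta

lemma ofReal_theta (q : ℝ) : ((theta q : ℝ) : ℂ) = theta (q : ℂ) := by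
  simp [theta, Complex.ofReal_tsum]

lemma conj_theta (z : ℂ) : starRingEnd ℂ (theta z) = theta (starRingEnd ℂ z) := by
  simp [theta, Complex.conj_tsum]

lemma strictMonoOn_theta : StrictMonoOn (theta : ℝ → ℝ) (Ico 0 1) := by
  have hsum {q : ℝ} (hq : q ∈ Ico (0 : ℝ) 1) : Summable fun n : ℤ => q ^ (n.natAbs ^ 2) :=
    (hasSum_theta (by rw [Real.norm_of_nonneg hq.1]; exact hq.2)).summable
  exact fun a ha b hb hab => Summable.tsum_lt_tsum (i := 1)
    (fun n => pow_le_pow_left₀ ha.1 hab.le _) (by simpa using hab) (hsum ha) (hsum hb)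

lemma theta_pos {q : ℝ} (h0 : 0 ≤ q) (h1 : q < 1) : 0 < theta q := by
  have h := strictMonoOn_theta.monotoneOn ⟨le_rfl, zero_lt_one⟩ ⟨h0, h1⟩ h0
  rw [theta_zero] at h
  exact zero_lt_one.trans_le h

/-! ### The modulus of a given period ratio -/

section Modulus

/-- The nome `q = exp (-π t)` belonging to the period ratio `t = K' / K`. -/
noncomputable def nome (t : ℝ) : ℝ := Real.exp (-π * t)

lemma nome_pos (t : ℝ) : 0 < nome t := Real.exp_pos _

lemma nome_lt_nome {s t : ℝ} (h : s < t) : nome t < nome s :=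
  Real.exp_lt_exp.2 (mul_lt_mul_of_neg_left h (neg_lt_zero.2 Real.pi_pos))

lemma nome_lt_one {t : ℝ} (ht : 0 < t) : nome t < 1 := by
  simpa [nome] using nome_lt_nome ht

lemma nome_mem_Ico {t : ℝ} (ht : 0 < t) : nome t ∈ Ico 0 1 := ⟨(nome_pos t).le, nome_lt_one ht⟩

lemma norm_nome_lt_one {t : ℝ} (ht : 0 < t) : ‖nome t‖ < 1 := by
  rw [Real.norm_of_nonneg (nome_pos t).le]
  exact nome_lt_one ht

lemma nome_pow (t : ℝ) (n : ℕ) : nome t ^ n = nome (n * t) := by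
  rw [nome, nome, ← Real.exp_nat_mul]
  ring_nf

lemma nome_pow_four (t : ℝ) : nome (t / 4) ^ 4 = nome t := by
  rw [nome_pow]
  congr 1
  push_cast
  ring

lemma tendsto_nome : Tendsto nome atTop (𝓝 0) :=
  Real.tendsto_exp_atBot.comp (tendsto_id.const_mul_atTop_of_neg (neg_lt_zero.2 Real.pi_pos))

lemma theta_nome_pos {t : ℝ} (ht : 0 < t) : 0 < theta (nome t) :=
  theta_pos (nome_pos t).le (nome_lt_one ht)

lemma theta_nome (t : ℝ) : theta (nome t) = ∑' n : ℤ, Real.exp (-π * t * n ^ 2) := by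
  refine tsum_congr fun n => ?_
  rw [nome, ← Real.exp_nat_mul, Nat.cast_pow, Nat.cast_natAbs, Int.cast_abs, sq_abs, mul_comm]

lemma theta_nome_inv {t : ℝ} (ht : 0 < t) : theta (nome t⁻¹) = √t * theta (nome t) := by
  rw [theta_nome t, Real.tsum_exp_neg_mul_int_sq ht, ← Real.sqrt_eq_rpow, ← mul_assoc,
    mul_one_div_cancel (Real.sqrt_pos.2 ht).ne', one_mul, theta_nome]
  rfl

/-- In classical notation `θ₄(nome t⁻¹) = √t θ₂(nome t)`. -/
lemma theta_neg_nome_inv {t : ℝ} (ht : 0 < t) :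
    theta (-nome t⁻¹) = √t * (theta (nome (t / 4)) - theta (nome t)) := by
  have hsum := theta_add_theta_neg (norm_nome_lt_one (inv_pos.2 ht))
  have hpow : nome t⁻¹ ^ 4 = nome (t / 4)⁻¹ := by
    rw [nome_pow, inv_div, div_eq_mul_inv, Nat.cast_ofNat]
  have hsqrt : √(t / 4) = √t / 2 := by
    rw [Real.sqrt_div ht.le, show (4 : ℝ) = 2 ^ 2 by norm_num, Real.sqrt_sq zero_le_two]
  rw [hpow, theta_nome_inv ht, theta_nome_inv (by positivity), hsqrt] at hsum
  linear_combination hsum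

lemma theta_neg_nome_pos {t : ℝ} (ht : 0 < t) : 0 < theta (-nome t) := by
  have ht' : 0 < t⁻¹ := inv_pos.2 ht
  rw [← inv_inv t, theta_neg_nome_inv ht']
  have hlt : theta (nome t⁻¹) < theta (nome (t⁻¹ / 4)) :=
    strictMonoOn_theta (nome_mem_Ico ht') (nome_mem_Ico (by positivity))
      (nome_lt_nome (by linarith))
  exact mul_pos (Real.sqrt_pos.2 ht') (sub_pos.2 hlt)

lemma theta_neg_nome_lt {t : ℝ} (ht : 0 < t) : theta (-nome t) < theta (nome t) := by
  have hsum := theta_add_theta_neg (norm_nome_lt_one ht)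
  have hpow : nome t ^ 4 < nome t := pow_lt_self_of_lt_one₀ (nome_pos t) (nome_lt_one ht) (by simp)
  have hlt := strictMonoOn_theta ⟨(pow_pos (nome_pos t) 4).le, hpow.trans (nome_lt_one ht)⟩
    (nome_mem_Ico ht) hpow
  linarith

/-- The complementary modulus `k' = θ₄² / θ₃²` at nome `exp (-π t)`; it is the one for which
`K' / K = t`. -/
noncomputable def coModulus (t : ℝ) : ℝ := (theta (-nome t) / theta (nome t)) ^ 2

lemma coModulus_mem_Ioo {t : ℝ} (ht : 0 < t) : coModulus t ∈ Ioo 0 1 := by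
  have hpos := div_pos (theta_neg_nome_pos ht) (theta_nome_pos ht)
  exact ⟨pow_pos hpos 2, pow_lt_one₀ hpos.le
    ((div_lt_one (theta_nome_pos ht)).2 (theta_neg_nome_lt ht)) two_ne_zero⟩

lemma coModulus_sq_add_coModulus_inv_sq {t : ℝ} (ht : 0 < t) :
    coModulus t ^ 2 + coModulus t⁻¹ ^ 2 = 1 := by
  have hquartic := theta_pow_four (norm_nome_lt_one (t := t / 4) (by positivity))
  have hpos := theta_nome_pos ht
  rw [nome_pow_four] at hquartic
  rw [coModulus, coModulus, theta_neg_nome_inv ht, theta_nome_inv ht,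
    mul_div_mul_left _ _ (Real.sqrt_pos.2 ht).ne']
  field_simp
  linear_combination -hquartic

lemma sqrt_one_sub_coModulus_sq {t : ℝ} (ht : 0 < t) :
    √(1 - coModulus t ^ 2) = coModulus t⁻¹ := by
  rw [← coModulus_sq_add_coModulus_inv_sq ht, add_sub_cancel_left, Real.sqrt_sq]
  exact (coModulus_mem_Ioo (inv_pos.2 ht)).1.le

lemma coModulus_two_mul {t : ℝ} (ht : 0 < t) :
    coModulus (2 * t) = 2 * √(coModulus t) / (1 + coModulus t) := by
  have hpos := theta_nome_pos ht
  have hneg := theta_neg_nome_pos ht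
  have hsq := theta_sq_add_theta_neg_sq (norm_nome_lt_one ht)
  have hmul := theta_mul_theta_neg (norm_nome_lt_one ht)
  have hpos2 : theta (nome (2 * t)) ≠ 0 := (theta_nome_pos (by positivity)).ne'
  rw [nome_pow, Nat.cast_ofNat] at hsq hmul
  rw [coModulus, coModulus, Real.sqrt_sq (by positivity), div_pow, ← hmul]
  field_simp
  linear_combination hsq

lemma tendsto_theta_nome : Tendsto (fun t => theta (nome t)) atTop (𝓝 1) := by
  have h := (continuousAt_theta (q := (0 : ℝ)) (by simp)).tendsto.comp tendsto_nome
  rwa [theta_zero] at h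

lemma tendsto_coModulus : Tendsto coModulus atTop (𝓝 1) := by
  have hneg : Tendsto (fun t => theta (-nome t)) atTop (𝓝 1) := by
    have h := (continuousAt_theta (q := (0 : ℝ)) (by simp)).tendsto
    rw [theta_zero] at h
    exact h.comp (by simpa using tendsto_nome.neg)
  have h := (hneg.div tendsto_theta_nome one_ne_zero).pow 2
  rwa [div_one, one_pow] at h

lemma tendsto_EllK'_coModulus : Tendsto (fun t => EllK' (coModulus t)) atTop (𝓝 (π / 2)) := by
  have hupper : Tendsto (fun t => 1 / coModulus t * (π / 2)) atTop (𝓝 (π / 2)) := by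
    simpa using (tendsto_coModulus.inv₀ one_ne_zero).mul_const (π / 2)
  have hmod : ∀ᶠ t : ℝ in atTop, 0 < coModulus t ∧ √(1 - coModulus t ^ 2) ^ 2 < 1 ∧
      √(1 - √(1 - coModulus t ^ 2) ^ 2) = coModulus t := by
    filter_upwards [eventually_gt_atTop 0] with t ht
    obtain ⟨hpos, hlt⟩ := coModulus_mem_Ioo ht
    have hsq : coModulus t ^ 2 < 1 := pow_lt_one₀ hpos.le hlt two_ne_zero
    rw [Real.sq_sqrt (sub_nonneg.2 hsq.le), sub_sub_cancel, Real.sqrt_sq hpos.le]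
    exact ⟨hpos, sub_lt_self 1 (pow_pos hpos 2), rfl⟩
  refine tendsto_of_tendsto_of_tendsto_of_le_of_le' tendsto_const_nhds hupper ?_ ?_
  · exact hmod.mono fun t ht => pi_div_two_le_EllK ht.2.1
  · exact hmod.mono fun t ht => (EllK_le ht.2.1).trans_eq (by rw [ht.2.2])

/-- The quotient of the two sides is unchanged when `t` is doubled, by the Landen transformation,
and tends to `1` as `t → ∞`. -/
lemma EllK'_coModulus {t : ℝ} (ht : 0 < t) :
    EllK' (coModulus t) = π / 2 * theta (nome t) ^ 2 := by
  let F (s : ℝ) := EllK' (coModulus s) / theta (nome s) ^ 2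
  have hdouble {s : ℝ} (hs : 0 < s) : F (2 * s) = F s := by
    obtain ⟨hpos, hlt⟩ := coModulus_mem_Ioo hs
    have hsq := theta_sq_add_theta_neg_sq (norm_nome_lt_one hs)
    have hθ := theta_nome_pos hs
    have hθ2 := theta_nome_pos (mul_pos two_pos hs)
    have hcoef : (1 + coModulus s) / 2 = theta (nome (2 * s)) ^ 2 / theta (nome s) ^ 2 := by
      rw [nome_pow, Nat.cast_ofNat] at hsq
      rw [coModulus]
      field_simp
      linear_combination hsq
    simp only [F]
    rw [coModulus_two_mul hs, EllK'_landen hpos hlt, hcoef]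
    field_simp
  have hpow (n : ℕ) : F (2 ^ n * t) = F t := by
    induction n with
    | zero => rw [pow_zero, one_mul]
    | succ n ih => rw [pow_succ', mul_assoc, hdouble (by positivity), ih]
  have hlim : Tendsto F atTop (𝓝 (π / 2)) := by
    have h := tendsto_EllK'_coModulus.div (tendsto_theta_nome.pow 2) (by simp)
    rwa [one_pow, div_one] at h
  have hseq : Tendsto (fun n : ℕ => (2 : ℝ) ^ n * t) atTop atTop :=
    (tendsto_pow_atTop_atTop_of_one_lt one_lt_two).atTop_mul_const ht
  have hconst : F t = π / 2 :=
    tendsto_nhds_unique (tendsto_const_nhds.congr fun n => (hpow n).symm) (hlim.comp hseq)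
  exact (div_eq_iff (pow_pos (theta_nome_pos ht) 2).ne').1 hconst

/-- The modular angle `α`, with `cos α` the complementary modulus, as a function of the period
ratio. -/
noncomputable def modularAngle (t : ℝ) : ℝ := Real.arccos (coModulus t)

lemma modularAngle_mem_Ioo {t : ℝ} (ht : 0 < t) : modularAngle t ∈ Ioo 0 (π / 2) :=
  ⟨Real.arccos_pos.2 (coModulus_mem_Ioo ht).2, Real.arccos_lt_pi_div_two.2 (coModulus_mem_Ioo ht).1⟩

lemma EllK'_div_EllK_sin_modularAngle {t : ℝ} (ht : 0 < t) :
    EllK' (Real.sin (modularAngle t)) / EllK (Real.sin (modularAngle t)) = t := by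
  have ht' : 0 < t⁻¹ := inv_pos.2 ht
  have hK : EllK (coModulus t⁻¹) = π / 2 * theta (nome t) ^ 2 := by
    rw [← EllK'_coModulus ht, EllK', sqrt_one_sub_coModulus_sq ht]
  have hpos := theta_nome_pos ht
  rw [modularAngle, Real.sin_arccos, sqrt_one_sub_coModulus_sq ht, EllK'_coModulus ht', hK,
    theta_nome_inv ht, mul_pow, Real.sq_sqrt ht.le]
  field_simp

end Modulus

/-! ### Jacobi's triple product -/

section QBinomial

/-- Gaussian binomial coefficients, defined by their Pascal rule. -/
def qBinom {R : Type*} [CommRing R] (p : R) : ℕ → ℕ → R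
  | _, 0 => 1
  | 0, _ + 1 => 0
  | N + 1, j + 1 => qBinom p N (j + 1) + p ^ (N - j) * qBinom p N j

/-- The `q`-Pochhammer symbol `(p; p)_n`, the unnormalised `q`-factorial. -/
def qFac {R : Type*} [CommRing R] (p : R) (n : ℕ) : R := ∏ k ∈ Finset.range n, (1 - p ^ (k + 1))

variable {R : Type*} [CommRing R]

lemma qBinom_zero_right (p : R) (N : ℕ) : qBinom p N 0 = 1 := by
  cases N <;> rfl

lemma qBinom_eq_zero (p : R) : ∀ {N j : ℕ}, N < j → qBinom p N j = 0
  | 0, j + 1, _ => rfl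
  | N + 1, j + 1, h => by
    rw [qBinom, qBinom_eq_zero p (by omega : N < j + 1), qBinom_eq_zero p (by omega : N < j),
      mul_zero, add_zero]

lemma qFac_succ (p : R) (n : ℕ) : qFac p (n + 1) = qFac p n * (1 - p ^ (n + 1)) :=
  Finset.prod_range_succ _ n

lemma qBinom_mul_qFac_mul_qFac (p : R) {N j m : ℕ} (h : j + m = N) :
    qBinom p N j * qFac p j * qFac p m = qFac p N := by
  induction N generalizing j m with
  | zero =>
    obtain ⟨rfl, rfl⟩ : j = 0 ∧ m = 0 := by omega
    simp [qBinom, qFac]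
  | succ N ih =>
    rcases j with _ | j
    · obtain rfl : m = N + 1 := by omega
      simp [qBinom, qFac]
    have hj := ih (j := j) (m := m) (by omega)
    rw [qBinom, show N - j = m by omega]
    rcases m with _ | m
    · obtain rfl : j = N := by omega
      rw [qBinom_eq_zero p (Nat.lt_succ_self j), qFac_succ p j]
      linear_combination (1 - p ^ (j + 1)) * hj
    · have hj1 := ih (j := j + 1) (m := m) (by omega)
      rw [qFac_succ p j] at hj1 ⊢
      rw [qFac_succ p m] at hj ⊢
      rw [qFac_succ p N, show N + 1 = (m + 1) + (j + 1) by omega, pow_add]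
      linear_combination (1 - p ^ (m + 1)) * hj1 + p ^ (m + 1) * (1 - p ^ (j + 1)) * hj

lemma qBinom_succ_succ_mul_pow_choose_two (p : R) {N j : ℕ} (hj : j ≤ N) :
    qBinom p (N + 1) (j + 1) * p ^ (j + 1).choose 2 =
      qBinom p N (j + 1) * p ^ (j + 1).choose 2 + p ^ N * (qBinom p N j * p ^ j.choose 2) := by
  rw [qBinom, ← Nat.sub_add_cancel hj, pow_add, Nat.add_sub_cancel, Nat.choose_succ_succ' j 1,
    Nat.choose_one_right, pow_add]
  ring

/-- The `q`-binomial theorem. -/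
lemma prod_add_mul_pow (p x y : R) (N : ℕ) :
    ∏ k ∈ Finset.range N, (y + x * p ^ k) =
      ∑ j ∈ Finset.range (N + 1), qBinom p N j * p ^ (j.choose 2) * (x ^ j * y ^ (N - j)) := by
  induction N with
  | zero => simp [qBinom]
  | succ N ih =>
    have hy : y * ∑ j ∈ Finset.range (N + 1),
          qBinom p N j * p ^ (j.choose 2) * (x ^ j * y ^ (N - j)) =
        ∑ j ∈ Finset.range (N + 1),
          qBinom p N (j + 1) * p ^ ((j + 1).choose 2) * (x ^ (j + 1) * y ^ (N - j)) +
        y ^ (N + 1) := by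
      rw [Finset.mul_sum, Finset.sum_range_succ', Finset.sum_range_succ _ N,
        qBinom_eq_zero p (Nat.lt_succ_self N), qBinom_zero_right]
      simp only [zero_mul, add_zero, Nat.choose_zero_succ, pow_zero, one_mul, Nat.sub_zero]
      rw [← pow_succ']
      refine congrArg (· + _) (Finset.sum_congr rfl fun j hj => ?_)
      rw [show N - j = (N - (j + 1)) + 1 by have := Finset.mem_range.1 hj; omega, pow_succ]
      ring
    rw [Finset.prod_range_succ, ih, mul_comm, add_mul, hy, Finset.sum_range_succ' _ (N + 1),
      qBinom_zero_right, Finset.mul_sum, add_right_comm, ← Finset.sum_add_distrib]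
    refine congrArg₂ (· + ·) (Finset.sum_congr rfl fun j hj => ?_) (by simp)
    rw [qBinom_succ_succ_mul_pow_choose_two p (Finset.mem_range_succ_iff.1 hj),
      Nat.add_sub_add_right, pow_succ x j]
    ring

end QBinomial

lemma two_mul_choose_two_add (j : ℕ) : 2 * j.choose 2 + j = j ^ 2 := by
  induction j with
  | zero => rfl
  | succ j ih =>
    rw [Nat.choose_succ_succ' j 1, Nat.choose_one_right]
    linarith

lemma prod_pow_two_mul_add_one {M : Type*} [CommMonoid M] (q : M) (n : ℕ) :
    ∏ k ∈ Finset.range n, q ^ (2 * k + 1) = q ^ n ^ 2 := by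
  rw [Finset.prod_pow_eq_pow_sum]
  congr 1
  induction n with
  | zero => rfl
  | succ n ih => rw [Finset.sum_range_succ, ih]; ring

section FiniteTripleProduct

variable {K : Type*} [Field K]

lemma prod_pow_add_mul_pow {x : K} (hx : x ≠ 0) (q : K) (n : ℕ) :
    ∏ k ∈ Finset.range (2 * n), (q ^ (2 * n) + x * q * (q ^ 2) ^ k) =
      x ^ n * q ^ (3 * n ^ 2) *
        ∏ k ∈ Finset.range n, ((1 + x * q ^ (2 * k + 1)) * (1 + x⁻¹ * q ^ (2 * k + 1))) := by
  have hlow : ∏ k ∈ Finset.range n, (q ^ (2 * n) + x * q * (q ^ 2) ^ k) =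
      x ^ n * q ^ n ^ 2 * ∏ k ∈ Finset.range n, (1 + x⁻¹ * q ^ (2 * k + 1)) := by
    calc _ = ∏ k ∈ Finset.range n,
            x * q ^ (2 * k + 1) * (1 + x⁻¹ * q ^ (2 * (n - 1 - k) + 1)) := by
          refine Finset.prod_congr rfl fun k hk => ?_
          have hk' := Finset.mem_range.1 hk
          rw [show 2 * n = (2 * k + 1) + (2 * (n - 1 - k) + 1) by omega]
          field_simp
          ring
      _ = _ := by
        rw [Finset.prod_mul_distrib, Finset.prod_mul_distrib, Finset.prod_const, Finset.card_range,
          prod_pow_two_mul_add_one,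
          Finset.prod_range_reflect (fun k => 1 + x⁻¹ * q ^ (2 * k + 1))]
  have hhigh : ∏ k ∈ Finset.range n, (q ^ (2 * n) + x * q * (q ^ 2) ^ (n + k)) =
      q ^ (2 * n ^ 2) * ∏ k ∈ Finset.range n, (1 + x * q ^ (2 * k + 1)) := by
    calc _ = ∏ k ∈ Finset.range n, q ^ (2 * n) * (1 + x * q ^ (2 * k + 1)) :=
          Finset.prod_congr rfl fun k _ => by ring
      _ = _ := by
        rw [Finset.prod_mul_distrib, Finset.prod_const, Finset.card_range, ← pow_mul]
        ring
  rw [two_mul n, Finset.prod_range_add, ← two_mul, hlow, hhigh, Finset.prod_mul_distrib]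
  ring

lemma prod_one_add_mul_one_add {x q : K} (hx : x ≠ 0) (hq : q ≠ 0) (n : ℕ) :
    ∏ k ∈ Finset.range n, ((1 + x * q ^ (2 * k + 1)) * (1 + x⁻¹ * q ^ (2 * k + 1))) =
      ∑ i ∈ Finset.Icc (-n : ℤ) n,
        qBinom (q ^ 2) (2 * n) (i + n).toNat * (x ^ i * q ^ (i.natAbs ^ 2)) := by
  apply mul_left_cancel₀ (mul_ne_zero (pow_ne_zero n hx) (pow_ne_zero (3 * n ^ 2) hq))
  rw [← prod_pow_add_mul_pow hx, prod_add_mul_pow, Finset.mul_sum]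
  refine Finset.sum_nbij' (fun j => (j : ℤ) - n) (fun i => (i + n).toNat) ?_ ?_ ?_ ?_ ?_
  any_goals grind
  intro j hj
  have hj' : j ≤ 2 * n := Finset.mem_range_succ_iff.1 hj
  have hexp : 2 * j.choose 2 + j + 2 * n * (2 * n - j) =
      3 * n ^ 2 + ((j : ℤ) - n).natAbs ^ 2 := by
    rw [two_mul_choose_two_add]
    zify [hj']
    rw [sq_abs]
    ring
  calc _ = qBinom (q ^ 2) (2 * n) j *
          (x ^ j * q ^ (2 * j.choose 2 + j + 2 * n * (2 * n - j))) := by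
        ring
    _ = _ := by
        rw [hexp, pow_add, sub_add_cancel, Int.toNat_natCast, zpow_sub₀ hx, zpow_natCast,
          zpow_natCast]
        field_simp

end FiniteTripleProduct

section TripleProduct

variable {𝕜 : Type*} [NormedField 𝕜]

lemma one_sub_pow_succ_ne_zero {p : 𝕜} (hp : ‖p‖ < 1) (k : ℕ) : 1 - p ^ (k + 1) ≠ 0 := by
  intro h
  have hnorm : ‖p‖ ^ (k + 1) < 1 := pow_lt_one₀ (norm_nonneg p) hp k.succ_ne_zero
  rw [← norm_pow, ← sub_eq_zero.1 h, norm_one] at hnorm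
  exact lt_irrefl _ hnorm

lemma qFac_ne_zero {p : 𝕜} (hp : ‖p‖ < 1) (n : ℕ) : qFac p n ≠ 0 :=
  Finset.prod_ne_zero_iff.2 fun k _ => one_sub_pow_succ_ne_zero hp k

lemma exists_tendsto_qFac [CompleteSpace 𝕜] {p : 𝕜} (hp : ‖p‖ < 1) :
    ∃ l ≠ 0, Tendsto (qFac p) atTop (𝓝 l) := by
  have hs : Summable fun k : ℕ => ‖-p ^ (k + 1)‖ := by
    simp only [norm_neg, norm_pow]
    exact (summable_nat_add_iff 1).2 (summable_geometric_of_lt_one (norm_nonneg p) hp)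
  refine ⟨∏' k : ℕ, (1 + -p ^ (k + 1)), tprod_one_add_ne_zero_of_summable ?_ hs, ?_⟩
  · simpa only [← sub_eq_add_neg] using one_sub_pow_succ_ne_zero hp
  · refine (multipliable_one_add_of_summable hs).tendsto_prod_tprod_nat.congr fun n => ?_
    simp only [qFac, sub_eq_add_neg]

lemma qBinom_eq_div {p : 𝕜} (hp : ‖p‖ < 1) {N j m : ℕ} (h : j + m = N) :
    qBinom p N j = qFac p N * (qFac p j)⁻¹ * (qFac p m)⁻¹ := by
  rw [← qBinom_mul_qFac_mul_qFac p h]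
  have := qFac_ne_zero hp j
  have := qFac_ne_zero hp m
  field_simp

lemma tendsto_qFac_mul_qBinom [CompleteSpace 𝕜] {p : 𝕜} (hp : ‖p‖ < 1) (i : ℤ) :
    Tendsto (fun n : ℕ => qFac p n * qBinom p (2 * n) (i + n).toNat) atTop (𝓝 1) := by
  obtain ⟨l, hl, hlim⟩ := exists_tendsto_qFac hp
  have hdouble : Tendsto (fun n : ℕ => 2 * n) atTop atTop := tendsto_id.const_mul_atTop' two_pos
  have hshift (i : ℤ) : Tendsto (fun n : ℕ => (i + n).toNat) atTop atTop :=
    tendsto_atTop.2 fun b => by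
      filter_upwards [eventually_ge_atTop (b + i.natAbs)] with n hn
      omega
  have h := hlim.mul (((hlim.comp hdouble).mul ((hlim.comp (hshift i)).inv₀ hl)).mul
    ((hlim.comp (hshift (-i))).inv₀ hl))
  rw [show l * (l * l⁻¹ * l⁻¹) = 1 by field_simp] at h
  refine h.congr' ?_
  filter_upwards [eventually_ge_atTop i.natAbs] with n hn
  rw [qBinom_eq_div hp (show (i + n).toNat + (-i + n).toNat = 2 * n by omega)]
  rfl

lemma exists_norm_qFac_mul_qBinom_le [CompleteSpace 𝕜] {p : 𝕜} (hp : ‖p‖ < 1) :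
    ∃ C, ∀ n N j : ℕ, ‖qFac p n * qBinom p N j‖ ≤ C := by
  obtain ⟨l, hl, hlim⟩ := exists_tendsto_qFac hp
  obtain ⟨A, hA⟩ := hlim.norm.bddAbove_range
  obtain ⟨B, hB⟩ := (hlim.inv₀ hl).norm.bddAbove_range
  simp only [mem_upperBounds, forall_mem_range] at hA hB
  have hA0 : 0 ≤ A := (norm_nonneg _).trans (hA 0)
  have hB0 : 0 ≤ B := (norm_nonneg _).trans (hB 0)
  refine ⟨A * (A * B * B), fun n N j => ?_⟩
  rcases lt_or_ge N j with hj | hj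
  · rw [qBinom_eq_zero p hj, mul_zero, norm_zero]
    positivity
  · rw [qBinom_eq_div hp (Nat.add_sub_cancel' hj)]
    simp only [norm_mul]
    gcongr
    exacts [hA n, hA N, hB j, hB (N - j)]

lemma summable_norm_zpow_mul_pow_natAbs_sq {x q : 𝕜} (hx : x ≠ 0) (hq0 : q ≠ 0) (hq : ‖q‖ < 1) :
    Summable fun i : ℤ => ‖x ^ i * q ^ (i.natAbs ^ 2)‖ := by
  have hnat {y : 𝕜} (hy : y ≠ 0) : Summable fun n : ℕ => ‖y ^ n * q ^ (n ^ 2)‖ := by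
    have hlim : Tendsto (fun n : ℕ => ‖y * q‖ * (‖q‖ ^ 2) ^ n) atTop (𝓝 0) := by
      simpa using (tendsto_pow_atTop_nhds_zero_of_lt_one (sq_nonneg ‖q‖)
        (pow_lt_one₀ (norm_nonneg q) hq two_ne_zero)).const_mul ‖y * q‖
    refine summable_of_ratio_test_tendsto_lt_one zero_lt_one
      (Eventually.of_forall fun n => norm_ne_zero_iff.2 (by positivity)) (hlim.congr fun n => ?_)
    simp only [norm_norm, norm_mul, norm_pow]
    have := norm_ne_zero_iff.2 hy
    have := norm_ne_zero_iff.2 hq0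
    field_simp
    ring
  refine Summable.of_nat_of_neg (by simpa using hnat hx) ?_
  simpa [← inv_zpow', ← inv_pow] using hnat (inv_ne_zero hx)

/-- Jacobi's triple product identity. -/
theorem tendsto_tripleProduct [CompleteSpace 𝕜] {x q : 𝕜} (hx : x ≠ 0) (hq0 : q ≠ 0)
    (hq : ‖q‖ < 1) :
    Tendsto (fun n : ℕ => ∏ k ∈ Finset.range n, ((1 - (q ^ 2) ^ (k + 1)) *
        ((1 + x * q ^ (2 * k + 1)) * (1 + x⁻¹ * q ^ (2 * k + 1)))))
      atTop (𝓝 (∑' i : ℤ, x ^ i * q ^ (i.natAbs ^ 2))) := by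
  have hp := norm_sq_lt_one hq
  obtain ⟨C, hC⟩ := exists_norm_qFac_mul_qBinom_le hp
  have hsum (n : ℕ) : ∏ k ∈ Finset.range n, ((1 - (q ^ 2) ^ (k + 1)) *
        ((1 + x * q ^ (2 * k + 1)) * (1 + x⁻¹ * q ^ (2 * k + 1)))) =
      ∑' i : ℤ, indicator (Finset.Icc (-n : ℤ) n : Set ℤ) (fun i : ℤ =>
        qFac (q ^ 2) n * qBinom (q ^ 2) (2 * n) (i + n).toNat *
          (x ^ i * q ^ (i.natAbs ^ 2))) i := by
    rw [Finset.prod_mul_distrib, prod_one_add_mul_one_add hx hq0, ← qFac, Finset.mul_sum,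
      sum_eq_tsum_indicator]
    simp only [mul_assoc]
  simp_rw [hsum]
  refine tendsto_tsum_of_dominated_convergence
    ((summable_norm_zpow_mul_pow_natAbs_sq hx hq0 hq).mul_left C) (fun i => ?_)
    (Eventually.of_forall fun n i => ?_)
  · have h := (tendsto_qFac_mul_qBinom hp i).mul_const (x ^ i * q ^ (i.natAbs ^ 2))
    rw [one_mul] at h
    refine h.congr' ?_
    filter_upwards [eventually_ge_atTop i.natAbs] with n hn
    rw [indicator_of_mem (by simp; omega)]
  · refine (norm_indicator_le_norm_self _ _).trans ?_
    rw [norm_mul]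
    gcongr
    exact hC _ _ _

lemma tendsto_prod_theta [CompleteSpace 𝕜] {q : 𝕜} (hq0 : q ≠ 0) (hq : ‖q‖ < 1) :
    Tendsto (fun n : ℕ => ∏ k ∈ Finset.range n, ((1 - q ^ (2 * k + 2)) *
      (1 + q ^ (2 * k + 1)) ^ 2)) atTop (𝓝 (theta q)) := by
  have h := tendsto_tripleProduct one_ne_zero hq0 hq
  simp only [inv_one, one_zpow, one_mul, ← pow_mul, mul_add, mul_one, ← sq] at h
  exact h

end TripleProduct

/-! ### The modular angle as a series of arctangents -/

section Angle

lemma eq_norm_mul_exp_of_tendsto_prod {w : ℕ → ℂ} {φ : ℕ → ℝ} {P : ℂ} {Φ : ℝ}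
    (hw : ∀ k, w k = ‖w k‖ * Complex.exp (φ k * Complex.I))
    (hP : Tendsto (fun n => ∏ k ∈ Finset.range n, w k) atTop (𝓝 P))
    (hΦ : Tendsto (fun n => ∑ k ∈ Finset.range n, φ k) atTop (𝓝 Φ)) :
    P = ‖P‖ * Complex.exp (Φ * Complex.I) := by
  have hcont : Continuous fun p : ℂ × ℝ => (‖p.1‖ : ℂ) * Complex.exp (p.2 * Complex.I) := by
    fun_prop
  refine tendsto_nhds_unique hP
    (((hcont.tendsto (P, Φ)).comp (hP.prodMk_nhds hΦ)).congr fun n => ?_)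
  simp only [Function.comp_apply, norm_prod, Complex.ofReal_prod, Complex.ofReal_sum,
    Finset.sum_mul, Complex.exp_sum, ← Finset.prod_mul_distrib, ← hw]

lemma one_add_mul_I_eq (x : ℝ) :
    1 + x * Complex.I = ‖1 + x * Complex.I‖ * Complex.exp (Real.arctan x * Complex.I) := by
  have harg : Complex.arg (1 + x * Complex.I) = Real.arctan x := by
    rw [Complex.arg_of_re_nonneg (by simp), Real.arctan_eq_arcsin, ← Complex.ofReal_one,
      Complex.norm_add_mul_I, one_pow]
    simp
  rw [← harg, Complex.norm_mul_exp_arg_mul_I]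

lemma alternating_sum_mem_Icc {R : Type*} [Ring R] [PartialOrder R] [IsOrderedAddMonoid R]
    {a : ℕ → R} (ha : Antitone a) (h0 : ∀ n, 0 ≤ a n) (N : ℕ) :
    ∑ k ∈ Finset.range N, (-1) ^ k * a k ∈ Icc 0 (a 0) := by
  induction N generalizing a with
  | zero => simpa using h0 0
  | succ N ih =>
    have hshift := ih (a := fun n => a (n + 1)) (fun m n hmn => ha (by omega)) fun n => h0 _
    simp only [Finset.sum_range_succ', pow_succ, mul_neg_one, neg_mul, Finset.sum_neg_distrib,
      pow_zero, one_mul, neg_add_eq_sub]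
    exact ⟨sub_nonneg.2 (hshift.2.trans (ha (Nat.zero_le 1))), sub_le_self _ hshift.1⟩

lemma arctan_le_self {x : ℝ} (hx : 0 ≤ x) : Real.arctan x ≤ x := by
  simpa [Real.tan_arctan] using
    Real.le_tan (Real.arctan_nonneg.2 hx) (Real.arctan_lt_pi_div_two x)

lemma arctan_pow_nonneg {r : ℝ} (hr : 0 ≤ r) (k : ℕ) : 0 ≤ Real.arctan (r ^ (2 * k + 1)) :=
  Real.arctan_nonneg.2 (pow_nonneg hr _)

lemma neg_one_pow_mul_arctan (x : ℝ) (k : ℕ) :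
    (-1) ^ k * Real.arctan x = Real.arctan ((-1) ^ k * x) := by
  rcases neg_one_pow_eq_or ℝ k with h | h <;> simp [h]

lemma summable_neg_one_pow_mul_arctan {r : ℝ} (h0 : 0 ≤ r) (h1 : r < 1) :
    Summable fun k : ℕ => (-1) ^ k * Real.arctan (r ^ (2 * k + 1)) := by
  refine (summable_geometric_of_lt_one h0 h1).of_norm_bounded fun k => ?_
  rw [norm_mul, norm_pow, norm_neg, norm_one, one_pow, one_mul,
    Real.norm_of_nonneg (arctan_pow_nonneg h0 k)]
  exact (arctan_le_self (pow_nonneg h0 _)).trans (pow_le_pow_of_le_one h0 h1.le (by omega))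

lemma sum_neg_one_pow_mul_arctan_mem_Icc {r : ℝ} (h0 : 0 ≤ r) (h1 : r ≤ 1) (N : ℕ) :
    ∑ k ∈ Finset.range N, (-1) ^ k * Real.arctan (r ^ (2 * k + 1)) ∈ Icc 0 (Real.arctan r) := by
  have hanti : Antitone fun k : ℕ => Real.arctan (r ^ (2 * k + 1)) := fun m n hmn =>
    Real.arctan_strictMono.monotone (pow_le_pow_of_le_one h0 h1 (by omega))
  simpa using alternating_sum_mem_Icc hanti (arctan_pow_nonneg h0) N

lemma tsum_neg_one_pow_mul_arctan_mem_Icc {r : ℝ} (h0 : 0 ≤ r) (h1 : r < 1) :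
    ∑' k : ℕ, (-1) ^ k * Real.arctan (r ^ (2 * k + 1)) ∈ Icc 0 (π / 4) := by
  have hr : Real.arctan r ≤ π / 4 := Real.arctan_one ▸ Real.arctan_strictMono.monotone h1.le
  exact isClosed_Icc.mem_of_tendsto
    (summable_neg_one_pow_mul_arctan h0 h1).hasSum.tendsto_sum_nat (Eventually.of_forall fun N =>
      Icc_subset_Icc_right hr (sum_neg_one_pow_mul_arctan_mem_Icc h0 h1.le N))

lemma tripleProduct_factor_eq {r : ℝ} (h0 : 0 ≤ r) (h1 : r < 1) (k : ℕ) :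
    (1 - (r * Complex.I) ^ (2 * k + 2)) * (1 + (r * Complex.I) ^ (2 * k + 1)) ^ 2 =
      ‖(1 - (r * Complex.I) ^ (2 * k + 2)) * (1 + (r * Complex.I) ^ (2 * k + 1)) ^ 2‖ *
        Complex.exp ((2 * ((-1) ^ k * Real.arctan (r ^ (2 * k + 1))) : ℝ) * Complex.I) := by
  have hodd : (r * Complex.I) ^ (2 * k + 1) = ((-1) ^ k * r ^ (2 * k + 1) : ℝ) * Complex.I := by
    rw [mul_pow, pow_succ Complex.I, pow_mul Complex.I, Complex.I_sq]
    push_cast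
    ring
  have heven : 1 - (r * Complex.I) ^ (2 * k + 2) = (1 + (-1) ^ k * r ^ (2 * k + 2) : ℝ) := by
    rw [mul_pow, ← mul_add_one, pow_mul Complex.I, Complex.I_sq]
    push_cast
    ring
  have hpos : 0 ≤ 1 + (-1) ^ k * r ^ (2 * k + 2) := by
    have hpow := pow_le_one₀ h0 h1.le (n := 2 * k + 2)
    have hpow' := pow_nonneg h0 (2 * k + 2)
    rcases neg_one_pow_eq_or ℝ k with h | h <;> rw [h] <;> linarith
  rw [heven, hodd, neg_one_pow_mul_arctan, norm_mul, norm_pow, Complex.norm_of_nonneg hpos]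
  conv_lhs => rw [one_add_mul_I_eq]
  rw [mul_pow, ← Complex.exp_nat_mul]
  push_cast
  ring_nf

lemma theta_mul_I {r : ℝ} (h0 : 0 < r) (h1 : r < 1) :
    theta (r * Complex.I) = ‖theta (r * Complex.I)‖ * Complex.exp
      ((2 * ∑' k : ℕ, (-1) ^ k * Real.arctan (r ^ (2 * k + 1)) : ℝ) * Complex.I) := by
  have hlim := tendsto_prod_theta (q := r * Complex.I) (by simp [h0.ne'])
    (by simpa [abs_of_pos h0] using h1)
  exact eq_norm_mul_exp_of_tendsto_prod (tripleProduct_factor_eq h0.le h1) hlim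
    ((summable_neg_one_pow_mul_arctan h0.le h1).hasSum.mul_left 2).tendsto_sum_nat

/-- On the imaginary axis `conj q = -q`, so that the two duplication formulas compute `‖θ₃‖ ^ 2`
and the real part of `θ₃ ^ 2`. -/
lemma cos_four_mul_tsum_arctan {r : ℝ} (h0 : 0 < r) (h1 : r < 1) :
    Real.cos (4 * ∑' k : ℕ, (-1) ^ k * Real.arctan (r ^ (2 * k + 1))) =
      (theta (-r ^ 2) / theta (r ^ 2)) ^ 2 := by
  have hpolar := theta_mul_I h0 h1
  set S := ∑' k : ℕ, (-1) ^ k * Real.arctan (r ^ (2 * k + 1))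
  set z : ℂ := r * Complex.I with hz
  have hzn : ‖z‖ < 1 := by simpa [hz, abs_of_pos h0] using h1
  have hz2 : z ^ 2 = (-r ^ 2 : ℝ) := by rw [hz, mul_pow, Complex.I_sq]; push_cast; ring
  have hconj : theta (-z) = starRingEnd ℂ (theta z) := by simp [conj_theta, hz]
  have hnorm : ‖theta z‖ ^ 2 = theta (r ^ 2) ^ 2 := by
    have h := theta_mul_theta_neg hzn
    rw [hconj, Complex.mul_conj', hz2, ← Complex.ofReal_neg, neg_neg, ← ofReal_theta] at h
    exact_mod_cast h
  have hre : (theta z ^ 2).re = theta (-r ^ 2) ^ 2 := by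
    have h := theta_sq_add_theta_neg_sq hzn
    rw [hconj, ← map_pow, Complex.add_conj, hz2, ← ofReal_theta] at h
    have h' : 2 * (theta z ^ 2).re = 2 * theta (-r ^ 2) ^ 2 := by exact_mod_cast h
    linarith
  have hsq : theta z ^ 2 = (‖theta z‖ ^ 2 : ℝ) * Complex.exp ((4 * S : ℝ) * Complex.I) := by
    conv_lhs => rw [hpolar, mul_pow, ← Complex.exp_nat_mul]
    push_cast
    ring_nf
  have hθ : theta (r ^ 2) ≠ 0 := (theta_pos (sq_nonneg r) (pow_lt_one₀ h0.le h1 two_ne_zero)).ne'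
  rw [hsq, Complex.re_ofReal_mul, Complex.exp_ofReal_mul_I_re, hnorm] at hre
  rw [div_pow, ← hre]
  field_simp

lemma modularAngle_eq_tsum_arctan {t : ℝ} (ht : 0 < t) :
    modularAngle t = 4 * ∑' k : ℕ, (-1) ^ k * Real.arctan (nome (t / 2) ^ (2 * k + 1)) := by
  have hpos := nome_pos (t / 2)
  have hlt := nome_lt_one (half_pos ht)
  have hnome : nome t = nome (t / 2) ^ 2 := by
    rw [nome_pow, Nat.cast_ofNat, mul_div_cancel₀ t two_ne_zero]
  obtain ⟨hS0, hS1⟩ := tsum_neg_one_pow_mul_arctan_mem_Icc hpos.le hlt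
  rw [modularAngle, coModulus, hnome, ← cos_four_mul_tsum_arctan hpos hlt,
    Real.arccos_cos (by linarith) (by linarith)]

end Angle

/-! ### The integral of the modular angle -/

section CatalanIntegral

lemma integrableOn_exp_neg_mul {a : ℝ} (ha : 0 < a) :
    IntegrableOn (fun t : ℝ => Real.exp (-(a * t))) (Ioi 0) := by
  simpa only [neg_mul] using integrableOn_exp_mul_Ioi (neg_lt_zero.2 ha) 0

lemma integral_exp_neg_mul {a : ℝ} (ha : 0 < a) :
    ∫ t in Ioi (0 : ℝ), Real.exp (-(a * t)) = a⁻¹ := by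
  simpa [neg_div_neg_eq] using integral_exp_mul_Ioi (neg_lt_zero.2 ha) 0

lemma summable_one_div_odd_sq : Summable fun n : ℕ => 1 / (2 * (n : ℝ) + 1) ^ 2 := by
  have hinj : Function.Injective fun n : ℕ => 2 * n + 1 := fun m n h => by grind
  simpa [Function.comp_def] using
    (Real.summable_one_div_nat_pow.2 one_lt_two).comp_injective hinj

lemma hasSum_arctan_exp_neg {t : ℝ} (ht : 0 < t) :
    HasSum (fun n : ℕ => (-1) ^ n / (2 * (n : ℝ) + 1) * Real.exp (-((2 * n + 1) * t)))
      (Real.arctan (Real.exp (-t))) := by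
  have hlt : ‖Real.exp (-t)‖ < 1 := by
    rw [Real.norm_of_nonneg (Real.exp_pos _).le, Real.exp_lt_one_iff]
    exact neg_lt_zero.2 ht
  refine (Real.hasSum_arctan hlt).congr_fun fun n => ?_
  rw [← Real.exp_nat_mul]
  push_cast
  ring_nf

lemma integral_arctan_exp_neg :
    ∫ t in Ioi (0 : ℝ), Real.arctan (Real.exp (-t)) =
      ∑' n : ℕ, (-1 : ℝ) ^ n / (2 * (n : ℝ) + 1) ^ 2 := by
  let f (n : ℕ) (t : ℝ) : ℝ := (-1) ^ n / (2 * n + 1) * Real.exp (-((2 * n + 1) * t))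
  have hodd (n : ℕ) : (0 : ℝ) < 2 * n + 1 := by positivity
  have hint (n : ℕ) : Integrable (f n) (volume.restrict (Ioi 0)) :=
    (integrableOn_exp_neg_mul (hodd n)).const_mul _
  have hnorm (n : ℕ) : ∫ t in Ioi (0 : ℝ), ‖f n t‖ = 1 / (2 * (n : ℝ) + 1) ^ 2 := by
    simp only [f, norm_mul, norm_div, norm_pow, norm_neg, norm_one, one_pow, Real.norm_eq_abs,
      Real.abs_exp, abs_of_pos (hodd n)]
    rw [integral_const_mul, integral_exp_neg_mul (hodd n)]
    field_simp
  have hsum := hasSum_integral_of_summable_integral_norm hint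
    (summable_one_div_odd_sq.congr fun n => (hnorm n).symm)
  calc _ = ∫ t in Ioi (0 : ℝ), ∑' n, f n t :=
        setIntegral_congr_fun measurableSet_Ioi fun t ht => (hasSum_arctan_exp_neg ht).tsum_eq.symm
    _ = ∑' n, ∫ t in Ioi (0 : ℝ), f n t := hsum.tsum_eq.symm
    _ = _ := tsum_congr fun n => by
        rw [integral_const_mul, integral_exp_neg_mul (hodd n)]
        field_simp

lemma integral_arctan_nome_mul {c : ℝ} (hc : 0 < c) :
    ∫ t in Ioi (0 : ℝ), Real.arctan (nome (c * t)) =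
      (∑' n : ℕ, (-1 : ℝ) ^ n / (2 * (n : ℝ) + 1) ^ 2) / (π * c) := by
  have h := integral_comp_mul_left_Ioi (fun t => Real.arctan (Real.exp (-t))) 0
    (mul_pos Real.pi_pos hc)
  rw [mul_zero, integral_arctan_exp_neg, smul_eq_mul, inv_mul_eq_div] at h
  simpa only [nome, neg_mul, mul_assoc] using h

lemma integrableOn_nome_mul {c : ℝ} (hc : 0 < c) :
    IntegrableOn (fun t : ℝ => nome (c * t)) (Ioi 0) := by
  simpa only [nome, neg_mul, mul_assoc] using integrableOn_exp_neg_mul (mul_pos Real.pi_pos hc)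

lemma continuous_nome : Continuous nome := Real.continuous_exp.comp (continuous_const_mul _)

lemma integrableOn_arctan_nome_mul {c : ℝ} (hc : 0 < c) :
    IntegrableOn (fun t : ℝ => Real.arctan (nome (c * t))) (Ioi 0) := by
  refine (integrableOn_nome_mul hc).mono' (Real.continuous_arctan.comp
    (continuous_nome.comp (continuous_const_mul c))).aestronglyMeasurable (ae_of_all _ fun t => ?_)
  rw [Real.norm_of_nonneg (Real.arctan_nonneg.2 (nome_pos _).le)]
  exact arctan_le_self (nome_pos _).le

/-- The `N`-th partial sum of the arctangent series of the modular angle. -/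
noncomputable def angleSum (N : ℕ) (t : ℝ) : ℝ :=
  4 * ∑ k ∈ Finset.range N, (-1) ^ k * Real.arctan (nome (t / 2) ^ (2 * k + 1))

lemma continuous_angleSum (N : ℕ) : Continuous (angleSum N) := by
  have := continuous_nome
  unfold angleSum
  fun_prop

lemma integral_angleSum (N : ℕ) :
    ∫ t in Ioi (0 : ℝ), angleSum N t =
      8 * (∑' n : ℕ, (-1 : ℝ) ^ n / (2 * (n : ℝ) + 1) ^ 2) / π *
        ∑ k ∈ Finset.range N, (-1 : ℝ) ^ k / (2 * k + 1) := by
  have hc (k : ℕ) : 0 < (2 * k + 1 : ℝ) / 2 := by positivity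
  have hpow (k : ℕ) (t : ℝ) : nome (t / 2) ^ (2 * k + 1) = nome ((2 * k + 1) / 2 * t) := by
    rw [nome_pow]
    push_cast
    ring_nf
  simp only [angleSum, hpow]
  rw [integral_const_mul, integral_finsetSum _ fun k _ =>
    (integrableOn_arctan_nome_mul (hc k)).const_mul _, Finset.mul_sum, Finset.mul_sum]
  refine Finset.sum_congr rfl fun k _ => ?_
  rw [integral_const_mul, integral_arctan_nome_mul (hc k)]
  field_simp
  ring

lemma norm_angleSum_le (N : ℕ) {t : ℝ} (ht : 0 < t) : ‖angleSum N t‖ ≤ 4 * nome (1 / 2 * t) := by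
  rw [one_div_mul_eq_div]
  have hpos := (nome_pos (t / 2)).le
  obtain ⟨hlow, hup⟩ :=
    sum_neg_one_pow_mul_arctan_mem_Icc hpos (nome_lt_one (half_pos ht)).le N
  rw [angleSum, Real.norm_of_nonneg (by positivity)]
  exact mul_le_mul_of_nonneg_left (hup.trans (arctan_le_self hpos)) zero_le_four

lemma tendsto_angleSum {t : ℝ} (ht : 0 < t) :
    Tendsto (fun N => angleSum N t) atTop (𝓝 (modularAngle t)) := by
  rw [modularAngle_eq_tsum_arctan ht]
  exact (summable_neg_one_pow_mul_arctan (nome_pos _).le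
    (nome_lt_one (half_pos ht))).hasSum.tendsto_sum_nat.const_mul 4

/-- Termwise integration leaves the Leibniz series `∑ (-1) ^ k / (2 * k + 1) = π / 4`. As it
converges only conditionally, the partial sums are dominated instead of the terms. -/
theorem integral_modularAngle :
    ∫ t in Ioi (0 : ℝ), modularAngle t =
      2 * ∑' n : ℕ, (-1 : ℝ) ^ n / (2 * (n : ℝ) + 1) ^ 2 := by
  have hlim := tendsto_integral_of_dominated_convergence (μ := volume.restrict (Ioi 0))
    (f := modularAngle) (fun t => 4 * nome (1 / 2 * t))
    (fun N => (continuous_angleSum N).aestronglyMeasurable)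
    ((integrableOn_nome_mul one_half_pos).const_mul 4)
    (fun N => ae_restrict_of_forall_mem measurableSet_Ioi fun t ht => norm_angleSum_le N ht)
    (ae_restrict_of_forall_mem measurableSet_Ioi fun t ht => tendsto_angleSum ht)
  simp_rw [integral_angleSum] at hlim
  rw [tendsto_nhds_unique hlim (Real.tendsto_sum_pi_div_four.const_mul _)]
  field_simp
  ring

end CatalanIntegral

/-! ### The integral as an area -/

section Area

lemma strictAntiOn_of_antitoneOn_comp_eq {f g : ℝ → ℝ} {s t : Set ℝ} (hf : AntitoneOn f s)
    (hg : MapsTo g t s) (hfg : ∀ x ∈ t, f (g x) = x) : StrictAntiOn g t := by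
  intro x hx y hy hxy
  by_contra! hle
  have h := hf (hg hx) (hg hy) hle
  rw [hfg x hx, hfg y hy] at h
  exact hxy.not_ge h

lemma volume_setOf_lt_le_and_le_volume_setOf_le {f g : ℝ → ℝ} {b t : ℝ}
    (hf : AntitoneOn f (Ioo 0 b)) (hg : g t ∈ Ioo 0 b) (hfg : f (g t) = t) :
    volume.restrict (Ioo 0 b) {x | t < f x} ≤ ENNReal.ofReal (g t) ∧
      ENNReal.ofReal (g t) ≤ volume.restrict (Ioo 0 b) {x | t ≤ f x} := by
  rw [Measure.restrict_apply' measurableSet_Ioo, Measure.restrict_apply' measurableSet_Ioo,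
    ← sub_zero (g t), ← Real.volume_Ioc]
  refine ⟨measure_mono fun x hx => ⟨hx.2.1, ?_⟩, measure_mono fun x hx => ?_⟩
  · by_contra! hlt
    exact hx.1.not_ge (hfg ▸ hf hg hx.2 hlt.le)
  · have hxb : x ∈ Ioo 0 b := ⟨hx.1, hx.2.trans_lt hg.2⟩
    exact ⟨hfg.ge.trans (hf hxb hg hx.2), hxb⟩

/-- Both sides are the area under the graph of `f`. -/
lemma integral_Ioo_eq_integral_Ioi_of_antitoneOn {f g : ℝ → ℝ} {b : ℝ}
    (hf : AntitoneOn f (Ioo 0 b)) (hf0 : ∀ x ∈ Ioo 0 b, 0 ≤ f x)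
    (hg : MapsTo g (Ioi 0) (Ioo 0 b)) (hfg : ∀ t ∈ Ioi 0, f (g t) = t) :
    ∫ x in Ioo 0 b, f x = ∫ t in Ioi 0, g t := by
  have hfpos : 0 ≤ᵐ[volume.restrict (Ioo 0 b)] f :=
    ae_restrict_of_forall_mem measurableSet_Ioo hf0
  have hfm := aemeasurable_restrict_of_antitoneOn (μ := volume) measurableSet_Ioo hf
  have hgm := aemeasurable_restrict_of_antitoneOn (μ := volume) measurableSet_Ioi
    (strictAntiOn_of_antitoneOn_comp_eq hf hg hfg).antitoneOn
  have hvol (t) (ht : t ∈ Ioi (0 : ℝ)) :=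
    volume_setOf_lt_le_and_le_volume_setOf_le hf (hg ht) (hfg t ht)
  rw [integral_eq_lintegral_of_nonneg_ae hfpos hfm.aestronglyMeasurable,
    integral_eq_lintegral_of_nonneg_ae
      (ae_restrict_of_forall_mem measurableSet_Ioi fun t ht => (hg ht).1.le)
      hgm.aestronglyMeasurable]
  congr 1
  apply le_antisymm
  · rw [lintegral_eq_lintegral_meas_lt _ hfpos hfm]
    exact setLIntegral_mono' measurableSet_Ioi fun t ht => (hvol t ht).1
  · rw [lintegral_eq_lintegral_meas_le _ hfpos hfm]
    exact setLIntegral_mono' measurableSet_Ioi fun t ht => (hvol t ht).2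

lemma sin_mem_Ioo {θ : ℝ} (hθ : θ ∈ Ioo 0 (π / 2)) : Real.sin θ ∈ Ioo 0 1 := by
  have hlt := Real.strictMonoOn_sin ⟨by linarith [hθ.1, hθ.2], hθ.2.le⟩
    ⟨by linarith [Real.pi_pos], le_rfl⟩ hθ.2
  rw [Real.sin_pi_div_two] at hlt
  exact ⟨Real.sin_pos_of_pos_of_lt_pi hθ.1 (by linarith [hθ.1, hθ.2]), hlt⟩

lemma cos_pos_of_mem_Ioo {θ : ℝ} (hθ : θ ∈ Ioo 0 (π / 2)) : 0 < Real.cos θ :=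
  Real.cos_pos_of_mem_Ioo ⟨by linarith [hθ.1, hθ.2], hθ.2⟩

lemma integral_div_sqrt_one_sub_sq (f : ℝ → ℝ) :
    ∫ k in (0 : ℝ)..1, f k / √(1 - k ^ 2) = ∫ θ in Ioo 0 (π / 2), f (Real.sin θ) := by
  have hsubst := integral_Ioo_deriv_mul_comp (f := Real.sin) (f' := Real.cos)
    Real.pi_div_two_pos.le Real.continuous_sin.continuousOn
    (fun θ _ => Real.hasDerivAt_sin θ) (fun θ hθ => (cos_pos_of_mem_Ioo hθ).le)
    (fun k => f k / √(1 - k ^ 2))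
  rw [Real.sin_zero, Real.sin_pi_div_two] at hsubst
  rw [intervalIntegral.integral_of_le zero_le_one, integral_Ioc_eq_integral_Ioo, ← hsubst]
  refine setIntegral_congr_fun measurableSet_Ioo fun θ hθ => ?_
  have hcos := cos_pos_of_mem_Ioo hθ
  simp only [← Real.cos_sq', Real.sqrt_sq hcos.le]
  field_simp

lemma EllK'_pos {k : ℝ} (hk : k ∈ Ioo 0 1) : 0 < EllK' k := by
  apply EllK_pos
  rw [Real.sq_sqrt (one_sub_sq_pos hk).le]
  exact sub_lt_self 1 (pow_pos hk.1 2)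

lemma antitoneOn_EllK'_div_EllK : AntitoneOn (fun k => EllK' k / EllK k) (Ioo 0 1) := by
  intro a ha b hb hab
  have hsq : a ^ 2 ≤ b ^ 2 := pow_le_pow_left₀ ha.1.le hab 2
  have ha1 := one_sub_sq_pos ha
  have hb1 := one_sub_sq_pos hb
  have hnum : EllK' b ≤ EllK' a := by
    apply EllK_le_EllK <;> rw [Real.sq_sqrt ha1.le]
    · rw [Real.sq_sqrt hb1.le]
      exact sub_le_sub_left hsq 1
    · exact sub_lt_self 1 (pow_pos ha.1 2)
  exact div_le_div₀ (EllK'_pos ha).le hnum (EllK_pos (sub_pos.1 ha1))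
    (EllK_le_EllK hsq (sub_pos.1 hb1))

lemma integral_EllK'_div_EllK_sin :
    ∫ θ in Ioo 0 (π / 2), EllK' (Real.sin θ) / EllK (Real.sin θ) =
      ∫ t in Ioi 0, modularAngle t := by
  have hanti : AntitoneOn (fun θ => EllK' (Real.sin θ) / EllK (Real.sin θ)) (Ioo 0 (π / 2)) :=
    fun x hx y hy hxy => antitoneOn_EllK'_div_EllK (sin_mem_Ioo hx) (sin_mem_Ioo hy)
      (Real.sin_le_sin_of_le_of_le_pi_div_two (by linarith [hx.1, hx.2]) hy.2.le hxy)
  have hnonneg : ∀ θ ∈ Ioo 0 (π / 2), 0 ≤ EllK' (Real.sin θ) / EllK (Real.sin θ) := by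
    intro θ hθ
    have hsin := sin_mem_Ioo hθ
    exact (div_pos (EllK'_pos hsin) (EllK_pos (sub_pos.1 (one_sub_sq_pos hsin)))).le
  exact integral_Ioo_eq_integral_Ioi_of_antitoneOn hanti hnonneg
    (fun t ht => modularAngle_mem_Ioo ht) fun t ht => EllK'_div_EllK_sin_modularAngle ht

end Area

end EllipticNome

theorem stmt_7 :
    ∫ k in (0:ℝ)..(1:ℝ), EllK' k / (EllK k * Real.sqrt (1 - k^2))
      = 2 * ∑' n : ℕ, (-1 : ℝ)^n / (2 * (n : ℝ) + 1)^2 := by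
  calc ∫ k in (0 : ℝ)..1, EllK' k / (EllK k * √(1 - k ^ 2))
      = ∫ k in (0 : ℝ)..1, EllK' k / EllK k / √(1 - k ^ 2) := by simp only [div_div]
    _ = ∫ θ in Ioo 0 (π / 2), EllK' (Real.sin θ) / EllK (Real.sin θ) :=
        EllipticNome.integral_div_sqrt_one_sub_sq fun k => EllK' k / EllK k
    _ = ∫ t in Ioi 0, EllipticNome.modularAngle t := EllipticNome.integral_EllK'_div_EllK_sin
    _ = 2 * ∑' n : ℕ, (-1 : ℝ) ^ n / (2 * (n : ℝ) + 1) ^ 2 := EllipticNome.integral_modularAngle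
end

section
/- ∫₀¹ k K(k)² dk = (7/4)ζ(3). -/
open scoped Real
open MeasureTheory

/-!
The half-angle substitution `x = 2u / (1 + u²)` gives
`K(k) = ∫₀¹ 2 / √((1 + u²)² - (2ku)²) du`. Writing `K(k)²` as a double integral and integrating over
`k` first, the inner integral is elementary:
`∫₀¹ k K(k)² dk = ∫₀¹ ∫₀¹ 2 artanh(uv) / (uv) du dv`. Expanding `artanh` in powers of `uv` and
integrating term by term yields `∑ 2 / (2n + 1)³ = 2 (1 - 2⁻³) ζ(3)`.
-/

open Set

lemma hasSum_one_div_odd_cpow {s : ℂ} (hs : 1 < s.re) :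
    HasSum (fun n : ℕ ↦ 1 / (2 * n + 1 : ℂ) ^ s) ((1 - 1 / 2 ^ s) * riemannZeta s) := by
  have hsum : Summable fun n : ℕ ↦ 1 / (n : ℂ) ^ s := Complex.summable_one_div_nat_cpow.mpr hs
  have hzeta : HasSum (fun n : ℕ ↦ 1 / (n : ℂ) ^ s) (riemannZeta s) :=
    zeta_eq_tsum_one_div_nat_cpow hs ▸ hsum.hasSum
  have heven : HasSum (fun n : ℕ ↦ 1 / ((2 * n : ℕ) : ℂ) ^ s) (1 / 2 ^ s * riemannZeta s) := by
    refine (hzeta.mul_left (1 / 2 ^ s)).congr_fun fun n ↦ ?_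
    rw [Nat.cast_mul, Complex.natCast_mul_natCast_cpow, one_div_mul_one_div, Nat.cast_ofNat]
  have hodd : Summable fun n : ℕ ↦ 1 / ((2 * n + 1 : ℕ) : ℂ) ^ s :=
    hsum.comp_injective fun a b h ↦ by simpa using h
  have htsum := (heven.even_add_odd (f := fun n : ℕ ↦ 1 / (n : ℂ) ^ s) hodd.hasSum).unique hzeta
  have hvalue : ∑' n : ℕ, 1 / ((2 * n + 1 : ℕ) : ℂ) ^ s = (1 - 1 / 2 ^ s) * riemannZeta s := by
    linear_combination htsum
  rw [← hvalue]
  simpa using hodd.hasSum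

section Artanh

lemma hasSum_artanh {x : ℝ} (hx : |x| < 1) :
    HasSum (fun n : ℕ ↦ x ^ (2 * n + 1) / (2 * n + 1)) (Real.artanh x) := by
  obtain ⟨hlow, hhigh⟩ := abs_lt.mp hx
  rw [Real.artanh_eq_half_log ⟨hlow.le, hhigh.le⟩,
    Real.log_div (by linarith) (by linarith)]
  refine ((Real.hasSum_log_sub_log_of_abs_lt_one hx).mul_left (1 / 2)).congr_fun fun n ↦ ?_
  ring

lemma hasSum_artanh_div {x : ℝ} (hx : |x| < 1) (hx0 : x ≠ 0) :
    HasSum (fun n : ℕ ↦ 1 / (2 * n + 1) * x ^ (2 * n)) (Real.artanh x / x) := by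
  refine ((hasSum_artanh hx).div_const x).congr_fun fun n ↦ ?_
  rw [pow_succ]
  field_simp

end Artanh

section UnitSquare

lemma integral_zero_one_eq_setIntegral_Ioo (f : ℝ → ℝ) :
    ∫ x in (0 : ℝ)..1, f x = ∫ x in Ioo (0 : ℝ) 1, f x := by
  rw [intervalIntegral.integral_of_le zero_le_one, integral_Ioc_eq_integral_Ioo]

lemma mul_mem_Ioo_zero_one {z : ℝ × ℝ} (hz : z ∈ Ioo (0 : ℝ) 1 ×ˢ Ioo (0 : ℝ) 1) :
    z.1 * z.2 ∈ Ioo (0 : ℝ) 1 :=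
  ⟨mul_pos hz.1.1 hz.2.1, mul_lt_one_of_nonneg_of_lt_one_left hz.1.1.le hz.1.2 hz.2.2.le⟩

lemma integrableOn_unitSquare_mul_pow (n : ℕ) :
    IntegrableOn (fun z : ℝ × ℝ ↦ (z.1 * z.2) ^ n) (Ioo 0 1 ×ˢ Ioo 0 1) := by
  have hcont : Continuous fun z : ℝ × ℝ ↦ (z.1 * z.2) ^ n := by fun_prop
  exact (hcont.continuousOn.integrableOn_compact (isCompact_Icc.prod isCompact_Icc)).mono_set
    (prod_mono Ioo_subset_Icc_self Ioo_subset_Icc_self)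

lemma setIntegral_unitSquare_mul_pow (n : ℕ) :
    ∫ z in Ioo (0 : ℝ) 1 ×ˢ Ioo (0 : ℝ) 1, (z.1 * z.2) ^ n = 1 / (n + 1) ^ 2 := by
  have hpow : ∫ x in Ioo (0 : ℝ) 1, x ^ n = 1 / (n + 1) := by
    rw [← integral_zero_one_eq_setIntegral_Ioo, integral_pow]
    simp
  simp_rw [mul_pow]
  rw [Measure.volume_eq_prod, setIntegral_prod_mul (fun x ↦ x ^ n) (fun x ↦ x ^ n), hpow, ← sq,
    one_div_pow]

lemma hasSum_setIntegral_unitSquare_mul {ι : Type*} [Countable ι] {a : ι → ℝ} {e : ι → ℕ}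
    {g : ℝ → ℝ} (ha : Summable fun i ↦ |a i| / (e i + 1) ^ 2)
    (hg : ∀ x ∈ Ioo (0 : ℝ) 1, HasSum (fun i ↦ a i * x ^ e i) (g x)) :
    HasSum (fun i ↦ a i / (e i + 1) ^ 2)
      (∫ z in Ioo (0 : ℝ) 1 ×ˢ Ioo (0 : ℝ) 1, g (z.1 * z.2)) := by
  have hmeas : MeasurableSet (Ioo (0 : ℝ) 1 ×ˢ Ioo (0 : ℝ) 1) :=
    measurableSet_Ioo.prod measurableSet_Ioo
  have hnorm (i : ι) : ∫ z in Ioo (0 : ℝ) 1 ×ˢ Ioo (0 : ℝ) 1, ‖a i * (z.1 * z.2) ^ e i‖ =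
      |a i| / (e i + 1) ^ 2 := by
    rw [setIntegral_congr_fun hmeas (g := fun z ↦ |a i| * (z.1 * z.2) ^ e i) fun z hz ↦ ?_,
      integral_const_mul, setIntegral_unitSquare_mul_pow, mul_one_div]
    simp only [norm_mul, Real.norm_eq_abs, abs_of_pos (pow_pos (mul_mem_Ioo_zero_one hz).1 _)]
  have hsum := hasSum_integral_of_summable_integral_norm
    (fun i ↦ (integrableOn_unitSquare_mul_pow (e i)).const_mul (a i)) (by simpa only [hnorm])
  rw [setIntegral_congr_fun hmeas fun z hz ↦ (hg _ (mul_mem_Ioo_zero_one hz)).tsum_eq] at hsum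
  simpa only [integral_const_mul, setIntegral_unitSquare_mul_pow, mul_one_div] using hsum

lemma hasSum_setIntegral_artanh_mul_div :
    HasSum (fun n : ℕ ↦ 1 / (2 * n + 1 : ℝ) ^ 3)
      (∫ z in Ioo (0 : ℝ) 1 ×ˢ Ioo (0 : ℝ) 1, Real.artanh (z.1 * z.2) / (z.1 * z.2)) := by
  have hcoeff (n : ℕ) : |1 / (2 * n + 1 : ℝ)| / ((2 * n : ℕ) + 1) ^ 2 =
      1 / ((2 * n + 1 : ℕ) : ℝ) ^ 3 := by
    rw [abs_of_pos (by positivity)]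
    push_cast
    field_simp
  have hsummable : Summable fun n : ℕ ↦ |1 / (2 * n + 1 : ℝ)| / ((2 * n : ℕ) + 1) ^ 2 := by
    simp_rw [hcoeff]
    exact (Real.summable_one_div_nat_pow.mpr (by norm_num : 1 < 3)).comp_injective
      fun a b h ↦ by simpa using h
  refine (hasSum_setIntegral_unitSquare_mul hsummable fun x hx ↦
    hasSum_artanh_div (abs_lt.mpr ⟨by linarith [hx.1], hx.2⟩) hx.1.ne').congr_fun fun n ↦ ?_
  push_cast
  field_simp

lemma integrableOn_artanh_mul_div :
    IntegrableOn (fun z : ℝ × ℝ ↦ Real.artanh (z.1 * z.2) / (z.1 * z.2))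
      (Ioo 0 1 ×ˢ Ioo 0 1) := by
  -- A non-integrable function would have Bochner integral `0`.
  refine .of_integral_ne_zero (ne_of_gt ?_)
  rw [← hasSum_setIntegral_artanh_mul_div.tsum_eq]
  exact hasSum_setIntegral_artanh_mul_div.summable.tsum_pos (fun n ↦ by positivity) 0 (by simp)

end UnitSquare

section HalfAngle

/-- The radical in the integrand of the complete elliptic integral of modulus `k` after the
half-angle substitution `x = 2u / (1 + u²)`; the integrand becomes `2 / halfAngleRadical k u`. -/
noncomputable def halfAngleRadical (k u : ℝ) : ℝ := √((1 + u ^ 2) ^ 2 - (2 * k * u) ^ 2)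

lemma halfAngleRadical_zero_left (u : ℝ) : halfAngleRadical 0 u = 1 + u ^ 2 := by
  rw [halfAngleRadical, mul_zero, zero_mul, zero_pow two_ne_zero, sub_zero,
    Real.sqrt_sq (by positivity)]

lemma halfAngleRadical_one_left {u : ℝ} (hu : u ^ 2 ≤ 1) : halfAngleRadical 1 u = 1 - u ^ 2 := by
  rw [halfAngleRadical, show (1 + u ^ 2) ^ 2 - (2 * 1 * u) ^ 2 = (1 - u ^ 2) ^ 2 by ring,
    Real.sqrt_sq (sub_nonneg.mpr hu)]

lemma halfAngleRadical_pos {k u : ℝ} (hk : k ^ 2 ≤ 1) (hu : u ^ 2 ≠ 1) :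
    0 < halfAngleRadical k u := by
  refine Real.sqrt_pos.mpr ?_
  calc 0 < (1 - u ^ 2) ^ 2 := by have := sub_ne_zero.mpr hu.symm; positivity
    _ = (1 + u ^ 2) ^ 2 - 4 * u ^ 2 * 1 := by ring
    _ ≤ (1 + u ^ 2) ^ 2 - 4 * u ^ 2 * k ^ 2 := by gcongr
    _ = (1 + u ^ 2) ^ 2 - (2 * k * u) ^ 2 := by ring

lemma hasDerivAt_halfAngleRadical {k u : ℝ} (h : 0 < halfAngleRadical k u) :
    HasDerivAt (halfAngleRadical · u) (-(4 * k * u ^ 2) / halfAngleRadical k u) k := by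
  have hinner : HasDerivAt (fun k ↦ (1 + u ^ 2) ^ 2 - (2 * k * u) ^ 2) (-(8 * k * u ^ 2)) k := by
    refine (((((hasDerivAt_id k).const_mul 2).mul_const u).pow 2).const_sub
      ((1 + u ^ 2) ^ 2)).congr_deriv ?_
    simp only [id]
    ring
  refine (hinner.sqrt (Real.sqrt_pos.mp h).ne').congr_deriv ?_
  change _ / (2 * halfAngleRadical k u) = _
  field_simp
  ring

lemma hasDerivAt_log_halfAngleRadical {k u v : ℝ} (hu : 0 < u) (hv : 0 < v)
    (hku : 0 < halfAngleRadical k u) (hkv : 0 < halfAngleRadical k v) :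
    HasDerivAt (fun k ↦ Real.log (v * halfAngleRadical k u + u * halfAngleRadical k v))
      (-(4 * k * u * v) / (halfAngleRadical k u * halfAngleRadical k v)) k := by
  refine ((((hasDerivAt_halfAngleRadical hku).const_mul v).add
    ((hasDerivAt_halfAngleRadical hkv).const_mul u)).log
      (add_pos (mul_pos hv hku) (mul_pos hu hkv)).ne').congr_deriv ?_
  simp only [Pi.add_apply]
  field_simp
  ring

lemma continuousOn_mul_two_div_halfAngleRadical {u v : ℝ} (hu : u ^ 2 ≠ 1) (hv : v ^ 2 ≠ 1) :
    ContinuousOn (fun k ↦ k * (2 / halfAngleRadical k u * (2 / halfAngleRadical k v)))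
      (Icc (-1) 1) := by
  have hcont (w : ℝ) : Continuous (halfAngleRadical · w) := by
    unfold halfAngleRadical
    fun_prop
  have hne {w : ℝ} (hw : w ^ 2 ≠ 1) (k : ℝ) (hk : k ∈ Icc (-1) 1) : halfAngleRadical k w ≠ 0 :=
    (halfAngleRadical_pos (sq_le_one_iff_abs_le_one k |>.mpr (abs_le.mpr hk)) hw).ne'
  exact continuousOn_id.mul ((continuousOn_const.div (hcont u).continuousOn (hne hu)).mul
    (continuousOn_const.div (hcont v).continuousOn (hne hv)))

lemma integral_mul_two_div_halfAngleRadical {u v : ℝ} (hu : u ∈ Ioo (0 : ℝ) 1)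
    (hv : v ∈ Ioo (0 : ℝ) 1) :
    ∫ k in (0 : ℝ)..1, k * (2 / halfAngleRadical k u * (2 / halfAngleRadical k v)) =
      2 * (Real.artanh (u * v) / (u * v)) := by
  obtain ⟨hu0, hu1⟩ := hu
  obtain ⟨hv0, hv1⟩ := hv
  have hu2 : u ^ 2 < 1 := pow_lt_one₀ hu0.le hu1 two_ne_zero
  have hv2 : v ^ 2 < 1 := pow_lt_one₀ hv0.le hv1 two_ne_zero
  have huv : u * v < 1 := mul_lt_one_of_nonneg_of_lt_one_left hu0.le hu1 hv1.le
  have hpos : 0 < u * v := mul_pos hu0 hv0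
  have hderiv (k : ℝ) (hk : k ∈ uIcc 0 1) :
      HasDerivAt (fun k ↦ -1 / (u * v) *
          Real.log (v * halfAngleRadical k u + u * halfAngleRadical k v))
        (k * (2 / halfAngleRadical k u * (2 / halfAngleRadical k v))) k := by
    rw [uIcc_of_le zero_le_one] at hk
    have hk2 : k ^ 2 ≤ 1 := pow_le_one₀ hk.1 hk.2
    have hku := halfAngleRadical_pos hk2 hu2.ne
    have hkv := halfAngleRadical_pos hk2 hv2.ne
    refine ((hasDerivAt_log_halfAngleRadical hu0 hv0 hku hkv).const_mul _).congr_deriv ?_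
    field_simp
    ring
  have hint : IntervalIntegrable
      (fun k ↦ k * (2 / halfAngleRadical k u * (2 / halfAngleRadical k v))) volume 0 1 :=
    ((continuousOn_mul_two_div_halfAngleRadical hu2.ne hv2.ne).mono
      (Icc_subset_Icc_left (by norm_num))).intervalIntegrable_of_Icc zero_le_one
  rw [intervalIntegral.integral_eq_sub_of_hasDerivAt hderiv hint,
    halfAngleRadical_one_left hu2.le, halfAngleRadical_one_left hv2.le,
    halfAngleRadical_zero_left, halfAngleRadical_zero_left,
    show v * (1 - u ^ 2) + u * (1 - v ^ 2) = (u + v) * (1 - u * v) by ring,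
    show v * (1 + u ^ 2) + u * (1 + v ^ 2) = (u + v) * (1 + u * v) by ring,
    Real.log_mul (by positivity) (by linarith), Real.log_mul (by positivity) (by positivity),
    Real.artanh_eq_half_log ⟨by linarith, huv.le⟩, Real.log_div (by positivity) (by linarith)]
  ring

lemma measurable_uncurry_mul_two_div_halfAngleRadical :
    Measurable (Function.uncurry fun (k : ℝ) (z : ℝ × ℝ) ↦
      k * (2 / halfAngleRadical k z.1 * (2 / halfAngleRadical k z.2))) := by
  unfold halfAngleRadical Function.uncurry
  fun_prop

lemma integrable_mul_two_div_halfAngleRadical :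
    Integrable (Function.uncurry fun (k : ℝ) (z : ℝ × ℝ) ↦
        k * (2 / halfAngleRadical k z.1 * (2 / halfAngleRadical k z.2)))
      ((volume.restrict (Ioo 0 1)).prod (volume.restrict (Ioo 0 1 ×ˢ Ioo 0 1))) := by
  have hmem : ∀ᵐ z : ℝ × ℝ ∂volume.restrict (Ioo 0 1 ×ˢ Ioo 0 1), z ∈ Ioo 0 1 ×ˢ Ioo 0 1 :=
    ae_restrict_mem (measurableSet_Ioo.prod measurableSet_Ioo)
  refine (integrable_prod_iff'
    measurable_uncurry_mul_two_div_halfAngleRadical.aestronglyMeasurable).mpr ⟨?_, ?_⟩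
  · filter_upwards [hmem] with z hz
    refine ((continuousOn_mul_two_div_halfAngleRadical
      (pow_lt_one₀ hz.1.1.le hz.1.2 two_ne_zero).ne
      (pow_lt_one₀ hz.2.1.le hz.2.2 two_ne_zero).ne).integrableOn_compact isCompact_Icc).mono_set ?_
    exact Ioo_subset_Icc_self.trans (Icc_subset_Icc_left (by norm_num))
  · refine (integrableOn_artanh_mul_div.const_mul 2).congr ?_
    filter_upwards [hmem] with z hz
    rw [← integral_mul_two_div_halfAngleRadical hz.1 hz.2, integral_zero_one_eq_setIntegral_Ioo]
    refine setIntegral_congr_fun measurableSet_Ioo fun k hk ↦ ?_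
    exact (Real.norm_of_nonneg (mul_nonneg hk.1.le (by unfold halfAngleRadical; positivity))).symm

end HalfAngle

section EllK

lemma hasDerivAt_two_mul_div_one_add_sq (u : ℝ) :
    HasDerivAt (fun u : ℝ ↦ 2 * u / (1 + u ^ 2)) (2 * (1 - u ^ 2) / (1 + u ^ 2) ^ 2) u := by
  refine (((hasDerivAt_id u).const_mul 2).div ((hasDerivAt_pow 2 u).const_add 1)
    (by positivity)).congr_deriv ?_
  simp only [id]
  ring

lemma strictMonoOn_two_mul_div_one_add_sq :
    StrictMonoOn (fun u : ℝ ↦ 2 * u / (1 + u ^ 2)) (Icc (-1) 1) := by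
  refine strictMonoOn_of_deriv_pos (convex_Icc _ _)
    (HasDerivAt.continuousOn fun u _ ↦ hasDerivAt_two_mul_div_one_add_sq u) fun u hu ↦ ?_
  rw [interior_Icc] at hu
  have : 0 < 1 - u ^ 2 := sub_pos.mpr ((sq_lt_one_iff_abs_lt_one u).mpr (abs_lt.mpr hu))
  rw [(hasDerivAt_two_mul_div_one_add_sq u).deriv]
  positivity

lemma image_two_mul_div_one_add_sq :
    (fun u : ℝ ↦ 2 * u / (1 + u ^ 2)) '' Ioo 0 1 = Ioo 0 1 := by
  have hmono := strictMonoOn_two_mul_div_one_add_sq.mono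
    (Icc_subset_Icc_left (by norm_num : (-1 : ℝ) ≤ 0))
  have hcont : ContinuousOn (fun u : ℝ ↦ 2 * u / (1 + u ^ 2)) (Icc 0 1) :=
    HasDerivAt.continuousOn fun u _ ↦ hasDerivAt_two_mul_div_one_add_sq u
  have h := hmono.mapsTo_Ioo.image_subset.antisymm (intermediate_value_Ioo zero_le_one hcont)
  norm_num at h
  exact h

lemma EllK_eq_integral_halfAngleRadical (k : ℝ) :
    EllK k = ∫ u in Ioo (0 : ℝ) 1, 2 / halfAngleRadical k u := by
  have hmono := strictMonoOn_two_mul_div_one_add_sq.monotoneOn.mono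
    (Ioo_subset_Icc_self.trans (Icc_subset_Icc_left (by norm_num : (-1 : ℝ) ≤ 0)))
  have hsubst := integral_image_eq_integral_deriv_smul_of_monotoneOn measurableSet_Ioo
    (fun u _ ↦ (hasDerivAt_two_mul_div_one_add_sq u).hasDerivWithinAt) hmono
    (fun x ↦ 1 / √((1 - x ^ 2) * (1 - k ^ 2 * x ^ 2)))
  rw [image_two_mul_div_one_add_sq] at hsubst
  rw [EllK, integral_zero_one_eq_setIntegral_Ioo, hsubst]
  refine setIntegral_congr_fun measurableSet_Ioo fun u hu ↦ ?_
  have hu2 : 0 < 1 - u ^ 2 := sub_pos.mpr (pow_lt_one₀ hu.1.le hu.2 two_ne_zero)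
  have hradicand : (1 - (2 * u / (1 + u ^ 2)) ^ 2) * (1 - k ^ 2 * (2 * u / (1 + u ^ 2)) ^ 2) =
      ((1 - u ^ 2) / (1 + u ^ 2) ^ 2) ^ 2 * ((1 + u ^ 2) ^ 2 - (2 * k * u) ^ 2) := by
    field_simp
    ring
  simp only [smul_eq_mul]
  rw [hradicand, Real.sqrt_mul (sq_nonneg _), Real.sqrt_sq (by positivity), halfAngleRadical]
  field_simp

lemma mul_EllK_sq_eq_setIntegral (k : ℝ) :
    k * EllK k ^ 2 = ∫ z in Ioo (0 : ℝ) 1 ×ˢ Ioo (0 : ℝ) 1,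
      k * (2 / halfAngleRadical k z.1 * (2 / halfAngleRadical k z.2)) := by
  rw [integral_const_mul, Measure.volume_eq_prod, setIntegral_prod_mul
    (fun u ↦ 2 / halfAngleRadical k u) (fun u ↦ 2 / halfAngleRadical k u),
    ← EllK_eq_integral_halfAngleRadical, sq]

lemma integral_mul_EllK_sq :
    ∫ k in (0 : ℝ)..1, k * EllK k ^ 2 =
      2 * ∫ z in Ioo (0 : ℝ) 1 ×ˢ Ioo (0 : ℝ) 1, Real.artanh (z.1 * z.2) / (z.1 * z.2) := by
  simp_rw [mul_EllK_sq_eq_setIntegral]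
  rw [integral_zero_one_eq_setIntegral_Ioo,
    integral_integral_swap integrable_mul_two_div_halfAngleRadical, ← integral_const_mul]
  refine setIntegral_congr_fun (measurableSet_Ioo.prod measurableSet_Ioo) fun z hz ↦ ?_
  rw [← integral_mul_two_div_halfAngleRadical hz.1 hz.2, integral_zero_one_eq_setIntegral_Ioo]

end EllK

theorem stmt_8 :
    ((∫ k in (0:ℝ)..(1:ℝ), k * (EllK k)^2 : ℝ) : ℂ) = 7/4 * riemannZeta 3 := by
  have hintegral : HasSum (fun n : ℕ ↦ 1 / (2 * n + 1 : ℂ) ^ 3)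
      ((∫ z in Ioo (0 : ℝ) 1 ×ˢ Ioo (0 : ℝ) 1, Real.artanh (z.1 * z.2) / (z.1 * z.2) : ℝ) : ℂ) := by
    simpa using Complex.ofRealCLM.hasSum hasSum_setIntegral_artanh_mul_div
  have hzeta : HasSum (fun n : ℕ ↦ 1 / (2 * n + 1 : ℂ) ^ 3) (7 / 8 * riemannZeta 3) := by
    convert hasSum_one_div_odd_cpow (s := 3) (by norm_num) using 2 <;> norm_num
  rw [integral_mul_EllK_sq, Complex.ofReal_mul, hintegral.unique hzeta]
  push_cast
  ring
end

section
/- ∫₀¹ k (K'(k)³/K(k)) dk = (π³ log 2)/8. -/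
open scoped Real
open MeasureTheory

/-!
Write `m = k ^ 2`, `K(m)` for the complete elliptic integral and `y = K(1 - m) / K(m)`. For the
lattice `ℤ + iyℤ` the function `℘` is real on the real axis; inverting it there, and likewise for
the rotated lattice, expresses both half periods as complete elliptic integrals. So every `y > 0`
comes from exactly one `m` in `(0, 1)`, and the product `(e₁ - e₂) (e₂ - e₃)` of differences of the
half period values of `℘` is `16 m (1 - m) K(m) ^ 4`. By `℘'' = 6 ℘ ^ 2 - g₂ / 2` it is also a
multiple of `∑ (z - l)⁻⁴` over the lattice at `z = (1 + iy) / 2`, and summing over the rows turns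
this into a Lambert series in `exp (-π y)`. By Legendre's relation
`dy/dm = -π / (4 m (1 - m) K(m) ^ 2)`, so `K(1 - m) ^ 3 / K(m) dm` is a multiple of `y ^ 3` times
the Lambert series `dy`, and integrating termwise leaves `∑ (2 n + 1)⁻⁴ = π ^ 4 / 96` times one
elementary integral, which evaluates to `6 log 2`.
-/

section EllipticIntegrals

open Set Filter Topology Real

theorem hasDerivAt_intervalIntegral_of_continuousOn {F F' : ℝ → ℝ → ℝ} {U : Set ℝ} {a b x₀ : ℝ}
    (hU : U ∈ 𝓝 x₀) (hF : ∀ x ∈ U, ContinuousOn (F x) (uIcc a b))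
    (hF' : ContinuousOn (Function.uncurry F') (U ×ˢ uIcc a b))
    (hderiv : ∀ x ∈ U, ∀ t ∈ uIcc a b, HasDerivAt (F · t) (F' x t) x) :
    HasDerivAt (fun x => ∫ t in a..b, F x t) (∫ t in a..b, F' x₀ t) x₀ := by
  obtain ⟨r, hr, hrU⟩ := Metric.nhds_basis_closedBall.mem_iff.1 hU
  have hx₀ : x₀ ∈ U := mem_of_mem_nhds hU
  obtain ⟨C, hC⟩ := ((isCompact_closedBall x₀ r).prod isCompact_uIcc).exists_bound_of_continuousOn
    (hF'.mono (prod_mono hrU subset_rfl))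
  have hF'_x₀ : ContinuousOn (F' x₀) (uIcc a b) :=
    hF'.comp (Continuous.prodMk_right x₀).continuousOn fun t ht => ⟨hx₀, ht⟩
  refine (intervalIntegral.hasDerivAt_integral_of_dominated_loc_of_deriv_le (bound := fun _ => C)
    (Metric.closedBall_mem_nhds x₀ hr) ?_ (hF x₀ hx₀).intervalIntegrable ?_ ?_
    intervalIntegrable_const ?_).2
  · filter_upwards [hU] with x hx
    exact ((hF x hx).mono uIoc_subset_uIcc).aestronglyMeasurable measurableSet_uIoc
  · exact (hF'_x₀.mono uIoc_subset_uIcc).aestronglyMeasurable measurableSet_uIoc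
  · exact .of_forall fun t ht x hx => hC (x, t) ⟨hx, uIoc_subset_uIcc ht⟩
  · exact .of_forall fun t ht x hx => hderiv x (hrU hx) t (uIoc_subset_uIcc ht)

/-- The family `∫ (1 - m sin² θ) ^ s dθ` over a quarter period, as a function of the parameter
`m = k²`; the complete elliptic integrals are the cases `s = -1/2` and `s = 1/2`. -/
noncomputable def ellipticIntegral (s m : ℝ) : ℝ :=
  ∫ θ in 0..π / 2, (1 - m * sin θ ^ 2) ^ s

/-- The complete elliptic integral of the first kind as a function of the parameter `m = k²`. -/
noncomputable def ellipticK (m : ℝ) : ℝ := ellipticIntegral (-1 / 2) m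

/-- The complete elliptic integral of the second kind as a function of the parameter `m = k²`. -/
noncomputable def ellipticE (m : ℝ) : ℝ := ellipticIntegral (1 / 2) m

variable {m : ℝ}

lemma min_le_one_sub_mul_sin_sq (m θ : ℝ) : min 1 (1 - m) ≤ 1 - m * sin θ ^ 2 := by
  have := sq_nonneg (sin θ)
  have := sin_sq_le_one θ
  rcases le_or_gt m 0 with h | h
  · exact (min_le_left _ _).trans (by nlinarith)
  · exact (min_le_right _ _).trans (by nlinarith)

lemma one_sub_mul_sin_sq_pos (hm : m < 1) (θ : ℝ) : 0 < 1 - m * sin θ ^ 2 :=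
  (lt_min one_pos (sub_pos.2 hm)).trans_le (min_le_one_sub_mul_sin_sq m θ)

lemma continuous_one_sub_mul_sin_sq_rpow (hm : m < 1) (s : ℝ) :
    Continuous fun θ => (1 - m * sin θ ^ 2) ^ s :=
  Continuous.rpow_const (by fun_prop) fun θ => .inl (one_sub_mul_sin_sq_pos hm θ).ne'

lemma intervalIntegrable_one_sub_mul_sin_sq_rpow (hm : m < 1) (s a b : ℝ) :
    IntervalIntegrable (fun θ => (1 - m * sin θ ^ 2) ^ s) volume a b :=
  (continuous_one_sub_mul_sin_sq_rpow hm s).intervalIntegrable a b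

lemma ellipticK_pos (hm : m < 1) : 0 < ellipticK m :=
  intervalIntegral.intervalIntegral_pos_of_pos
    (intervalIntegrable_one_sub_mul_sin_sq_rpow hm _ _ _)
    (fun θ => rpow_pos_of_pos (one_sub_mul_sin_sq_pos hm θ) _) (by positivity)

lemma ellipticIntegral_zero_right (s : ℝ) : ellipticIntegral s 0 = π / 2 := by
  simp [ellipticIntegral]

lemma ellipticE_one : ellipticE 1 = 1 := by
  have integral_cos_quarter : ∫ θ in (0:ℝ)..π / 2, cos θ = 1 := by simp [integral_cos]
  refine Eq.trans ?_ integral_cos_quarter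
  refine intervalIntegral.integral_congr fun θ hθ => ?_
  rw [uIcc_of_le (by positivity)] at hθ
  have hcos : 0 ≤ cos θ := cos_nonneg_of_mem_Icc ⟨by linarith [hθ.1, pi_pos], hθ.2⟩
  simp only [one_mul, ← cos_sq', ← sqrt_eq_rpow, sqrt_sq hcos]

lemma continuous_ellipticE : Continuous ellipticE :=
  intervalIntegral.continuous_parametric_intervalIntegral_of_continuous'
    (Continuous.rpow_const (by fun_prop) fun _ => .inr (by norm_num)) _ _

lemma ellipticK_le_div_sqrt (h₀ : 0 ≤ m) (h₁ : m < 1) : ellipticK m ≤ π / 2 / √(1 - m) := by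
  have hm : 0 < 1 - m := sub_pos.2 h₁
  have integrand_le (θ : ℝ) : (1 - m * sin θ ^ 2) ^ (-1 / 2 : ℝ) ≤ (1 - m) ^ (-1 / 2 : ℝ) :=
    rpow_le_rpow_of_nonpos hm
      ((le_min (by linarith) le_rfl).trans (min_le_one_sub_mul_sin_sq m θ)) (by norm_num)
  calc ellipticK m ≤ ∫ _ in (0:ℝ)..π / 2, (1 - m) ^ (-1 / 2 : ℝ) :=
        intervalIntegral.integral_mono (by positivity)
          (intervalIntegrable_one_sub_mul_sin_sq_rpow h₁ _ _ _) intervalIntegrable_const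
          integrand_le
    _ = π / 2 / √(1 - m) := by
        rw [intervalIntegral.integral_const, smul_eq_mul, sub_zero, neg_div, rpow_neg hm.le,
          ← sqrt_eq_rpow, ← div_eq_mul_inv]

lemma hasDerivAt_ellipticIntegral (s : ℝ) (hm : m < 1) :
    HasDerivAt (ellipticIntegral s)
      (∫ θ in 0..π / 2, -sin θ ^ 2 * s * (1 - m * sin θ ^ 2) ^ (s - 1)) m := by
  refine hasDerivAt_intervalIntegral_of_continuousOn (Iio_mem_nhds hm)
    (F' := fun m θ => -sin θ ^ 2 * s * (1 - m * sin θ ^ 2) ^ (s - 1))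
    (fun x hx => (continuous_one_sub_mul_sin_sq_rpow hx s).continuousOn) ?_ fun x hx θ _ => ?_
  · refine ContinuousOn.mul (by fun_prop) (ContinuousOn.rpow_const (by fun_prop) ?_)
    exact fun p hp => .inl (one_sub_mul_sin_sq_pos hp.1 p.2).ne'
  · have inner_deriv : HasDerivAt (fun x => 1 - x * sin θ ^ 2) (-sin θ ^ 2) x := by
      simpa using ((hasDerivAt_id x).mul_const (sin θ ^ 2)).const_sub 1
    exact inner_deriv.rpow_const (.inl (one_sub_mul_sin_sq_pos hx θ).ne')

lemma hasDerivAt_ellipticIntegral_of_ne_zero (s : ℝ) (h₀ : m ≠ 0) (h₁ : m < 1) :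
    HasDerivAt (ellipticIntegral s)
      (s / m * (ellipticIntegral s m - ellipticIntegral (s - 1) m)) m := by
  refine (hasDerivAt_ellipticIntegral s h₁).congr_deriv ?_
  rw [ellipticIntegral, ellipticIntegral, ← intervalIntegral.integral_sub
      (intervalIntegrable_one_sub_mul_sin_sq_rpow h₁ _ _ _)
      (intervalIntegrable_one_sub_mul_sin_sq_rpow h₁ _ _ _),
    ← intervalIntegral.integral_const_mul]
  refine intervalIntegral.integral_congr fun θ _ => ?_
  have hpos := one_sub_mul_sin_sq_pos h₁ θ
  simp only [rpow_sub_one hpos.ne']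
  rw [div_mul_eq_mul_div, eq_div_iff h₀]
  linear_combination s * (1 - m * sin θ ^ 2) ^ s * mul_inv_cancel₀ hpos.ne'

/-- The integral of `d/dθ (sin θ cos θ (1 - m sin² θ) ^ s)` over a quarter period vanishes. -/
lemma ellipticIntegral_contiguous (s : ℝ) (hm : m < 1) :
    (2 * s + 2) * ellipticIntegral (s + 1) m + (2 * s + 1) * (m - 2) * ellipticIntegral s m
      + 2 * s * (1 - m) * ellipticIntegral (s - 1) m = 0 := by
  have hderiv (θ : ℝ) : HasDerivAt (fun θ => m * (sin θ * cos θ * (1 - m * sin θ ^ 2) ^ s))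
      ((2 * s + 2) * (1 - m * sin θ ^ 2) ^ (s + 1)
        + (2 * s + 1) * (m - 2) * (1 - m * sin θ ^ 2) ^ s
        + 2 * s * (1 - m) * (1 - m * sin θ ^ 2) ^ (s - 1)) θ := by
    have hpos := one_sub_mul_sin_sq_pos hm θ
    have inner_deriv := ((((hasDerivAt_sin θ).pow 2).const_mul m).const_sub 1).rpow_const
      (p := s) (.inl hpos.ne')
    refine ((((hasDerivAt_sin θ).mul (hasDerivAt_cos θ)).mul inner_deriv).const_mul m).congr_deriv
      ?_
    simp only [rpow_sub_one hpos.ne', rpow_add_one hpos.ne', Pi.mul_apply, Pi.pow_apply]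
    field_simp
    rw [cos_sq']
    ring
  have integrable (c t : ℝ) :
      IntervalIntegrable (fun θ => c * (1 - m * sin θ ^ 2) ^ t) volume 0 (π / 2) :=
    (intervalIntegrable_one_sub_mul_sin_sq_rpow hm _ _ _).const_mul c
  have h := intervalIntegral.integral_eq_sub_of_hasDerivAt (fun θ _ => hderiv θ)
    (((integrable _ _).add (integrable _ _)).add (integrable _ _))
  rw [intervalIntegral.integral_add ((integrable _ _).add (integrable _ _)) (integrable _ _),
    intervalIntegral.integral_add (integrable _ _) (integrable _ _)] at h
  simpa [ellipticIntegral] using h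

lemma hasDerivAt_ellipticK (h₀ : m ≠ 0) (h₁ : m < 1) :
    HasDerivAt ellipticK ((ellipticE m - (1 - m) * ellipticK m) / (2 * m * (1 - m))) m := by
  have hE : ellipticE m = (1 - m) * ellipticIntegral (-1 / 2 - 1) m := by
    have h := ellipticIntegral_contiguous (-1 / 2) h₁
    norm_num at h
    rw [ellipticE]
    norm_num
    linarith
  refine (hasDerivAt_ellipticIntegral_of_ne_zero (-1 / 2) h₀ h₁).congr_deriv ?_
  have : 1 - m ≠ 0 := (sub_pos.2 h₁).ne'
  rw [hE, ellipticK]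
  field_simp
  ring

lemma hasDerivAt_ellipticE (h₀ : m ≠ 0) (h₁ : m < 1) :
    HasDerivAt ellipticE ((ellipticE m - ellipticK m) / (2 * m)) m := by
  refine (hasDerivAt_ellipticIntegral_of_ne_zero (1 / 2) h₀ h₁).congr_deriv ?_
  rw [show (1 / 2 - 1 : ℝ) = -1 / 2 by norm_num, ← ellipticE, ← ellipticK]
  field_simp

lemma hasDerivAt_ellipticK_one_sub (h₀ : 0 < m) (h₁ : m ≠ 1) :
    HasDerivAt (fun m => ellipticK (1 - m))
      (-((ellipticE (1 - m) - m * ellipticK (1 - m)) / (2 * (1 - m) * m))) m := by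
  have h := hasDerivAt_ellipticK (m := 1 - m) (sub_ne_zero.2 h₁.symm) (by linarith)
  simpa using h.comp_const_sub 1 m

lemma hasDerivAt_ellipticE_one_sub (h₀ : 0 < m) (h₁ : m ≠ 1) :
    HasDerivAt (fun m => ellipticE (1 - m))
      (-((ellipticE (1 - m) - ellipticK (1 - m)) / (2 * (1 - m)))) m :=
  (hasDerivAt_ellipticE (m := 1 - m) (sub_ne_zero.2 h₁.symm) (by linarith)).comp_const_sub 1 m

lemma tendsto_ellipticE_sub_ellipticK_mul_ellipticK_one_sub :
    Tendsto (fun m => (ellipticE m - ellipticK m) * ellipticK (1 - m)) (𝓝[>] 0) (𝓝 0) := by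
  have E_sub_K_isBigO : (fun m => ellipticE m - ellipticK m) =O[𝓝[>] 0] fun m => m := by
    have hdiff : DifferentiableAt ℝ (fun m => ellipticE m - ellipticK m) 0 :=
      (hasDerivAt_ellipticIntegral _ one_pos).differentiableAt.sub
        (hasDerivAt_ellipticIntegral _ one_pos).differentiableAt
    simpa [ellipticE, ellipticK, ellipticIntegral_zero_right] using
      hdiff.isBigO_sub.mono nhdsWithin_le_nhds
  have K_isBigO : (fun m => ellipticK (1 - m)) =O[𝓝[>] 0] fun m => (√m)⁻¹ := by
    refine .of_bound (π / 2) ?_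
    filter_upwards [Ioo_mem_nhdsGT one_pos] with m hm
    rw [norm_of_nonneg (ellipticK_pos (by linarith [hm.1])).le, norm_of_nonneg (by positivity),
      ← div_eq_mul_inv]
    simpa using ellipticK_le_div_sqrt (m := 1 - m) (by linarith [hm.2]) (by linarith [hm.1])
  refine (E_sub_K_isBigO.mul K_isBigO).trans_tendsto ?_
  have sqrt_tendsto : Tendsto (fun m => √m) (𝓝[>] 0) (𝓝 0) := by
    simpa using (continuous_sqrt.tendsto 0).mono_left nhdsWithin_le_nhds
  exact sqrt_tendsto.congr fun m => by rw [← div_eq_mul_inv, div_sqrt]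

theorem ellipticIntegral_legendre_relation (h₀ : 0 < m) (h₁ : m < 1) :
    ellipticE m * ellipticK (1 - m) + ellipticE (1 - m) * ellipticK m
      - ellipticK m * ellipticK (1 - m) = π / 2 := by
  set L : ℝ → ℝ := fun m => ellipticE m * ellipticK (1 - m) + ellipticE (1 - m) * ellipticK m
    - ellipticK m * ellipticK (1 - m) with hL
  have hasDerivAt_L (x : ℝ) (hx : x ∈ Ioo (0:ℝ) 1) : HasDerivAt L 0 x := by
    have hK := hasDerivAt_ellipticK hx.1.ne' hx.2
    have hE := hasDerivAt_ellipticE hx.1.ne' hx.2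
    have hK' := hasDerivAt_ellipticK_one_sub hx.1 hx.2.ne
    have hE' := hasDerivAt_ellipticE_one_sub hx.1 hx.2.ne
    refine (((hE.mul hK').add (hE'.mul hK)).sub (hK.mul hK')).congr_deriv ?_
    have := hx.1.ne'
    have := (sub_pos.2 hx.2).ne'
    field_simp
    ring
  have L_const (x : ℝ) (hx : x ∈ Ioo (0:ℝ) 1) : L x = L m :=
    isOpen_Ioo.is_const_of_deriv_eq_zero isPreconnected_Ioo
      (fun y hy => (hasDerivAt_L y hy).differentiableAt.differentiableWithinAt)
      (fun y hy => (hasDerivAt_L y hy).deriv) hx ⟨h₀, h₁⟩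
  have L_tendsto_self : Tendsto L (𝓝[>] 0) (𝓝 (L m)) := by
    refine tendsto_const_nhds.congr' ?_
    filter_upwards [Ioo_mem_nhdsGT one_pos] with x hx using (L_const x hx).symm
  have L_tendsto_pi_div_two : Tendsto L (𝓝[>] 0) (𝓝 (π / 2)) := by
    have E_tendsto : Tendsto (fun x => ellipticE (1 - x)) (𝓝[>] 0) (𝓝 1) := by
      have := (continuous_ellipticE.comp (continuous_sub_left 1)).tendsto 0
      simpa [Function.comp_def, ellipticE_one] using this.mono_left nhdsWithin_le_nhds
    have K_tendsto : Tendsto ellipticK (𝓝[>] 0) (𝓝 (π / 2)) := by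
      have := (hasDerivAt_ellipticIntegral (-1 / 2) one_pos).continuousAt.tendsto
      exact (ellipticIntegral_zero_right _ ▸ this).mono_left nhdsWithin_le_nhds
    have h := tendsto_ellipticE_sub_ellipticK_mul_ellipticK_one_sub.add (E_tendsto.mul K_tendsto)
    rw [zero_add, one_mul] at h
    exact h.congr fun x => by simp only [hL]; ring
  exact tendsto_nhds_unique L_tendsto_self L_tendsto_pi_div_two

lemma hasDerivAt_ellipticK_ratio (h₀ : 0 < m) (h₁ : m < 1) :
    HasDerivAt (fun m => ellipticK (1 - m) / ellipticK m)
      (-(π / (4 * m * (1 - m) * ellipticK m ^ 2))) m := by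
  have hK := ellipticK_pos h₁
  have := (sub_pos.2 h₁).ne'
  refine ((hasDerivAt_ellipticK_one_sub h₀ h₁.ne).div (hasDerivAt_ellipticK h₀.ne' h₁)
    hK.ne').congr_deriv ?_
  field_simp
  linear_combination (-4) * ellipticIntegral_legendre_relation h₀ h₁

lemma strictAntiOn_ellipticK_ratio :
    StrictAntiOn (fun m => ellipticK (1 - m) / ellipticK m) (Ioo 0 1) := by
  refine strictAntiOn_of_deriv_neg (convex_Ioo 0 1)
    (fun m hm => (hasDerivAt_ellipticK_ratio hm.1 hm.2).continuousAt.continuousWithinAt) ?_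
  rw [interior_Ioo]
  intro m hm
  have := hm.1
  have := sub_pos.2 hm.2
  have := ellipticK_pos hm.2
  rw [(hasDerivAt_ellipticK_ratio hm.1 hm.2).deriv, neg_lt_zero]
  positivity

lemma image_sin_Ioo : sin '' Ioo 0 (π / 2) = Ioo 0 1 := by
  refine Subset.antisymm ?_ fun x hx => ?_
  · rintro _ ⟨θ, ⟨h₀, h₁⟩, rfl⟩
    refine ⟨sin_pos_of_pos_of_lt_pi h₀ (by linarith), ?_⟩
    simpa using sin_lt_sin_of_lt_of_le_pi_div_two (by linarith) le_rfl h₁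
  · exact ⟨arcsin x, ⟨arcsin_pos.2 hx.1, arcsin_lt_pi_div_two.2 hx.2⟩,
      sin_arcsin (by linarith [hx.1]) hx.2.le⟩

lemma ellipticK_eq_integral_Ioo (hm : m < 1) :
    ellipticK m = ∫ x in Ioo (0:ℝ) 1, 1 / √((1 - x ^ 2) * (1 - m * x ^ 2)) := by
  have sin_injOn : InjOn sin (Ioo 0 (π / 2)) :=
    injOn_sin.mono (Ioo_subset_Icc_self.trans (Icc_subset_Icc (by linarith [pi_pos]) le_rfl))
  rw [← image_sin_Ioo, integral_image_eq_integral_abs_deriv_smul measurableSet_Ioo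
    (fun θ _ => (hasDerivAt_sin θ).hasDerivWithinAt) sin_injOn, ellipticK, ellipticIntegral,
    intervalIntegral.integral_of_le (by positivity), integral_Ioc_eq_integral_Ioo]
  refine setIntegral_congr_fun measurableSet_Ioo fun θ hθ => ?_
  have hcos : 0 < cos θ := cos_pos_of_mem_Ioo ⟨by linarith [hθ.1, pi_pos], hθ.2⟩
  have hpos := one_sub_mul_sin_sq_pos hm θ
  simp only [smul_eq_mul, ← cos_sq', abs_of_pos hcos]
  rw [sqrt_mul (sq_nonneg _), sqrt_sq hcos.le, neg_div, rpow_neg hpos.le, ← sqrt_eq_rpow]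
  field_simp

theorem EllK_eq_ellipticK {k : ℝ} (hk : k ^ 2 < 1) : EllK k = ellipticK (k ^ 2) := by
  rw [EllK, ellipticK_eq_integral_Ioo hk, intervalIntegral.integral_of_le zero_le_one,
    integral_Ioc_eq_integral_Ioo]

end EllipticIntegrals

section WeierstrassP

open Filter Topology
open scoped PeriodPair

lemma eventually_eq_zero_of_deriv_deriv_eq_mul {𝕜 : Type*} [NontriviallyNormedField 𝕜]
    [CompleteSpace 𝕜] [CharZero 𝕜] {d g : 𝕜 → 𝕜} {z₀ : 𝕜} (hd : AnalyticAt 𝕜 d z₀)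
    (hg : AnalyticAt 𝕜 g z₀) (hdd : deriv (deriv d) =ᶠ[𝓝 z₀] g * d) (h₀ : d z₀ = 0)
    (h₁ : deriv d z₀ = 0) : ∀ᶠ z in 𝓝 z₀, d z = 0 := by
  have order_d : analyticOrderAt (deriv d) z₀ + 1 = analyticOrderAt d z₀ := by
    simpa [h₀] using hd.analyticOrderAt_deriv_add_one
  have order_deriv : analyticOrderAt (deriv (deriv d)) z₀ + 1 = analyticOrderAt (deriv d) z₀ := by
    simpa [h₁] using hd.deriv.analyticOrderAt_deriv_add_one
  rw [analyticOrderAt_congr hdd, analyticOrderAt_mul hg hd] at order_deriv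
  rw [← analyticOrderAt_eq_top]
  generalize analyticOrderAt d z₀ = n at *
  by_contra hn
  lift n to ℕ using hn
  have hle : (n : ℕ∞) + 1 + 1 ≤ n := calc
    (n : ℕ∞) + 1 + 1 ≤ analyticOrderAt g z₀ + n + 1 + 1 := by gcongr; exact le_add_self
    _ = n := by rw [order_deriv, order_d]
  norm_cast at hle
  omega

variable (L : PeriodPair)

lemma countable_lattice : (L.lattice : Set ℂ).Countable :=
  countable_of_Lindelof_of_discrete (X := L.lattice)

lemma isPreconnected_compl_of_countable {S : Set ℂ} (hS : S.Countable) : IsPreconnected Sᶜ :=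
  (hS.isConnected_compl_of_one_lt_rank (by simp)).isPreconnected

lemma eventually_nhds_notMem_lattice {z : ℂ} (hz : z ∉ L.lattice) :
    ∀ᶠ w in 𝓝 z, w ∉ L.lattice :=
  L.isClosed_lattice.isOpen_compl.mem_nhds hz

lemma eventually_nhdsNE_zero_notMem_lattice : ∀ᶠ z in 𝓝[≠] (0 : ℂ), z ∉ L.lattice := by
  filter_upwards [self_mem_nhdsWithin,
    mem_nhdsWithin_of_mem_nhds (L.compl_lattice_sdiff_singleton_mem_nhds 0)] with z h₀ h₁ h₂
  exact h₁ ⟨h₂, h₀⟩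

lemma tendsto_sq_mul_weierstrassP : Tendsto (fun z => z ^ 2 * ℘[L] z) (𝓝[≠] 0) (𝓝 1) := by
  have regular_part : Tendsto (fun z => z ^ 2 * L.weierstrassPExcept 0 z + 1) (𝓝 0) (𝓝 1) := by
    have : ContinuousAt (fun z => z ^ 2 * L.weierstrassPExcept 0 z + 1) 0 := by
      have := (L.analyticAt_weierstrassPExcept 0).continuousAt
      fun_prop
    simpa using this.tendsto
  refine (regular_part.mono_left nhdsWithin_le_nhds).congr' ?_
  filter_upwards [self_mem_nhdsWithin] with z (hz : z ≠ 0)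
  simpa [hz] using (L.ite_eq_one_sub_sq_mul_weierstrassP 0 (zero_mem _) z).symm

lemma not_eventually_weierstrassP_eq_of_continuousAt {f : ℂ → ℂ} (hf : ContinuousAt f 0) :
    ¬ ∀ᶠ z in 𝓝[≠] 0, ℘[L] z = f z := by
  intro h
  have tendsto_zero : Tendsto (fun z => z ^ 2 * f z) (𝓝[≠] 0) (𝓝 0) := by
    have : ContinuousAt (fun z => z ^ 2 * f z) 0 := by fun_prop
    simpa using this.tendsto.mono_left nhdsWithin_le_nhds
  refine zero_ne_one (tendsto_nhds_unique tendsto_zero ((tendsto_sq_mul_weierstrassP L).congr' ?_))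
  filter_upwards [h] with z hz
  rw [hz]

lemma hasDerivAt_weierstrassP {z : ℂ} (hz : z ∉ L.lattice) : HasDerivAt ℘[L] (℘'[L] z) z :=
  L.deriv_weierstrassP ▸ (L.analyticOnNhd_weierstrassP z hz).differentiableAt.hasDerivAt

lemma derivWeierstrassP_mul_deriv_relation {z : ℂ} (hz : z ∉ L.lattice) :
    (deriv ℘'[L] z - (6 * ℘[L] z ^ 2 - L.g₂ / 2)) * ℘'[L] z = 0 := by
  have hP := hasDerivAt_weierstrassP L hz
  have hsq : HasDerivAt (fun z => ℘'[L] z ^ 2) _ z :=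
    (((hP.pow 3).const_mul 4).sub (hP.const_mul L.g₂)).sub_const L.g₃ |>.congr_of_eventuallyEq <| by
      filter_upwards [eventually_nhds_notMem_lattice L hz] with w hw
      simpa using L.derivWeierstrassP_sq w hw
  have h := hsq.unique
    ((L.analyticOnNhd_derivWeierstrassP z hz).differentiableAt.hasDerivAt.pow 2)
  simp only [Nat.cast_ofNat] at h
  linear_combination (-1 / 2) * h

lemma not_eqOn_derivWeierstrassP_zero : ¬ Set.EqOn ℘'[L] 0 (L.lattice : Set ℂ)ᶜ := by
  intro h
  obtain ⟨z, hz⟩ := (eventually_nhdsNE_zero_notMem_lattice L).exists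
  have weierstrassP_const (w : ℂ) (hw : w ∉ L.lattice) : ℘[L] w = ℘[L] z :=
    L.isClosed_lattice.isOpen_compl.is_const_of_deriv_eq_zero
      (isPreconnected_compl_of_countable (countable_lattice L)) L.differentiableOn_weierstrassP
      (L.deriv_weierstrassP ▸ h) hw hz
  exact not_eventually_weierstrassP_eq_of_continuousAt L continuousAt_const
    ((eventually_nhdsNE_zero_notMem_lattice L).mono weierstrassP_const)

theorem hasDerivAt_derivWeierstrassP {z : ℂ} (hz : z ∉ L.lattice) :
    HasDerivAt ℘'[L] (6 * ℘[L] z ^ 2 - L.g₂ / 2) z := by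
  have analytic : AnalyticOnNhd ℂ (fun z => deriv ℘'[L] z - (6 * ℘[L] z ^ 2 - L.g₂ / 2))
      (L.lattice : Set ℂ)ᶜ := fun z hz => by
    have := L.analyticOnNhd_weierstrassP z hz
    have := (L.analyticOnNhd_derivWeierstrassP z hz).deriv
    fun_prop
  -- A product of analytic functions on a connected set vanishes only if one of the factors does.
  have h := (analytic.eq_zero_or_eq_zero_of_mul_eq_zero L.analyticOnNhd_derivWeierstrassP
    (fun w hw => derivWeierstrassP_mul_deriv_relation L hw)
    (isPreconnected_compl_of_countable (countable_lattice L))).resolve_right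
      (not_eqOn_derivWeierstrassP_zero L)
  rw [← sub_eq_zero.1 (h z hz)]
  exact (L.analyticOnNhd_derivWeierstrassP z hz).differentiableAt.hasDerivAt

lemma six_mul_sumInvPow_four {z : ℂ} (hz : z ∉ L.lattice) :
    6 * L.sumInvPow z 4 = 6 * ℘[L] z ^ 2 - L.g₂ / 2 := by
  rw [← L.deriv_derivWeierstrassPExcept_self z, L.derivWeierstrassPExcept_of_notMem _ hz,
    (hasDerivAt_derivWeierstrassP L hz).deriv]

variable {L} {v w : ℂ}

lemma eventually_weierstrassP_add_eq (hw : w ∉ L.lattice) (hwv : w + v ∉ L.lattice)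
    (h : ℘[L] (w + v) = ℘[L] w) (h' : ℘'[L] (w + v) = ℘'[L] w) :
    ∀ᶠ z in 𝓝 w, ℘[L] (z + v) = ℘[L] z := by
  have notMem : ∀ᶠ z in 𝓝 w, z ∉ L.lattice ∧ z + v ∉ L.lattice :=
    (eventually_nhds_notMem_lattice L hw).and
      ((continuous_add_const v).continuousAt.eventually (eventually_nhds_notMem_lattice L hwv))
  have analytic : AnalyticAt ℂ ℘[L] w := L.analyticOnNhd_weierstrassP w hw
  have analytic_shift : AnalyticAt ℂ (fun z => ℘[L] (z + v)) w :=
    AnalyticAt.fun_comp (L.analyticOnNhd_weierstrassP (w + v) hwv) (by fun_prop)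
  have deriv_sub : deriv (fun z => ℘[L] (z + v) - ℘[L] z) =ᶠ[𝓝 w]
      fun z => ℘'[L] (z + v) - ℘'[L] z := by
    filter_upwards [notMem] with z hz
    exact (((hasDerivAt_weierstrassP L hz.2).comp_add_const z v).sub
      (hasDerivAt_weierstrassP L hz.1)).deriv
  have deriv_deriv_sub : deriv (deriv (fun z => ℘[L] (z + v) - ℘[L] z)) =ᶠ[𝓝 w]
      (fun z => 6 * (℘[L] (z + v) + ℘[L] z)) * fun z => ℘[L] (z + v) - ℘[L] z := by
    refine deriv_sub.deriv.trans ?_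
    filter_upwards [notMem] with z hz
    refine (((hasDerivAt_derivWeierstrassP L hz.2).comp_add_const z v).sub
      (hasDerivAt_derivWeierstrassP L hz.1)).deriv.trans ?_
    simp only [Pi.mul_apply]
    ring
  exact (eventually_eq_zero_of_deriv_deriv_eq_mul (analytic_shift.sub analytic) (by fun_prop)
    deriv_deriv_sub (sub_eq_zero.2 h) (deriv_sub.self_of_nhds.trans (sub_eq_zero.2 h'))).mono
      fun _ hz => sub_eq_zero.1 hz

lemma mem_lattice_of_eventually_weierstrassP_add_eq (hw : w ∉ L.lattice) (hwv : w + v ∉ L.lattice)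
    (h : ∀ᶠ z in 𝓝 w, ℘[L] (z + v) = ℘[L] z) : v ∈ L.lattice := by
  by_contra hv
  set S : Set ℂ := L.lattice ∪ (· + v) ⁻¹' L.lattice with hS
  have mem_compl_S_iff (z : ℂ) : z ∈ Sᶜ ↔ z ∉ L.lattice ∧ z + v ∉ L.lattice := by simp [hS]
  have analyticAt_shift {z : ℂ} (hz : z + v ∉ L.lattice) :
      AnalyticAt ℂ (fun z => ℘[L] (z + v)) z :=
    AnalyticAt.fun_comp (L.analyticOnNhd_weierstrassP (z + v) hz) (by fun_prop)
  have isPreconnected_compl_S : IsPreconnected Sᶜ := isPreconnected_compl_of_countable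
    ((countable_lattice L).union ((countable_lattice L).preimage (add_left_injective v)))
  have eqOn_compl_S : Set.EqOn (fun z => ℘[L] (z + v)) ℘[L] Sᶜ :=
    AnalyticOnNhd.eqOn_of_preconnected_of_eventuallyEq
      (fun z hz => analyticAt_shift ((mem_compl_S_iff z).1 hz).2)
      (fun z hz => L.analyticOnNhd_weierstrassP z ((mem_compl_S_iff z).1 hz).1)
      isPreconnected_compl_S ((mem_compl_S_iff w).2 ⟨hw, hwv⟩) h
  have notMem_shift : ∀ᶠ z in 𝓝 (0 : ℂ), z + v ∉ L.lattice :=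
    (continuous_add_const v).continuousAt.eventually
      (eventually_nhds_notMem_lattice L (by simpa using hv))
  refine not_eventually_weierstrassP_eq_of_continuousAt L
    (analyticAt_shift (by simpa using hv)).continuousAt ?_
  filter_upwards [eventually_nhdsNE_zero_notMem_lattice L, nhdsWithin_le_nhds notMem_shift]
    with z hz hzv using (eqOn_compl_S ((mem_compl_S_iff z).2 ⟨hz, hzv⟩)).symm

theorem mem_lattice_of_weierstrassP_add_eq (hw : w ∉ L.lattice) (hwv : w + v ∉ L.lattice)
    (h : ℘[L] (w + v) = ℘[L] w) (h' : ℘'[L] (w + v) = ℘'[L] w) : v ∈ L.lattice :=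
  mem_lattice_of_eventually_weierstrassP_add_eq hw hwv (eventually_weierstrassP_add_eq hw hwv h h')

lemma derivWeierstrassP_eq_zero_iff (hw : w ∉ L.lattice) :
    ℘'[L] w = 0 ↔ 2 * w ∈ L.lattice := by
  refine ⟨fun h => ?_, fun h => ?_⟩
  · have hneg : w + -(2 * w) = -w := by ring
    refine neg_mem_iff.1 (mem_lattice_of_weierstrassP_add_eq hw (v := -(2 * w)) ?_ ?_ ?_)
    · rwa [hneg, neg_mem_iff]
    · rw [hneg, L.weierstrassP_neg]
    · rw [hneg, L.derivWeierstrassP_neg, h, neg_zero]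
  · have hsub := L.derivWeierstrassP_sub_coe w ⟨2 * w, h⟩
    rw [show w - (2 * w : ℂ) = -w by ring, L.derivWeierstrassP_neg] at hsub
    exact CharZero.neg_eq_self_iff.1 hsub

end WeierstrassP

section RealInversion

open Set Filter Topology

variable {p q : ℝ → ℝ} {a b e : ℝ}

lemma strictAntiOn_Ioo_of_hasDerivAt_ne_zero_of_tendsto_atTop (hab : a < b)
    (hp : ∀ u ∈ Ioo a b, HasDerivAt p (q u) u) (hq : ∀ u ∈ Ioo a b, q u ≠ 0)
    (ha : Tendsto p (𝓝[>] a) atTop) : StrictAntiOn p (Ioo a b) := by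
  have hcont : ContinuousOn p (Ioo a b) := fun u hu => (hp u hu).continuousAt.continuousWithinAt
  have hderiv {u : ℝ} (hu : u ∈ interior (Ioo a b)) : deriv p u = q u :=
    (hp u (interior_subset hu)).deriv
  rcases hasDerivWithinAt_forall_lt_or_forall_gt_of_forall_ne (convex_Ioo a b)
    (fun u hu => (hp u hu).hasDerivWithinAt) hq with hneg | hpos
  · exact strictAntiOn_of_deriv_neg (convex_Ioo a b) hcont fun u hu =>
      hderiv hu ▸ hneg u (interior_subset hu)
  · have hmono : StrictMonoOn p (Ioo a b) := strictMonoOn_of_deriv_pos (convex_Ioo a b) hcont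
      fun u hu => hderiv hu ▸ hpos u (interior_subset hu)
    obtain ⟨c, hc⟩ := nonempty_Ioo.2 hab
    obtain ⟨u, hcu, hu⟩ :=
      ((ha.eventually_gt_atTop (p c)).and (Ioo_mem_nhdsGT hc.1)).exists
    exact absurd hcu (hmono ⟨hu.1, hu.2.trans hc.2⟩ hc hu.2).not_gt

lemma image_Ioo_eq_Ioi_of_strictAntiOn (hab : a < b) (hp : StrictAntiOn p (Ioo a b))
    (hcont : ContinuousOn p (Ioo a b)) (ha : Tendsto p (𝓝[>] a) atTop)
    (hb : Tendsto p (𝓝[<] b) (𝓝 e)) : p '' Ioo a b = Ioi e := by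
  refine Subset.antisymm ?_ ?_
  · rintro _ ⟨u, hu, rfl⟩
    obtain ⟨v, huv, hvb⟩ := exists_between hu.2
    have hv : v ∈ Ioo a b := ⟨hu.1.trans huv, hvb⟩
    refine (le_of_tendsto hb ?_).trans_lt (hp hu hv huv)
    filter_upwards [Ioo_mem_nhdsLT hvb] with w hw
    exact (hp hv ⟨hv.1.trans hw.1, hw.2⟩ hw.1).le
  · have := nhdsLT_neBot_of_exists_lt ⟨a, hab⟩
    have := nhdsGT_neBot_of_exists_gt ⟨b, hab⟩
    exact isPreconnected_Ioo.intermediate_value_Ioi (le_principal_iff.2 (Ioo_mem_nhdsLT hab))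
      (le_principal_iff.2 (Ioo_mem_nhdsGT hab)) hcont hb ha

lemma integral_image_inv_abs_deriv {s : Set ℝ} {G : ℝ → ℝ} (hs : MeasurableSet s)
    (hp : ∀ u ∈ s, HasDerivWithinAt p (q u) s u) (hinj : InjOn p s)
    (hq : ∀ u ∈ s, q u ≠ 0) (hG : ∀ u ∈ s, |q u| = G (p u)) :
    ∫ x in p '' s, (G x)⁻¹ = volume.real s := by
  rw [integral_image_eq_integral_abs_deriv_smul hs hp hinj, ← setIntegral_one_eq_measureReal]
  refine setIntegral_congr_fun hs fun u hu => ?_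
  simp only [← hG u hu, smul_eq_mul, mul_inv_cancel₀ (abs_ne_zero.2 (hq u hu))]

lemma hasDerivAt_add_div_sq (e D : ℝ) {t : ℝ} (ht : t ≠ 0) :
    HasDerivAt (fun t => e + D / t ^ 2) (-(2 * D / t ^ 3)) t := by
  refine (((hasDerivAt_const t D).fun_div (hasDerivAt_pow 2 t)
    (pow_ne_zero 2 ht)).const_add e).congr_deriv ?_
  field_simp
  ring

lemma strictAntiOn_add_div_sq (e : ℝ) {D : ℝ} (hD : 0 < D) :
    StrictAntiOn (fun t => e + D / t ^ 2) (Ioo 0 1) := fun s hs t _ hst => by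
  have := hs.1
  simp only
  gcongr

lemma image_add_div_sq_Ioo (e : ℝ) {D : ℝ} (hD : 0 < D) :
    (fun t => e + D / t ^ 2) '' Ioo 0 1 = Ioi (e + D) := by
  refine image_Ioo_eq_Ioi_of_strictAntiOn one_pos (strictAntiOn_add_div_sq e hD)
    (fun t ht => (hasDerivAt_add_div_sq e D ht.1.ne').continuousAt.continuousWithinAt) ?_ ?_
  · have : Tendsto (fun t : ℝ => D * t⁻¹ ^ 2) (𝓝[>] 0) atTop :=
      ((tendsto_pow_atTop two_ne_zero).comp tendsto_inv_nhdsGT_zero).const_mul_atTop hD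
    exact tendsto_atTop_add_const_left _ _ (by simpa [div_eq_mul_inv] using this)
  · have := (hasDerivAt_add_div_sq e D one_ne_zero).continuousAt.tendsto
    simpa using this.mono_left (nhdsWithin_le_nhds (s := Iio 1))

/-- The substitution `x = e₃ + (e₁ - e₃) / t²` takes Legendre's form to Weierstrass's. -/
lemma ellipticK_eq_sqrt_mul_integral_Ioi {e₁ e₂ e₃ : ℝ} (h₁₂ : e₂ < e₁) (h₂₃ : e₃ < e₂) :
    ellipticK ((e₂ - e₃) / (e₁ - e₃)) =
      √(e₁ - e₃) * ∫ x in Ioi e₁, (√(4 * (x - e₁) * (x - e₂) * (x - e₃)))⁻¹ := by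
  obtain ⟨m, hm⟩ : ∃ m, m = (e₂ - e₃) / (e₁ - e₃) := ⟨_, rfl⟩
  obtain ⟨D, rfl⟩ : ∃ D, e₁ = e₃ + D := ⟨e₁ - e₃, by ring⟩
  rw [← hm, add_sub_cancel_left]
  rw [add_sub_cancel_left] at hm
  have hD : 0 < D := by linarith
  have hmD : e₂ = e₃ + m * D := by rw [hm, div_mul_cancel₀ _ hD.ne']; ring
  have hm_lt : m < 1 := by nlinarith
  rw [← image_add_div_sq_Ioo e₃ hD, integral_image_eq_integral_abs_deriv_smul measurableSet_Ioo
    (fun t ht => (hasDerivAt_add_div_sq e₃ D ht.1.ne').hasDerivWithinAt)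
    (strictAntiOn_add_div_sq e₃ hD).injOn, ellipticK_eq_integral_Ioo hm_lt, ← integral_const_mul]
  refine setIntegral_congr_fun measurableSet_Ioo fun t ht => ?_
  have ht_pos := ht.1
  have radicand_eq :
      4 * (e₃ + D / t ^ 2 - (e₃ + D)) * (e₃ + D / t ^ 2 - e₂) * (e₃ + D / t ^ 2 - e₃) =
        (2 * D / t ^ 3) ^ 2 * (D * ((1 - t ^ 2) * (1 - m * t ^ 2))) := by
    rw [hmD]
    field_simp
    ring
  simp only [radicand_eq, smul_eq_mul, abs_neg]
  rw [Real.sqrt_mul (sq_nonneg _), Real.sqrt_sq_eq_abs, Real.sqrt_mul hD.le,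
    abs_of_pos (by positivity)]
  field_simp

theorem ellipticK_eq_sqrt_mul_of_cubic {c e₁ e₂ e₃ : ℝ} (hc : 0 < c)
    (hp : ∀ u ∈ Ioo 0 c, HasDerivAt p (q u) u) (hq₀ : ∀ u ∈ Ioo 0 c, q u ≠ 0)
    (hq : ∀ u ∈ Ioo 0 c, q u ^ 2 = 4 * (p u - e₁) * (p u - e₂) * (p u - e₃))
    (hp_zero : Tendsto p (𝓝[>] 0) atTop) (hp_c : Tendsto p (𝓝[<] c) (𝓝 e₁))
    (h₁₂ : e₂ < e₁) (h₂₃ : e₃ < e₂) :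
    ellipticK ((e₂ - e₃) / (e₁ - e₃)) = √(e₁ - e₃) * c := by
  have hanti := strictAntiOn_Ioo_of_hasDerivAt_ne_zero_of_tendsto_atTop hc hp hq₀ hp_zero
  rw [ellipticK_eq_sqrt_mul_integral_Ioi h₁₂ h₂₃, ← image_Ioo_eq_Ioi_of_strictAntiOn hc hanti
    (fun u hu => (hp u hu).continuousAt.continuousWithinAt) hp_zero hp_c,
    integral_image_inv_abs_deriv measurableSet_Ioo (fun u hu => (hp u hu).hasDerivWithinAt)
      hanti.injOn hq₀ fun u hu => by rw [← hq u hu, Real.sqrt_sq_eq_abs],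
    Real.volume_real_Ioo_of_le hc.le, sub_zero]

end RealInversion

section HalfPeriods

open scoped PeriodPair

lemma depressed_cubic_vieta {R : Type*} [CommRing R] [IsDomain R] {e₁ e₂ e₃ p q : R}
    (h₁ : e₁ ^ 3 + p * e₁ + q = 0) (h₂ : e₂ ^ 3 + p * e₂ + q = 0) (h₃ : e₃ ^ 3 + p * e₃ + q = 0)
    (h₁₂ : e₁ ≠ e₂) (h₁₃ : e₁ ≠ e₃) (h₂₃ : e₂ ≠ e₃) :
    e₁ + e₂ + e₃ = 0 ∧ p = e₁ * e₂ + e₁ * e₃ + e₂ * e₃ ∧ q = -(e₁ * e₂ * e₃) := by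
  have hp₁₂ : p = -(e₁ ^ 2 + e₁ * e₂ + e₂ ^ 2) :=
    mul_left_cancel₀ (sub_ne_zero.2 h₁₂) (by linear_combination h₁ - h₂)
  have hp₁₃ : p = -(e₁ ^ 2 + e₁ * e₃ + e₃ ^ 2) :=
    mul_left_cancel₀ (sub_ne_zero.2 h₁₃) (by linear_combination h₁ - h₃)
  have hsum : e₁ + e₂ + e₃ = 0 :=
    mul_left_cancel₀ (sub_ne_zero.2 h₂₃) (by linear_combination hp₁₂ - hp₁₃)
  have hp : p = e₁ * e₂ + e₁ * e₃ + e₂ * e₃ := by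
    linear_combination hp₁₂ + (-e₁ - e₂) * hsum
  exact ⟨hsum, hp, by linear_combination h₁ - e₁ * hp - e₁ ^ 2 * hsum⟩

variable {L : PeriodPair} {w₁ w₂ z : ℂ}

lemma weierstrassP_ne_of_two_mul_mem_lattice (h₁ : w₁ ∉ L.lattice) (h₂ : w₂ ∉ L.lattice)
    (h₁₂ : w₁ - w₂ ∉ L.lattice) (two₁ : 2 * w₁ ∈ L.lattice) (two₂ : 2 * w₂ ∈ L.lattice) :
    ℘[L] w₁ ≠ ℘[L] w₂ := by
  intro h
  have hadd : w₂ + (w₁ - w₂) = w₁ := add_sub_cancel _ _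
  refine h₁₂ (mem_lattice_of_weierstrassP_add_eq h₂ (by rwa [hadd]) (by rwa [hadd]) ?_)
  rw [hadd, (derivWeierstrassP_eq_zero_iff h₁).2 two₁, (derivWeierstrassP_eq_zero_iff h₂).2 two₂]

lemma weierstrassP_cubic_of_two_mul_mem_lattice {w : ℂ} (hw : w ∉ L.lattice)
    (two : 2 * w ∈ L.lattice) : ℘[L] w ^ 3 + -(L.g₂ / 4) * ℘[L] w + -(L.g₃ / 4) = 0 := by
  have h := L.derivWeierstrassP_sq w hw
  rw [(derivWeierstrassP_eq_zero_iff hw).2 two] at h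
  linear_combination -h / 4

lemma weierstrassP_half_period_relations (h₁ : w₁ ∉ L.lattice) (h₂ : w₂ ∉ L.lattice)
    (h₁₂ : w₁ - w₂ ∉ L.lattice) (two₁ : 2 * w₁ ∈ L.lattice) (two₂ : 2 * w₂ ∈ L.lattice) :
    ℘[L] w₁ + ℘[L] w₂ + ℘[L] (w₁ - w₂) = 0 ∧
      -(L.g₂ / 4) = ℘[L] w₁ * ℘[L] w₂ + ℘[L] w₁ * ℘[L] (w₁ - w₂) + ℘[L] w₂ * ℘[L] (w₁ - w₂) ∧
      -(L.g₃ / 4) = -(℘[L] w₁ * ℘[L] w₂ * ℘[L] (w₁ - w₂)) := by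
  have two₁₂ : 2 * (w₁ - w₂) ∈ L.lattice := by rw [mul_sub]; exact sub_mem two₁ two₂
  have h₂_sub : w₂ - (w₁ - w₂) ∉ L.lattice := fun h => h₁ <| by
    convert sub_mem two₂ h using 1
    ring
  refine depressed_cubic_vieta (weierstrassP_cubic_of_two_mul_mem_lattice h₁ two₁)
    (weierstrassP_cubic_of_two_mul_mem_lattice h₂ two₂)
    (weierstrassP_cubic_of_two_mul_mem_lattice h₁₂ two₁₂) ?_ ?_ ?_
  · exact weierstrassP_ne_of_two_mul_mem_lattice h₁ h₂ h₁₂ two₁ two₂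
  · exact weierstrassP_ne_of_two_mul_mem_lattice h₁ h₁₂ (by rwa [sub_sub_cancel]) two₁ two₁₂
  · exact weierstrassP_ne_of_two_mul_mem_lattice h₂ h₁₂ h₂_sub two₂ two₁₂

theorem derivWeierstrassP_sq_eq_prod_sub_half_period (h₁ : w₁ ∉ L.lattice) (h₂ : w₂ ∉ L.lattice)
    (h₁₂ : w₁ - w₂ ∉ L.lattice) (two₁ : 2 * w₁ ∈ L.lattice) (two₂ : 2 * w₂ ∈ L.lattice)
    (hz : z ∉ L.lattice) :
    ℘'[L] z ^ 2 =
      4 * (℘[L] z - ℘[L] w₁) * (℘[L] z - ℘[L] w₂) * (℘[L] z - ℘[L] (w₁ - w₂)) := by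
  obtain ⟨hsum, hg₂, hg₃⟩ := weierstrassP_half_period_relations h₁ h₂ h₁₂ two₁ two₂
  linear_combination L.derivWeierstrassP_sq z hz + 4 * ℘[L] z * hg₂ + 4 * hg₃ +
    4 * ℘[L] z ^ 2 * hsum

theorem half_period_sub_mul_sub_eq_sumInvPow_four (h₁ : w₁ ∉ L.lattice) (h₂ : w₂ ∉ L.lattice)
    (h₁₂ : w₁ - w₂ ∉ L.lattice) (two₁ : 2 * w₁ ∈ L.lattice) (two₂ : 2 * w₂ ∈ L.lattice) :
    (℘[L] w₁ - ℘[L] w₂) * (℘[L] w₁ - ℘[L] (w₁ - w₂)) = 3 * L.sumInvPow w₁ 4 := by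
  obtain ⟨hsum, hg₂, -⟩ := weierstrassP_half_period_relations h₁ h₂ h₁₂ two₁ two₂
  linear_combination -six_mul_sumInvPow_four L h₁ / 2 - hg₂ - 2 * ℘[L] w₁ * hsum

end HalfPeriods

section RectangularLattice

open Set Filter Topology ComplexConjugate
open scoped PeriodPair

section Symmetries

variable {L M : PeriodPair}

lemma weierstrassP_conj (hL : ∀ l ∈ L.lattice, conj l ∈ L.lattice) (z : ℂ) :
    ℘[L] (conj z) = conj (℘[L] z) := by
  let e : L.lattice ≃ L.lattice := Function.Involutive.toPerm (fun l => ⟨conj l.1, hL _ l.2⟩)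
    fun l => Subtype.ext (Complex.conj_conj _)
  rw [PeriodPair.weierstrassP, PeriodPair.weierstrassP, Complex.conj_tsum, ← e.tsum_eq]
  exact tsum_congr fun l => by simp [show (e l : ℂ) = conj (l : ℂ) from rfl]

lemma derivWeierstrassP_conj (hL : ∀ l ∈ L.lattice, conj l ∈ L.lattice) (z : ℂ) :
    ℘'[L] (conj z) = conj (℘'[L] z) := by
  let e : L.lattice ≃ L.lattice := Function.Involutive.toPerm (fun l => ⟨conj l.1, hL _ l.2⟩)
    fun l => Subtype.ext (Complex.conj_conj _)
  rw [PeriodPair.derivWeierstrassP, PeriodPair.derivWeierstrassP, map_neg, Complex.conj_tsum,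
    ← e.tsum_eq]
  exact congrArg _ (tsum_congr fun l => by simp [show (e l : ℂ) = conj (l : ℂ) from rfl, map_ofNat])

lemma ofReal_re_weierstrassP (hL : ∀ l ∈ L.lattice, conj l ∈ L.lattice) {z : ℂ}
    (hz : z - conj z ∈ L.lattice) : ((℘[L] z).re : ℂ) = ℘[L] z := by
  rw [← Complex.conj_eq_iff_re, ← weierstrassP_conj hL, ← L.weierstrassP_sub_coe z ⟨_, hz⟩,
    sub_sub_cancel]

lemma ofReal_re_derivWeierstrassP (hL : ∀ l ∈ L.lattice, conj l ∈ L.lattice) {z : ℂ}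
    (hz : z - conj z ∈ L.lattice) : ((℘'[L] z).re : ℂ) = ℘'[L] z := by
  rw [← Complex.conj_eq_iff_re, ← derivWeierstrassP_conj hL,
    ← L.derivWeierstrassP_sub_coe z ⟨_, hz⟩, sub_sub_cancel]

lemma weierstrassP_I_mul (h : ∀ l, l ∈ M.lattice ↔ Complex.I * l ∈ L.lattice) (z : ℂ) :
    ℘[L] (Complex.I * z) = -℘[M] z := by
  let e : M.lattice ≃ L.lattice :=
    (Equiv.mulLeft₀ Complex.I Complex.I_ne_zero).subtypeEquiv h
  rw [PeriodPair.weierstrassP, PeriodPair.weierstrassP, ← e.tsum_eq, ← tsum_neg]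
  refine tsum_congr fun l => ?_
  have he : ((e l : L.lattice) : ℂ) = Complex.I * l := rfl
  rw [he, ← mul_sub, mul_pow, mul_pow, Complex.I_sq, neg_one_mul, neg_one_mul,
    one_div_neg_eq_neg_one_div, one_div_neg_eq_neg_one_div, neg_sub_neg, neg_sub]

end Symmetries

variable {a b : ℝ} (ha : 0 < a) (hb : 0 < b)

/-- The pair of periods `(a, b * I)`, spanning a rectangular lattice. -/
noncomputable def rectPeriodPair (ha : 0 < a) (hb : 0 < b) : PeriodPair where
  ω₁ := a
  ω₂ := b * Complex.I
  indep := by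
    refine LinearIndependent.pair_iff.2 fun s t h => ?_
    have hre := congrArg Complex.re h
    have him := congrArg Complex.im h
    simp only [Complex.real_smul, Complex.add_re, Complex.re_ofReal_mul, Complex.ofReal_re,
      Complex.I_re, mul_zero, add_zero, Complex.zero_re, mul_eq_zero, ha.ne', or_false] at hre
    simp only [Complex.real_smul, Complex.add_im, Complex.im_ofReal_mul, Complex.ofReal_im,
      Complex.I_im, mul_zero, mul_one, zero_add, Complex.zero_im, mul_eq_zero, hb.ne',
      or_false] at him
    exact ⟨hre, him⟩

namespace rectPeriodPair

lemma mem_lattice {z : ℂ} :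
    z ∈ (rectPeriodPair ha hb).lattice ↔ (∃ m : ℤ, z.re = m * a) ∧ ∃ n : ℤ, z.im = n * b := by
  rw [PeriodPair.mem_lattice]
  constructor
  · rintro ⟨m, n, rfl⟩
    exact ⟨⟨m, by simp [rectPeriodPair]⟩, ⟨n, by simp [rectPeriodPair]⟩⟩
  · rintro ⟨⟨m, hm⟩, n, hn⟩
    exact ⟨m, n, by apply Complex.ext <;> simp [rectPeriodPair, hm, hn]⟩

lemma conj_mem_lattice (l : ℂ) (hl : l ∈ (rectPeriodPair ha hb).lattice) :
    conj l ∈ (rectPeriodPair ha hb).lattice := by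
  obtain ⟨hre, n, hn⟩ := (mem_lattice ha hb).1 hl
  exact (mem_lattice ha hb).2 ⟨by simpa using hre, -n, by simp [hn]⟩

lemma mem_lattice_swap_iff (l : ℂ) :
    l ∈ (rectPeriodPair hb ha).lattice ↔ Complex.I * l ∈ (rectPeriodPair ha hb).lattice := by
  have neg_im : (∃ m : ℤ, -l.im = m * a) ↔ ∃ m : ℤ, l.im = m * a :=
    (Equiv.neg ℤ).exists_congr fun m => by simp [neg_eq_iff_eq_neg]
  simp [mem_lattice, neg_im, and_comm]

lemma ne_int_mul_of_mem_Ioo {c x : ℝ} (hx : x ∈ Ioo 0 c) (m : ℤ) : x ≠ m * c := by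
  rintro rfl
  have hc : 0 < c := hx.1.trans hx.2
  have h₀ : (0 : ℝ) < m := pos_of_mul_pos_left hx.1 hc.le
  have h₁ : (m : ℝ) < 1 := lt_of_mul_lt_mul_right (by simpa using hx.2) hc.le
  norm_cast at h₀ h₁
  omega

lemma notMem_lattice_of_re {z : ℂ} (hz : z.re ∈ Ioo 0 a) : z ∉ (rectPeriodPair ha hb).lattice :=
  fun h => ((mem_lattice ha hb).1 h).1.elim (ne_int_mul_of_mem_Ioo hz)

lemma notMem_lattice_of_im {z : ℂ} (hz : z.im ∈ Ioo 0 b) : z ∉ (rectPeriodPair ha hb).lattice :=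
  fun h => ((mem_lattice ha hb).1 h).2.elim (ne_int_mul_of_mem_Ioo hz)

/-- The value of `℘` at the half period `a / 2` of the rectangular lattice, which is real. -/
noncomputable def e₁ (ha : 0 < a) (hb : 0 < b) : ℝ := (℘[rectPeriodPair ha hb] ⟨a / 2, 0⟩).re

/-- The value of `℘` at the half period `(a + b * I) / 2` of the rectangular lattice, which is
real. -/
noncomputable def e₂ (ha : 0 < a) (hb : 0 < b) : ℝ := (℘[rectPeriodPair ha hb] ⟨a / 2, b / 2⟩).re

/-- The value of `℘` at the half period `b * I / 2` of the rectangular lattice, which is real. -/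
noncomputable def e₃ (ha : 0 < a) (hb : 0 < b) : ℝ := (℘[rectPeriodPair ha hb] ⟨0, b / 2⟩).re

lemma ofReal_re_weierstrassP_of_im {z : ℂ} (hz : ∃ n : ℤ, 2 * z.im = n * b) :
    ((℘[rectPeriodPair ha hb] z).re : ℂ) = ℘[rectPeriodPair ha hb] z :=
  ofReal_re_weierstrassP (conj_mem_lattice ha hb) <|
    (mem_lattice ha hb).2 ⟨⟨0, by simp⟩, by simpa [← two_mul] using hz⟩

lemma ofReal_e₁ : (e₁ ha hb : ℂ) = ℘[rectPeriodPair ha hb] ⟨a / 2, 0⟩ :=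
  ofReal_re_weierstrassP_of_im ha hb ⟨0, by simp⟩

lemma ofReal_e₂ : (e₂ ha hb : ℂ) = ℘[rectPeriodPair ha hb] ⟨a / 2, b / 2⟩ :=
  ofReal_re_weierstrassP_of_im ha hb ⟨1, by simp; ring⟩

lemma ofReal_e₃ : (e₃ ha hb : ℂ) = ℘[rectPeriodPair ha hb] ⟨0, b / 2⟩ :=
  ofReal_re_weierstrassP_of_im ha hb ⟨1, by simp; ring⟩

lemma e₁_swap : e₁ hb ha = -e₃ ha hb := by
  have h := weierstrassP_I_mul (mem_lattice_swap_iff ha hb) ⟨b / 2, 0⟩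
  rw [show Complex.I * ⟨b / 2, 0⟩ = (⟨0, b / 2⟩ : ℂ) by apply Complex.ext <;> simp] at h
  simp [e₁, e₃, h]

lemma e₂_swap : e₂ hb ha = -e₂ ha hb := by
  have h := weierstrassP_I_mul (mem_lattice_swap_iff ha hb) ⟨b / 2, -(a / 2)⟩
  rw [show Complex.I * ⟨b / 2, -(a / 2)⟩ = (⟨a / 2, b / 2⟩ : ℂ) by apply Complex.ext <;> simp] at h
  have hmem : (⟨0, a⟩ : ℂ) ∈ (rectPeriodPair hb ha).lattice :=
    (mem_lattice hb ha).2 ⟨⟨0, by simp⟩, 1, by simp⟩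
  rw [e₂, e₂, h, Complex.neg_re, neg_neg,
    ← (rectPeriodPair hb ha).weierstrassP_sub_coe ⟨b / 2, a / 2⟩ ⟨_, hmem⟩]
  congr 2
  apply Complex.ext <;> simp
  ring

lemma half_notMem_lattice :
    (⟨a / 2, b / 2⟩ : ℂ) ∉ (rectPeriodPair ha hb).lattice ∧
      (⟨a / 2, 0⟩ : ℂ) ∉ (rectPeriodPair ha hb).lattice ∧
      (⟨a / 2, b / 2⟩ - ⟨a / 2, 0⟩ : ℂ) ∉ (rectPeriodPair ha hb).lattice :=
  have half_mem {c : ℝ} (hc : 0 < c) : c / 2 ∈ Ioo 0 c := ⟨half_pos hc, half_lt_self hc⟩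
  ⟨notMem_lattice_of_re ha hb (half_mem ha), notMem_lattice_of_re ha hb (half_mem ha),
    notMem_lattice_of_im ha hb (by simpa using half_mem hb)⟩

lemma two_mul_half_mem_lattice :
    2 * (⟨a / 2, b / 2⟩ : ℂ) ∈ (rectPeriodPair ha hb).lattice ∧
      2 * (⟨a / 2, 0⟩ : ℂ) ∈ (rectPeriodPair ha hb).lattice := by
  constructor
  · exact (mem_lattice ha hb).2 ⟨⟨1, by simp; ring⟩, 1, by simp; ring⟩
  · exact (mem_lattice ha hb).2 ⟨⟨1, by simp; ring⟩, 0, by simp⟩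

lemma weierstrassP_half_sub_half :
    ℘[rectPeriodPair ha hb] (⟨a / 2, b / 2⟩ - ⟨a / 2, 0⟩) = e₃ ha hb := by
  rw [ofReal_e₃]
  congr 1
  apply Complex.ext <;> simp

lemma e₁_ne_e₂ : e₁ ha hb ≠ e₂ ha hb := by
  obtain ⟨h₂, h₁, h₂₁⟩ := half_notMem_lattice ha hb
  obtain ⟨two₂, two₁⟩ := two_mul_half_mem_lattice ha hb
  have h := weierstrassP_ne_of_two_mul_mem_lattice h₂ h₁ h₂₁ two₂ two₁
  rw [← ofReal_e₁, ← ofReal_e₂, Ne, Complex.ofReal_inj] at h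
  exact Ne.symm h

lemma sub_mul_sub_eq_sumInvPow_four :
    (e₁ ha hb - e₂ ha hb) * (e₂ ha hb - e₃ ha hb) =
      -3 * ((rectPeriodPair ha hb).sumInvPow ⟨a / 2, b / 2⟩ 4).re := by
  obtain ⟨h₂, h₁, h₂₁⟩ := half_notMem_lattice ha hb
  obtain ⟨two₂, two₁⟩ := two_mul_half_mem_lattice ha hb
  have h := half_period_sub_mul_sub_eq_sumInvPow_four h₂ h₁ h₂₁ two₂ two₁
  rw [weierstrassP_half_sub_half, ← ofReal_e₁, ← ofReal_e₂] at h
  have hre := congrArg Complex.re h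
  rw [← Complex.ofReal_sub, ← Complex.ofReal_sub, ← Complex.ofReal_mul, Complex.ofReal_re,
    ← Complex.ofReal_ofNat, Complex.re_ofReal_mul] at hre
  linear_combination -hre

section RealAxis

variable {u : ℝ}

lemma hasDerivAt_re_weierstrassP (hu : u ∈ Ioo 0 a) :
    HasDerivAt (fun t : ℝ => (℘[rectPeriodPair ha hb] t).re) (℘'[rectPeriodPair ha hb] u).re u :=
  (hasDerivAt_weierstrassP _ (notMem_lattice_of_re ha hb hu)).real_of_complex

lemma re_derivWeierstrassP_sq (hu : u ∈ Ioo 0 a) :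
    (℘'[rectPeriodPair ha hb] u).re ^ 2 =
      4 * ((℘[rectPeriodPair ha hb] u).re - e₁ ha hb) *
        ((℘[rectPeriodPair ha hb] u).re - e₂ ha hb) *
        ((℘[rectPeriodPair ha hb] u).re - e₃ ha hb) := by
  obtain ⟨h₂, h₁, h₂₁⟩ := half_notMem_lattice ha hb
  obtain ⟨two₂, two₁⟩ := two_mul_half_mem_lattice ha hb
  have hmem : (u : ℂ) - conj (u : ℂ) ∈ (rectPeriodPair ha hb).lattice := by simp
  have h := derivWeierstrassP_sq_eq_prod_sub_half_period h₂ h₁ h₂₁ two₂ two₁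
    (notMem_lattice_of_re ha hb (z := u) hu)
  rw [weierstrassP_half_sub_half, ← ofReal_e₁, ← ofReal_e₂,
    ← ofReal_re_derivWeierstrassP (conj_mem_lattice ha hb) hmem,
    ← ofReal_re_weierstrassP (conj_mem_lattice ha hb) hmem] at h
  norm_cast at h
  rw [h]
  ring

lemma re_derivWeierstrassP_ne_zero (hu : u ∈ Ioo 0 (a / 2)) :
    (℘'[rectPeriodPair ha hb] u).re ≠ 0 := by
  intro hre
  have hmem : (u : ℂ) - conj (u : ℂ) ∈ (rectPeriodPair ha hb).lattice := by simp
  have hu_lattice := notMem_lattice_of_re ha hb (z := u) ⟨hu.1, hu.2.trans (half_lt_self ha)⟩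
  have hzero := ofReal_re_derivWeierstrassP (conj_mem_lattice ha hb) hmem
  rw [hre, Complex.ofReal_zero, eq_comm, derivWeierstrassP_eq_zero_iff hu_lattice] at hzero
  refine notMem_lattice_of_re ha hb ?_ hzero
  have h₁ := hu.1
  have h₂ := hu.2
  constructor <;> simp <;> linarith

lemma tendsto_re_weierstrassP_half :
    Tendsto (fun t : ℝ => (℘[rectPeriodPair ha hb] t).re) (𝓝[<] (a / 2)) (𝓝 (e₁ ha hb)) :=
  (hasDerivAt_re_weierstrassP ha hb ⟨half_pos ha, half_lt_self ha⟩).continuousAt.tendsto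
    |>.mono_left nhdsWithin_le_nhds

end RealAxis

end rectPeriodPair

lemma tendsto_re_weierstrassP_ofReal_atTop (L : PeriodPair) :
    Tendsto (fun t : ℝ => (℘[L] t).re) (𝓝[>] 0) atTop := by
  have tendsto_ofReal : Tendsto (fun t : ℝ => (t : ℂ)) (𝓝[>] 0) (𝓝[≠] 0) := by
    refine tendsto_nhdsWithin_iff.2 ⟨?_, ?_⟩
    · exact (Complex.continuous_ofReal.tendsto' 0 0 Complex.ofReal_zero).mono_left
        nhdsWithin_le_nhds
    · filter_upwards [self_mem_nhdsWithin] with t ht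
      exact Complex.ofReal_ne_zero.2 ht.ne'
  have tendsto_sq_mul : Tendsto (fun t : ℝ => t ^ 2 * (℘[L] t).re) (𝓝[>] 0) (𝓝 1) := by
    refine ((Complex.continuous_re.tendsto 1).comp
      ((tendsto_sq_mul_weierstrassP L).comp tendsto_ofReal)).congr fun t => ?_
    rw [Function.comp_apply, Function.comp_apply, ← Complex.ofReal_pow, Complex.re_ofReal_mul]
  have tendsto_inv_sq : Tendsto (fun t : ℝ => t⁻¹ ^ 2) (𝓝[>] 0) atTop :=
    (tendsto_pow_atTop two_ne_zero).comp tendsto_inv_nhdsGT_zero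
  refine (tendsto_inv_sq.atTop_mul_pos one_pos tendsto_sq_mul).congr' ?_
  filter_upwards [self_mem_nhdsWithin] with t ht
  rw [← mul_assoc, ← mul_pow, inv_mul_cancel₀ (ne_of_gt ht), one_pow, one_mul]

namespace rectPeriodPair

-- On `(0, a / 2)` the function `℘` decreases from `∞` to `e₁` without critical points, whereas
-- `℘' = 0` wherever `℘ = e₂`.
lemma e₂_lt_e₁ : e₂ ha hb < e₁ ha hb := by
  have Ioo_half_subset : Ioo 0 (a / 2) ⊆ Ioo 0 a := Ioo_subset_Ioo_right (half_le_self ha.le)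
  have hderiv (u : ℝ) (hu : u ∈ Ioo 0 (a / 2)) :=
    hasDerivAt_re_weierstrassP ha hb (Ioo_half_subset hu)
  have himage := image_Ioo_eq_Ioi_of_strictAntiOn (half_pos ha)
    (strictAntiOn_Ioo_of_hasDerivAt_ne_zero_of_tendsto_atTop (half_pos ha) hderiv
      (fun u hu => re_derivWeierstrassP_ne_zero ha hb hu)
      (tendsto_re_weierstrassP_ofReal_atTop _))
    (fun u hu => (hderiv u hu).continuousAt.continuousWithinAt)
    (tendsto_re_weierstrassP_ofReal_atTop _) (tendsto_re_weierstrassP_half ha hb)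
  by_contra! hle
  have hmem : e₂ ha hb ∈ Ioi (e₁ ha hb) := hle.lt_of_ne (e₁_ne_e₂ ha hb)
  rw [← himage] at hmem
  obtain ⟨u, hu, hue₂ : (℘[rectPeriodPair ha hb] u).re = e₂ ha hb⟩ := hmem
  have hsq := re_derivWeierstrassP_sq ha hb (Ioo_half_subset hu)
  rw [hue₂, sub_self, mul_zero, zero_mul] at hsq
  exact re_derivWeierstrassP_ne_zero ha hb hu (sq_eq_zero_iff.1 hsq)

lemma e₃_lt_e₂ : e₃ ha hb < e₂ ha hb := by
  have h := e₂_lt_e₁ hb ha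
  rwa [e₂_swap ha hb, e₁_swap ha hb, neg_lt_neg_iff] at h

theorem ellipticK_eq :
    ellipticK ((e₂ ha hb - e₃ ha hb) / (e₁ ha hb - e₃ ha hb)) =
      √(e₁ ha hb - e₃ ha hb) * (a / 2) := by
  have Ioo_half_subset : Ioo 0 (a / 2) ⊆ Ioo 0 a := Ioo_subset_Ioo_right (half_le_self ha.le)
  exact ellipticK_eq_sqrt_mul_of_cubic (half_pos ha)
    (fun u hu => hasDerivAt_re_weierstrassP ha hb (Ioo_half_subset hu))
    (fun u hu => re_derivWeierstrassP_ne_zero ha hb hu)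
    (fun u hu => re_derivWeierstrassP_sq ha hb (Ioo_half_subset hu))
    (tendsto_re_weierstrassP_ofReal_atTop _) (tendsto_re_weierstrassP_half ha hb)
    (e₂_lt_e₁ ha hb) (e₃_lt_e₂ ha hb)

end rectPeriodPair

open rectPeriodPair in
theorem exists_ellipticK_ratio_eq {y : ℝ} (hy : 0 < y) :
    ∃ m ∈ Ioo (0 : ℝ) 1, ellipticK (1 - m) / ellipticK m = y ∧
      16 * (m * (1 - m) * ellipticK m ^ 4) =
        -3 * ((rectPeriodPair one_pos hy).sumInvPow ⟨1 / 2, y / 2⟩ 4).re := by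
  have h₁₂ := e₂_lt_e₁ one_pos hy
  have h₂₃ := e₃_lt_e₂ one_pos hy
  have hK := rectPeriodPair.ellipticK_eq one_pos hy
  have hK' := rectPeriodPair.ellipticK_eq hy one_pos
  rw [e₂_swap one_pos hy, e₁_swap one_pos hy, show e₃ hy one_pos = -e₁ one_pos hy by
    rw [e₁_swap hy one_pos, neg_neg]] at hK'
  rw [← sub_mul_sub_eq_sumInvPow_four]
  set e₁ := e₁ one_pos hy
  set e₂ := e₂ one_pos hy
  set e₃ := e₃ one_pos hy
  have h₁₃ : 0 < e₁ - e₃ := by linarith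
  have hm_compl : 1 - (e₂ - e₃) / (e₁ - e₃) = (-e₂ - -e₁) / (-e₃ - -e₁) := by
    rw [neg_sub_neg, neg_sub_neg, one_sub_div h₁₃.ne', sub_sub_sub_cancel_right]
  have := Real.sqrt_pos.2 h₁₃
  refine ⟨(e₂ - e₃) / (e₁ - e₃),
    ⟨div_pos (by linarith) h₁₃, (div_lt_one h₁₃).2 (by linarith)⟩, ?_, ?_⟩
  · rw [hm_compl, hK, hK', neg_sub_neg e₃]
    field_simp
  · rw [one_sub_div h₁₃.ne', hK, mul_pow, show √(e₁ - e₃) ^ 4 = (√(e₁ - e₃) ^ 2) ^ 2 by ring,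
      Real.sq_sqrt h₁₃.le]
    field_simp
    ring

end RectangularLattice

section LambertSeries

open Set ComplexConjugate

lemma hasSum_cube_mul_geometric {𝕜 : Type*} [NormedField 𝕜] [CompleteSpace 𝕜] {r : 𝕜}
    (hr : ‖r‖ < 1) :
    HasSum (fun n : ℕ => (n : 𝕜) ^ 3 * r ^ n) (r * (1 + 4 * r + r ^ 2) / (1 - r) ^ 4) := by
  -- `n ^ 3 = 6 * (n + 3).choose 3 - 12 * (n + 2).choose 2 + 7 * (n + 1).choose 1 - 1`
  have h := (((hasSum_choose_mul_geometric_of_norm_lt_one 3 hr).mul_left 6).sub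
    ((hasSum_choose_mul_geometric_of_norm_lt_one 2 hr).mul_left 12)).add
    (((hasSum_choose_mul_geometric_of_norm_lt_one 1 hr).mul_left 7).sub
    (hasSum_choose_mul_geometric_of_norm_lt_one 0 hr))
  have hr_ne : 1 - r ≠ 0 := sub_ne_zero.2 fun h => by simp [← h] at hr
  convert h using 1
  · rfl
  · funext n
    have h₃ := congrArg (Nat.cast (R := 𝕜)) (Nat.ascFactorial_eq_factorial_mul_choose n 3)
    have h₂ := congrArg (Nat.cast (R := 𝕜)) (Nat.ascFactorial_eq_factorial_mul_choose n 2)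
    simp only [Nat.ascFactorial, Nat.factorial] at h₃ h₂
    push_cast at h₃ h₂
    rw [Nat.choose_one_right, Nat.choose_zero_right]
    push_cast
    linear_combination r ^ n * (h₃ - 6 * h₂)
  · field_simp
    ring

lemma tsum_one_div_add_int_pow_four (τ : UpperHalfPlane) :
    ∑' m : ℤ, 1 / ((τ : ℂ) + m) ^ 4 =
      8 * π ^ 4 / 3 * (Complex.exp (2 * π * Complex.I * τ) *
        (1 + 4 * Complex.exp (2 * π * Complex.I * τ) + Complex.exp (2 * π * Complex.I * τ) ^ 2) /
          (1 - Complex.exp (2 * π * Complex.I * τ)) ^ 4) := by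
  have h := EisensteinSeries.qExpansion_identity (k := 3) (by norm_num) τ
  rw [(hasSum_cube_mul_geometric (UpperHalfPlane.norm_exp_two_pi_I_lt_one τ)).tsum_eq] at h
  have hI : (-2 * (π : ℂ) * Complex.I) ^ (3 + 1) / (Nat.factorial 3 : ℕ) = 8 * π ^ 4 / 3 := by
    rw [mul_pow, Complex.I_pow_four]
    norm_num [Nat.factorial]
    ring
  rwa [hI] at h

/-- The closed form of the alternating cube sum `∑ (-1) ^ (n + 1) * n ^ 3 * u ^ n`, `|u| < 1`. -/
noncomputable def altCubeSum (u : ℝ) : ℝ := u * (1 - 4 * u + u ^ 2) / (1 + u) ^ 4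

/-- The Lambert type series `∑ altCubeSum (q ^ (2 * n + 1))` at `q = exp (-π * y)`. -/
noncomputable def lambertSum (y : ℝ) : ℝ :=
  ∑' n : ℕ, altCubeSum (Real.exp (-((2 * n + 1) * π * y)))

lemma tsum_one_div_half_add_int_pow_four {t : ℝ} (ht : 0 < t) :
    ∑' m : ℤ, 1 / ((⟨1 / 2, t / 2⟩ : ℂ) + m) ^ 4 =
      ((-(8 * π ^ 4 / 3) * altCubeSum (Real.exp (-(π * t))) : ℝ) : ℂ) := by
  have hq : Complex.exp (2 * π * Complex.I * (⟨1 / 2, t / 2⟩ : ℂ)) =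
      -(Real.exp (-(π * t)) : ℂ) := by
    have harg : 2 * π * Complex.I * (⟨1 / 2, t / 2⟩ : ℂ) =
        ((-(π * t) : ℝ) : ℂ) + π * Complex.I := by
      apply Complex.ext <;> simp <;> ring
    rw [harg, Complex.exp_add, Complex.exp_pi_mul_I, mul_neg_one, Complex.ofReal_exp]
  have h := tsum_one_div_add_int_pow_four ⟨⟨1 / 2, t / 2⟩, half_pos ht⟩
  rw [UpperHalfPlane.coe_mk, hq] at h
  rw [h, altCubeSum]
  push_cast
  ring

lemma tsum_one_div_half_sub_add_int_pow_four {t : ℝ} (ht : 0 < t) :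
    ∑' m : ℤ, 1 / ((⟨1 / 2, -(t / 2)⟩ : ℂ) + m) ^ 4 =
      ((-(8 * π ^ 4 / 3) * altCubeSum (Real.exp (-(π * t))) : ℝ) : ℂ) := by
  have h := congrArg conj (tsum_one_div_half_add_int_pow_four ht)
  rw [Complex.conj_tsum, Complex.conj_ofReal] at h
  rw [← h]
  refine tsum_congr fun m => ?_
  rw [map_div₀, map_pow, map_add, map_one, map_intCast]
  rfl

lemma hasSum_one_div_pow_four_rectPeriodPair {y : ℝ} (hy : 0 < y) :
    HasSum (fun x : ℤ × ℤ => 1 / ((⟨1 / 2, (2 * x.1 + 1) * y / 2⟩ : ℂ) + x.2) ^ 4)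
      ((rectPeriodPair one_pos hy).sumInvPow ⟨1 / 2, y / 2⟩ 4) := by
  set L := rectPeriodPair one_pos hy with hL
  let e : ℤ × ℤ ≃ L.lattice :=
    (Equiv.prodComm ℤ ℤ).trans (L.latticeEquivProd.symm.toEquiv.trans (Equiv.neg _))
  have he (x : ℤ × ℤ) : ((e x : L.lattice) : ℂ) = -(x.2 + x.1 * (y * Complex.I)) := by
    rw [show ((e x : L.lattice) : ℂ) = -((L.latticeEquivProd.symm (x.2, x.1)).1 : ℂ) from rfl,
      L.latticeEquiv_symm_apply]
    simp [hL, rectPeriodPair]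
  have h := L.hasSum_sumInvPow ⟨1 / 2, y / 2⟩ (r := 4) (by norm_num)
  rw [← e.hasSum_iff] at h
  convert h using 1
  funext x
  rw [Function.comp_apply, he, one_div, ← Even.neg_pow (by decide : Even 4)]
  congr 2
  apply Complex.ext <;> simp <;> ring

theorem hasSum_sumInvPow_four_rectPeriodPair {y : ℝ} (hy : 0 < y) :
    HasSum (fun n : ℕ => -(16 * π ^ 4 / 3) * altCubeSum (Real.exp (-((2 * n + 1) * π * y))))
      ((rectPeriodPair one_pos hy).sumInvPow ⟨1 / 2, y / 2⟩ 4).re := by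
  have hrows := hasSum_one_div_pow_four_rectPeriodPair hy
  have h := (hrows.prod_fiberwise fun n => (hrows.summable.prod_factor n).hasSum)
    |>.nat_add_neg_add_one
  convert Complex.hasSum_re h using 1
  funext n
  have hn : 0 < (2 * n + 1) * y := by positivity
  have hneg : (2 * ((-((n : ℤ) + 1) : ℤ) : ℝ) + 1) * y / 2 = -((2 * n + 1) * y / 2) := by
    push_cast
    ring
  dsimp only
  rw [hneg, Int.cast_natCast, tsum_one_div_half_add_int_pow_four hn,
    tsum_one_div_half_sub_add_int_pow_four hn, Complex.add_re, Complex.ofReal_re, mul_left_comm π,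
    ← mul_assoc (2 * (n : ℝ) + 1)]
  ring

lemma sumInvPow_four_eq_lambertSum {y : ℝ} (hy : 0 < y) :
    -3 * ((rectPeriodPair one_pos hy).sumInvPow ⟨1 / 2, y / 2⟩ 4).re =
      16 * (π ^ 4 * lambertSum y) := by
  rw [← (hasSum_sumInvPow_four_rectPeriodPair hy).tsum_eq, tsum_mul_left, lambertSum]
  ring

theorem image_ellipticK_ratio : (fun m => ellipticK (1 - m) / ellipticK m) '' Ioo 0 1 = Ioi 0 := by
  ext y
  constructor
  · rintro ⟨m, hm, rfl⟩
    exact div_pos (ellipticK_pos (by linarith [hm.1])) (ellipticK_pos hm.2)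
  · intro hy
    obtain ⟨m, hm, hratio, -⟩ := exists_ellipticK_ratio_eq hy
    exact ⟨m, hm, hratio⟩

theorem mul_ellipticK_pow_four_eq_lambertSum {m : ℝ} (hm : m ∈ Ioo (0 : ℝ) 1) :
    m * (1 - m) * ellipticK m ^ 4 = π ^ 4 * lambertSum (ellipticK (1 - m) / ellipticK m) := by
  have hy : 0 < ellipticK (1 - m) / ellipticK m :=
    div_pos (ellipticK_pos (by linarith [hm.1])) (ellipticK_pos hm.2)
  obtain ⟨m', hm', hratio, hsum⟩ := exists_ellipticK_ratio_eq hy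
  obtain rfl := strictAntiOn_ellipticK_ratio.injOn hm' hm hratio
  rw [sumInvPow_four_eq_lambertSum] at hsum
  linarith

end LambertSeries

section MellinTransform

open Set Filter Topology

lemma abs_altCubeSum_le {u : ℝ} (hu : 0 ≤ u) : |altCubeSum u| ≤ u := by
  have hfactor : |(1 - 4 * u + u ^ 2) / (1 + u) ^ 4| ≤ 1 := by
    rw [abs_div, abs_of_pos (by positivity : 0 < (1 + u) ^ 4), div_le_one (by positivity), abs_le]
    have := pow_nonneg hu 2
    have := pow_nonneg hu 3
    have := pow_nonneg hu 4
    constructor <;> nlinarith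
  rw [altCubeSum, mul_div_assoc, abs_mul, abs_of_nonneg hu]
  exact mul_le_of_le_one_right hu hfactor

lemma integrableOn_pow_mul_altCubeSum_exp_neg (n : ℕ) :
    IntegrableOn (fun x : ℝ => x ^ n * altCubeSum (Real.exp (-x))) (Ioi 0) := by
  have hexp : IntegrableOn (fun x : ℝ => x ^ n * Real.exp (-x)) (Ioi 0) := by
    refine (integrableOn_rpow_mul_exp_neg_rpow (s := n) (p := 1)
      (by linarith [n.cast_nonneg (α := ℝ)]) one_pos).congr_fun (fun x _ => ?_) measurableSet_Ioi
    simp only [Real.rpow_natCast, Real.rpow_one]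
  have hcont : Continuous fun x : ℝ => altCubeSum (Real.exp (-x)) := by
    unfold altCubeSum
    exact Continuous.div (by fun_prop) (by fun_prop) fun x => by positivity
  refine hexp.mono' ((continuous_pow n).mul hcont).aestronglyMeasurable ?_
  filter_upwards [ae_restrict_mem measurableSet_Ioi] with x hx
  rw [norm_mul, norm_pow, Real.norm_of_nonneg (le_of_lt hx)]
  exact mul_le_mul_of_nonneg_left (abs_altCubeSum_le (Real.exp_pos _).le)
    (pow_nonneg (le_of_lt hx) n)

lemma hasDerivAt_comp_exp_neg {h : ℝ → ℝ} {h' x : ℝ} (hh : HasDerivAt h h' (Real.exp (-x))) :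
    HasDerivAt (fun x => h (Real.exp (-x))) (-(Real.exp (-x) * h')) x := by
  refine (hh.comp x (hasDerivAt_neg x).exp).congr_deriv ?_
  ring

lemma tendsto_pow_mul_comp_exp_neg (n : ℕ) {h : ℝ → ℝ} (hh : ContinuousAt h 0) :
    Tendsto (fun x : ℝ => x ^ n * (Real.exp (-x) * h (Real.exp (-x)))) atTop (𝓝 0) := by
  have hlim := (Real.tendsto_pow_mul_exp_neg_atTop_nhds_zero n).mul
    (hh.tendsto.comp Real.tendsto_exp_neg_atTop_nhds_zero)
  rw [zero_mul] at hlim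
  exact hlim.congr fun x => mul_assoc _ _ _

/-- Minus a primitive of `x ^ 3 * altCubeSum (exp (-x))`, which repeated integration by parts
produces: the operator `u * d/du`, that is `-d/dx` for `u = exp (-x)`, maps `log (1 + u)` to
`u / (1 + u)`, then to `u / (1 + u) ^ 2`, `u * (1 - u) / (1 + u) ^ 3` and `altCubeSum u`. -/
noncomputable def altCubePrimitive (x : ℝ) : ℝ :=
  x ^ 3 * (Real.exp (-x) * ((1 - Real.exp (-x)) / (1 + Real.exp (-x)) ^ 3)) +
    3 * (x ^ 2 * (Real.exp (-x) * (1 / (1 + Real.exp (-x)) ^ 2))) +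
    6 * (x ^ 1 * (Real.exp (-x) * (1 / (1 + Real.exp (-x))))) +
    6 * Real.log (1 + Real.exp (-x))

lemma hasDerivAt_altCubePrimitive (x : ℝ) :
    HasDerivAt altCubePrimitive (-(x ^ 3 * altCubeSum (Real.exp (-x)))) x := by
  have hpos : 0 < 1 + Real.exp (-x) := by positivity
  have hid := hasDerivAt_id (Real.exp (-x))
  have hadd := hid.const_add 1
  have h₀ := hasDerivAt_comp_exp_neg (hadd.log hpos.ne')
  have h₁ := hasDerivAt_comp_exp_neg
    (hid.fun_mul ((hasDerivAt_const _ (1 : ℝ)).fun_div hadd hpos.ne'))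
  have h₂ := hasDerivAt_comp_exp_neg
    (hid.fun_mul ((hasDerivAt_const _ (1 : ℝ)).fun_div (hadd.fun_pow 2) (pow_pos hpos 2).ne'))
  have h₃ := hasDerivAt_comp_exp_neg
    (hid.fun_mul ((hid.const_sub 1).fun_div (hadd.fun_pow 3) (pow_pos hpos 3).ne'))
  refine ((((hasDerivAt_pow 3 x).fun_mul h₃).fun_add
    (((hasDerivAt_pow 2 x).fun_mul h₂).const_mul 3)).fun_add
    (((hasDerivAt_pow 1 x).fun_mul h₁).const_mul 6) |>.fun_add (h₀.const_mul 6)).congr_deriv ?_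
  simp only [id, altCubeSum]
  generalize Real.exp (-x) = u at *
  push_cast
  field_simp
  ring

lemma tendsto_altCubePrimitive_atTop : Tendsto altCubePrimitive atTop (𝓝 0) := by
  have h₃ := tendsto_pow_mul_comp_exp_neg 3 (h := fun u => (1 - u) / (1 + u) ^ 3)
    (by fun_prop (disch := norm_num))
  have h₂ := tendsto_pow_mul_comp_exp_neg 2 (h := fun u => 1 / (1 + u) ^ 2)
    (by fun_prop (disch := norm_num))
  have h₁ := tendsto_pow_mul_comp_exp_neg 1 (h := fun u => 1 / (1 + u))
    (by fun_prop (disch := norm_num))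
  have h₀ := (Real.tendsto_exp_neg_atTop_nhds_zero.const_add 1).log (by norm_num)
  have h := ((h₃.add (h₂.const_mul 3)).add (h₁.const_mul 6)).add (h₀.const_mul 6)
  rwa [add_zero 1, Real.log_one, mul_zero, mul_zero, add_zero, add_zero, add_zero] at h

lemma integral_pow_three_mul_altCubeSum_exp_neg :
    ∫ x in Ioi (0 : ℝ), x ^ 3 * altCubeSum (Real.exp (-x)) = 6 * Real.log 2 := by
  have h := integral_Ioi_of_hasDerivAt_of_tendsto
    (hasDerivAt_altCubePrimitive 0).continuousAt.continuousWithinAt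
    (fun x _ => hasDerivAt_altCubePrimitive x) (integrableOn_pow_mul_altCubeSum_exp_neg 3).neg
    tendsto_altCubePrimitive_atTop
  rw [integral_neg] at h
  norm_num [altCubePrimitive] at h
  exact h

theorem integral_pow_mul_tsum_comp_mul_left {f : ℝ → ℝ} {c : ℕ → ℝ} {k : ℕ} (hc : ∀ n, 0 < c n)
    (hf : IntegrableOn (fun x => x ^ k * f x) (Ioi 0))
    (hsum : Summable fun n => (c n ^ (k + 1))⁻¹) :
    ∫ y in Ioi (0 : ℝ), y ^ k * ∑' n, f (c n * y) =
      (∑' n, (c n ^ (k + 1))⁻¹) * ∫ x in Ioi (0 : ℝ), x ^ k * f x := by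
  have hscale (n : ℕ) (y : ℝ) :
      y ^ k * f (c n * y) = (c n ^ k)⁻¹ * ((c n * y) ^ k * f (c n * y)) := by
    rw [mul_pow, mul_assoc, inv_mul_cancel_left₀ (pow_pos (hc n) k).ne']
  have integral_scale (g : ℝ → ℝ) (n : ℕ) :
      ∫ y in Ioi (0 : ℝ), (c n ^ k)⁻¹ * g (c n * y) =
        (c n ^ (k + 1))⁻¹ * ∫ x in Ioi (0 : ℝ), g x := by
    rw [integral_const_mul, integral_comp_mul_left_Ioi _ _ (hc n), mul_zero, smul_eq_mul,
      ← mul_assoc, ← mul_inv, pow_succ]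
  have hint (n : ℕ) : IntegrableOn (fun y => y ^ k * f (c n * y)) (Ioi 0) := by
    simp only [hscale]
    refine Integrable.const_mul ?_ _
    rw [← IntegrableOn, integrableOn_Ioi_comp_mul_left_iff (fun x => x ^ k * f x) _ (hc n),
      mul_zero]
    exact hf
  have hnorm (n : ℕ) : ∫ y in Ioi (0 : ℝ), ‖y ^ k * f (c n * y)‖ =
      (c n ^ (k + 1))⁻¹ * ∫ x in Ioi (0 : ℝ), ‖x ^ k * f x‖ := by
    simp only [hscale, norm_mul _ ((c n * _) ^ k * _), norm_inv, norm_pow (c n),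
      Real.norm_of_nonneg (hc n).le]
    exact integral_scale (fun x => ‖x ^ k * f x‖) n
  simp only [← tsum_mul_left]
  rw [← integral_tsum_of_summable_integral_norm hint
    (by simpa only [hnorm] using hsum.mul_right _), ← tsum_mul_right]
  refine tsum_congr fun n => ?_
  simp only [hscale]
  exact integral_scale (fun x => x ^ k * f x) n

lemma hasSum_one_div_odd_pow_four :
    HasSum (fun n : ℕ => 1 / (2 * n + 1 : ℝ) ^ 4) (π ^ 4 / 96) := by
  have heven : HasSum (fun n : ℕ => 1 / ((2 * n : ℕ) : ℝ) ^ 4) (1 / 16 * (π ^ 4 / 90)) := by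
    refine (hasSum_zeta_four.mul_left (1 / 16)).congr_fun fun n => ?_
    push_cast
    ring
  obtain ⟨S, hodd⟩ : Summable fun n : ℕ => 1 / ((2 * n + 1 : ℕ) : ℝ) ^ 4 :=
    hasSum_zeta_four.summable.comp_injective (i := fun n : ℕ => 2 * n + 1)
      fun m n hmn => by simpa using hmn
  have hS := (HasSum.even_add_odd (f := fun n : ℕ => 1 / (n : ℝ) ^ 4) heven hodd).unique
    hasSum_zeta_four
  rw [show π ^ 4 / 96 = S by linarith]
  exact_mod_cast hodd

theorem integral_pow_three_mul_lambertSum :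
    ∫ y in Ioi (0 : ℝ), y ^ 3 * lambertSum y = Real.log 2 / 16 := by
  have hsum : HasSum (fun n : ℕ => (((2 * n + 1) * π) ^ (3 + 1))⁻¹) (1 / 96) := by
    rw [show (1 / 96 : ℝ) = π ^ 4 / 96 / π ^ 4 by field_simp]
    refine (hasSum_one_div_odd_pow_four.div_const (π ^ 4)).congr_fun fun n => ?_
    rw [mul_pow, mul_inv, one_div, div_eq_mul_inv]
  have h := integral_pow_mul_tsum_comp_mul_left (f := fun x => altCubeSum (Real.exp (-x)))
    (fun n => by positivity) (integrableOn_pow_mul_altCubeSum_exp_neg 3) hsum.summable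
  rw [hsum.tsum_eq, integral_pow_three_mul_altCubeSum_exp_neg] at h
  unfold lambertSum
  rw [h]
  ring

end MellinTransform

section ChangeOfVariables

open Set

theorem integral_ellipticK_compl_pow_three_div_ellipticK :
    ∫ m in (0 : ℝ)..1, ellipticK (1 - m) ^ 3 / ellipticK m = π ^ 3 * Real.log 2 / 4 := by
  have hsubst : ∫ y in Ioi (0 : ℝ), y ^ 3 * lambertSum y =
      ∫ m in Ioo (0 : ℝ) 1, ellipticK (1 - m) ^ 3 / ellipticK m / (4 * π ^ 3) := by
    rw [← image_ellipticK_ratio, integral_image_eq_integral_abs_deriv_smul measurableSet_Ioo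
      (fun m hm => (hasDerivAt_ellipticK_ratio hm.1 hm.2).hasDerivWithinAt)
      strictAntiOn_ellipticK_ratio.injOn]
    refine setIntegral_congr_fun measurableSet_Ioo fun m hm => ?_
    have hm₀ : 0 < m := hm.1
    have hm₁ : 0 < 1 - m := sub_pos.2 hm.2
    have hK := ellipticK_pos hm.2
    have hlambert : lambertSum (ellipticK (1 - m) / ellipticK m) =
        m * (1 - m) * ellipticK m ^ 4 / π ^ 4 := by
      rw [mul_ellipticK_pow_four_eq_lambertSum hm, mul_div_cancel_left₀ _ (by positivity)]
    rw [hlambert, abs_neg, abs_of_pos (by positivity), smul_eq_mul]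
    field_simp
  rw [integral_pow_three_mul_lambertSum, integral_div, ← integral_Ioc_eq_integral_Ioo,
    ← intervalIntegral.integral_of_le zero_le_one, eq_div_iff (by positivity)] at hsubst
  rw [← hsubst]
  ring

theorem integral_mul_comp_sq {a b : ℝ} (ha : 0 ≤ a) (hab : a ≤ b) (f : ℝ → ℝ) :
    ∫ k in a..b, k * f (k ^ 2) = (∫ m in a ^ 2..b ^ 2, f m) / 2 := by
  have himage : (fun k : ℝ => k ^ 2) '' Ioo a b = Ioo (a ^ 2) (b ^ 2) := by
    ext m
    constructor
    · rintro ⟨k, hk, rfl⟩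
      exact ⟨pow_lt_pow_left₀ hk.1 ha two_ne_zero,
        pow_lt_pow_left₀ hk.2 (ha.trans hk.1.le) two_ne_zero⟩
    · intro hm
      have hm₀ : 0 ≤ m := (sq_nonneg a).trans hm.1.le
      have hlt : √m < b := (Real.sqrt_lt_sqrt hm₀ hm.2).trans_eq (Real.sqrt_sq (ha.trans hab))
      exact ⟨√m, ⟨Real.lt_sqrt_of_sq_lt hm.1, hlt⟩, Real.sq_sqrt hm₀⟩
  have hsq : InjOn (fun k : ℝ => k ^ 2) (Ioo a b) := fun k hk l hl hkl =>
    (pow_left_inj₀ (ha.trans hk.1.le) (ha.trans hl.1.le) two_ne_zero).1 hkl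
  rw [intervalIntegral.integral_of_le hab, intervalIntegral.integral_of_le (by gcongr),
    integral_Ioc_eq_integral_Ioo, integral_Ioc_eq_integral_Ioo, ← himage,
    integral_image_eq_integral_abs_deriv_smul measurableSet_Ioo
      (fun k _ => (hasDerivAt_pow 2 k).hasDerivWithinAt) hsq, ← integral_div]
  refine setIntegral_congr_fun measurableSet_Ioo fun k hk => ?_
  have hk₀ : 0 < k := ha.trans_lt hk.1
  rw [smul_eq_mul, abs_of_pos (by positivity)]
  push_cast
  ring

lemma EllK'_eq_ellipticK {k : ℝ} (hk₀ : k ≠ 0) (hk₁ : k ^ 2 ≤ 1) :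
    EllK' k = ellipticK (1 - k ^ 2) := by
  have hsqrt : √(1 - k ^ 2) ^ 2 = 1 - k ^ 2 := Real.sq_sqrt (sub_nonneg.2 hk₁)
  rw [EllK', EllK_eq_ellipticK (by rw [hsqrt]; linarith [sq_pos_of_ne_zero hk₀]), hsqrt]

end ChangeOfVariables

theorem stmt_10 :
    ∫ k in (0:ℝ)..(1:ℝ), k * (EllK' k)^3 / EllK k = π^3 * Real.log 2 / 8 := by
  calc ∫ k in (0:ℝ)..(1:ℝ), k * (EllK' k)^3 / EllK k
      = ∫ k in (0:ℝ)..1, k * (ellipticK (1 - k ^ 2) ^ 3 / ellipticK (k ^ 2)) := by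
        refine intervalIntegral.integral_congr_Ioo_of_le zero_le_one fun k hk => ?_
        have hk_sq : k ^ 2 < 1 := pow_lt_one₀ hk.1.le hk.2 two_ne_zero
        rw [EllK'_eq_ellipticK hk.1.ne' hk_sq.le, EllK_eq_ellipticK hk_sq, mul_div_assoc]
    _ = (∫ m in (0:ℝ)^2..1^2, ellipticK (1 - m) ^ 3 / ellipticK m) / 2 :=
        integral_mul_comp_sq le_rfl zero_le_one fun m => ellipticK (1 - m) ^ 3 / ellipticK m
    _ = π^3 * Real.log 2 / 8 := by
        norm_num [integral_ellipticK_compl_pow_three_div_ellipticK]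
        ring
end
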